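/- Let V be a valuation ring containing a field K of characteristic zero. Then V is a filtered union of its smooth K-subalgebras; that is, the set of K-subalgebras of V that are smooth over K is nonempty, directed under inclusion, and its union is all of V. -/

import Mathlib

/-- A commutative ring `S` is a *filtered union* of those of its `R`-subalgebras
satisfying the class (predicate) `C` if the collection of subalgebras satisfying `C`
is nonempty, directed under inclusion, and its union is all of `S`. -/
def Subalgebra.IsFilteredUnion {R S : Type*} [CommSemiring R] [CommSemiring S]
    [Algebra R S] (C : Subalgebra R S → Prop) : Prop :=
  (∃ A, C A) ∧ DirectedOn (· ≤ ·) {A | C A} ∧ ∀ s : S, ∃ A, C A ∧ s ∈ A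

/-!
Elements `a₁, …, aₙ` of `V` are treated one at a time, keeping algebraically independent `y` in `V`
such that the elements treated so far come from algebras étale over `K[y]`. If the next element `a`
is algebraic over `K[y]`, the point `(y, a)` is the specialization of a generic one: a composite
valuation on power series over `Frac V`, extended to an algebraically closed field, has independent
coordinates `X` and a specialization to `V` sending `X` to `(y, a)`. A polynomial relation `p`
between `y` and `a` becomes a nonzero element `p(X)` that specializes to `0`.

By local uniformization in characteristic zero, suitable coordinates, over which `X` is étale, turn
`p(X)` into a monomial times a unit. Such coordinates are found by induction on their number,
combining Perron's algorithm, which turns values into a rationally independent block, with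
Tschirnhausen transformations, which lower the order of `p(X)` in one coordinate. Some new
coordinate then specializes to `0` and can be dropped. As many coordinates remain as there were in
`y`, so by transcendence degree they specialize to algebraically independent elements of `V`.
Finally, an algebra étale over a polynomial ring is normal, so that a localization of it is a
smooth subalgebra of `V`.
-/

open scoped TensorProduct KaehlerDifferential
open MvPolynomial (aeval)

namespace LocalUniformization

universe u

section Derivations

variable {k P E N : Type*} [CommRing k] [CommRing P] [CommRing E] [Algebra k E] [Algebra P E]
  [AddCommGroup N] [Module k N] [Module P N] [Module E N] [IsScalarTower P E N]

theorem exists_derivation_extension [Algebra k P] [IsScalarTower k P E] [IsScalarTower k P N]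
    [IsScalarTower k E N] [Algebra.FormallyEtale P E] (d : Derivation k P N) :
    ∃ d' : Derivation k E N, ∀ p, d' (algebraMap P E p) = d p := by
  have hΩ := KaehlerDifferential.isBaseChange_of_formallyEtale k P E
  refine ⟨(hΩ.lift d.liftKaehlerDifferential).compDer (KaehlerDifferential.D k E), fun p => ?_⟩
  simpa using hΩ.lift_eq d.liftKaehlerDifferential (KaehlerDifferential.D k P p)

theorem derivation_ext_of_formallyUnramified [Algebra.FormallyUnramified P E]
    {d₁ d₂ : Derivation k E N} (h : ∀ p, d₁ (algebraMap P E p) = d₂ (algebraMap P E p)) :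
    d₁ = d₂ := by
  let d : Derivation P E N :=
    { toFun := d₁ - d₂
      map_add' := fun x y => by simp only [Pi.sub_apply, map_add]; abel
      map_smul' := fun p e => by simp [Algebra.smul_def, Derivation.leibniz, h p, smul_sub]
      map_one_eq_zero' := by simp
      leibniz' := fun a b => by simp [smul_sub]; abel }
  have : Subsingleton (Derivation P E N) :=
    (KaehlerDifferential.linearMapEquivDerivation P E).symm.injective.subsingleton
  ext e
  exact sub_eq_zero.mp (DFunLike.congr_fun (Subsingleton.elim d 0) e)

theorem derivation_mem_of_formallyUnramified {M : Type*} [CommRing M]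
    [Algebra.FormallyUnramified P E] (φ : E →+* M) (N : AddSubgroup M)
    (hN : ∀ e, ∀ n ∈ N, φ e * n ∈ N) (Δ : Derivation ℤ M M)
    (hΔ : ∀ p, Δ (φ (algebraMap P E p)) ∈ N) (e : E) : Δ (φ e) ∈ N := by
  let : Algebra E M := φ.toAlgebra
  let : Algebra P M := (φ.comp (algebraMap P E)).toAlgebra
  have : IsScalarTower P E M := IsScalarTower.of_algebraMap_eq' rfl
  let N' : Submodule E M := { N with smul_mem' := fun e n hn => hN e n hn }
  have hzero : N'.mkQ.compDer (Δ.compAlgebraMap E) = 0 :=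
    derivation_ext_of_formallyUnramified (P := P) fun p =>
      (Submodule.Quotient.mk_eq_zero N').2 (hΔ p)
  exact (Submodule.Quotient.mk_eq_zero N').1 (DFunLike.congr_fun hzero e)

end Derivations

section EtaleCoordinates

open KaehlerDifferential in
theorem formallyEtale_of_bijective_mapBaseChange {R S T : Type*} [CommRing R] [CommRing S]
    [CommRing T] [Algebra R S] [Algebra R T] [Algebra S T] [IsScalarTower R S T]
    [Algebra.FormallySmooth R T] (h : Function.Bijective (mapBaseChange R S T)) :
    Algebra.FormallyEtale S T where
  subsingleton_kaehlerDifferential := subsingleton_of_forall_eq 0 fun ω => by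
    obtain ⟨η, rfl⟩ := map_surjective R S T ω
    exact (exact_mapBaseChange_map R S T η).2 (h.2 η)
  subsingleton_h1Cotangent := subsingleton_of_forall_eq 0 fun x => by
    have hδ : Algebra.H1Cotangent.δ R S T x = 0 := h.1 <| by
      rw [map_zero]; exact (Algebra.H1Cotangent.exact_δ_mapBaseChange R S T _).2 ⟨x, rfl⟩
    obtain ⟨y, rfl⟩ := (Algebra.H1Cotangent.exact_map_δ R S T x).1 hδ
    rw [Subsingleton.elim y 0, map_zero]

variable {R τ E : Type*} [CommRing R] [CommRing E] [Algebra R E]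

theorem etale_aeval_of_basis [Algebra.Smooth R E] [Finite τ] {y : τ → E}
    (b : Module.Basis τ E (Ω[E⁄R])) (hb : ∀ s, b s = KaehlerDifferential.D R E (y s)) :
    (aeval y : MvPolynomial τ R →ₐ[R] E).toRingHom.Etale := by
  let : Algebra (MvPolynomial τ R) E := (aeval y : MvPolynomial τ R →ₐ[R] E).toAlgebra
  have : IsScalarTower R (MvPolynomial τ R) E :=
    IsScalarTower.of_algebraMap_eq' (aeval y : MvPolynomial τ R →ₐ[R] E).comp_algebraMap.symm
  let c := (KaehlerDifferential.mvPolynomialBasis R τ).baseChange E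
  have hmap : KaehlerDifferential.mapBaseChange R (MvPolynomial τ R) E =
      (c.equiv b (Equiv.refl τ)).toLinearMap := c.ext fun s => by
    rw [LinearEquiv.coe_coe, c.equiv_apply, Equiv.refl_apply, hb]
    simp [c, RingHom.algebraMap_toAlgebra]
  have : Algebra.FormallyEtale (MvPolynomial τ R) E :=
    formallyEtale_of_bijective_mapBaseChange (R := R) <| by
      rw [hmap]; exact (c.equiv b (Equiv.refl τ)).bijective
  have : Algebra.FinitePresentation (MvPolynomial τ R) E :=
    .of_restrict_scalars_finitePresentation R _ E
  exact RingHom.etale_algebraMap.2 ⟨inferInstance, inferInstance⟩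

theorem exists_basis_of_etale_aeval {y : τ → E}
    (hy : (aeval y : MvPolynomial τ R →ₐ[R] E).toRingHom.Etale) :
    ∃ b : Module.Basis τ E (Ω[E⁄R]), ∀ s, b s = KaehlerDifferential.D R E (y s) := by
  let : Algebra (MvPolynomial τ R) E := (aeval y : MvPolynomial τ R →ₐ[R] E).toAlgebra
  have : IsScalarTower R (MvPolynomial τ R) E :=
    IsScalarTower.of_algebraMap_eq' (aeval y : MvPolynomial τ R →ₐ[R] E).comp_algebraMap.symm
  have : Algebra.Etale (MvPolynomial τ R) E := hy
  refine ⟨((KaehlerDifferential.mvPolynomialBasis R τ).baseChange E).map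
    (KaehlerDifferential.tensorKaehlerEquivOfFormallyEtale R _ E), fun s => ?_⟩
  simp [RingHom.algebraMap_toAlgebra]

theorem smooth_of_etale_aeval [Finite τ] {y : τ → E}
    (hy : (aeval y : MvPolynomial τ R →ₐ[R] E).toRingHom.Etale) : Algebra.Smooth R E := by
  let : Algebra (MvPolynomial τ R) E := (aeval y : MvPolynomial τ R →ₐ[R] E).toAlgebra
  have : IsScalarTower R (MvPolynomial τ R) E :=
    IsScalarTower.of_algebraMap_eq' (aeval y : MvPolynomial τ R →ₐ[R] E).comp_algebraMap.symm
  have : Algebra.Etale (MvPolynomial τ R) E := hy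
  have : Algebra.Smooth R (MvPolynomial τ R) := {}
  exact Algebra.Smooth.comp R (MvPolynomial τ R) E

theorem exists_basis_eq_update {τ M : Type*} [Finite τ] [DecidableEq τ] [AddCommGroup M]
    [Module R M] (b : Module.Basis τ R M) {t : τ} {v : M} (hv : IsUnit (b.coord t v)) :
    ∃ b' : Module.Basis τ R M, ∀ s, b' s = Function.update b t v s := by
  have := Fintype.ofFinite τ
  have hdet : IsUnit (b.det (Function.update b t v)) := by
    rw [b.det_apply, b.toMatrix_update, b.toMatrix_self, ← Matrix.cramer_apply, Matrix.cramer_one]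
    exact hv
  obtain ⟨hli, hsp⟩ := (Module.Basis.is_basis_iff_det b).2 hdet
  exact ⟨.mk hli hsp.ge, fun s => by rw [Module.Basis.mk_apply]⟩

theorem etale_aeval_update [Finite τ] [DecidableEq τ] {y : τ → E}
    (hy : (aeval y : MvPolynomial τ R →ₐ[R] E).toRingHom.Etale) {t : τ} {w : E}
    (d : Derivation R E E) (hd : ∀ s, d (y s) = if s = t then 1 else 0) (hw : IsUnit (d w)) :
    (aeval (Function.update y t w) : MvPolynomial τ R →ₐ[R] E).toRingHom.Etale := by
  have : Algebra.Smooth R E := smooth_of_etale_aeval hy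
  obtain ⟨b, hb⟩ := exists_basis_of_etale_aeval hy
  have hcoord : b.coord t = d.liftKaehlerDifferential := b.ext fun s => by
    rw [hb, Derivation.liftKaehlerDifferential_comp_D, hd, ← hb, b.coord_apply, b.repr_self,
      Finsupp.single_apply]
  obtain ⟨b', hb'⟩ := exists_basis_eq_update b (t := t) (v := KaehlerDifferential.D R E w) (by
    rwa [hcoord, Derivation.liftKaehlerDifferential_comp_D])
  refine etale_aeval_of_basis b' fun s => ?_
  rw [hb']
  obtain rfl | hs := eq_or_ne s t
  · simp only [Function.update_self]
  · simp only [Function.update_of_ne hs, hb]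

end EtaleCoordinates

section EtaleModels

/-- An étale model of `i : P →+* M` in the subring `A`: an étale `P`-algebra `E` together with an
extension `φ : E →+* M` of `i` with values in `A`. -/
structure IsEtaleModel {P E M : Type*} [CommRing P] [CommRing E] [CommRing M]
    (i : P →+* M) (A : Subring M) (j : P →+* E) (φ : E →+* M) : Prop where
  etale : j.Etale
  comp_eq : φ.comp j = i
  mem : ∀ e, φ e ∈ A

theorem etale_comp {P Q R : Type u} [CommRing P] [CommRing Q] [CommRing R] {f : P →+* Q}
    {g : Q →+* R} (hg : g.Etale) (hf : f.Etale) : (g.comp f).Etale :=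
  RingHom.Etale.stableUnderComposition _ _ hf hg

variable {P M : Type u} [CommRing P] [CommRing M] {i : P →+* M} {A : Subring M}

theorem IsEtaleModel.refl (hi : ∀ p, i p ∈ A) : IsEtaleModel i A (RingHom.id P) i :=
  ⟨RingHom.Etale.of_bijective Function.bijective_id, rfl, hi⟩

theorem IsEtaleModel.mono {E : Type u} [CommRing E] {j : P →+* E} {φ : E →+* M}
    (h : IsEtaleModel i A j φ) {B : Subring M} (hAB : A ≤ B) : IsEtaleModel i B j φ :=
  ⟨h.etale, h.comp_eq, fun e => hAB (h.mem e)⟩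

theorem IsEtaleModel.exists_pushout {E₁ E₂ : Type u} [CommRing E₁] [CommRing E₂]
    {j : P →+* E₁} {φ₁ : E₁ →+* M} (h : IsEtaleModel i A j φ₁) {φ₂ : E₂ →+* M}
    (h₂ : ∀ e, φ₂ e ∈ A) {κ : P →+* E₂} (hκ : φ₂.comp κ = i) :
    ∃ (E : Type u) (_ : CommRing E) (α₁ : E₁ →+* E) (α₂ : E₂ →+* E) (φ : E →+* M),
      IsEtaleModel φ₂ A α₂ φ ∧ φ.comp α₁ = φ₁ ∧ α₁.comp j = α₂.comp κ ∧ (κ.Etale → α₁.Etale) := by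
  let : Algebra P E₁ := j.toAlgebra
  let : Algebra P E₂ := κ.toAlgebra
  let : Algebra P M := i.toAlgebra
  have : Algebra.Etale P E₁ := h.etale
  let φ₁' : E₁ →ₐ[P] M := { φ₁ with commutes' := RingHom.congr_fun h.comp_eq }
  let φ₂' : E₂ →ₐ[P] M := { φ₂ with commutes' := RingHom.congr_fun hκ }
  let φ : E₂ ⊗[P] E₁ →ₐ[P] M := Algebra.TensorProduct.lift φ₂' φ₁' fun _ _ => Commute.all _ _
  have hφ : ∀ x y, φ.toRingHom (x ⊗ₜ y) = φ₂ x * φ₁ y := fun x y => by simp [φ, φ₁', φ₂']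
  refine ⟨E₂ ⊗[P] E₁, inferInstance, (Algebra.TensorProduct.includeRight : E₁ →ₐ[P] _).toRingHom,
    algebraMap _ _, φ.toRingHom, ⟨RingHom.etale_algebraMap.2 inferInstance, ?_, fun e => ?_⟩, ?_,
    ?_, fun hκe => ?_⟩
  · ext e; simp [φ, φ₂', Algebra.TensorProduct.algebraMap_apply]
  · induction e with
    | zero => simp [A.zero_mem]
    | add x y hx hy => rw [map_add]; exact A.add_mem hx hy
    | tmul x y => rw [hφ]; exact A.mul_mem (h₂ x) (h.mem y)
  · ext e; simp [φ, φ₁']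
  · ext p
    exact (Algebra.TensorProduct.includeRight : E₁ →ₐ[P] E₂ ⊗[P] E₁).commutes p
  · have : Algebra.Etale P E₂ := hκe
    have hleft : (algebraMap E₁ (E₁ ⊗[P] E₂)).Etale := RingHom.etale_algebraMap.2 inferInstance
    exact etale_comp (RingHom.Etale.of_bijective
      (f := (Algebra.TensorProduct.comm P E₁ E₂).toRingEquiv.toRingHom)
      (Algebra.TensorProduct.comm P E₁ E₂).bijective) hleft

theorem IsEtaleModel.trans {E F : Type u} [CommRing E] [CommRing F] {j : P →+* E} {φ : E →+* M}
    {l : E →+* F} {ψ : F →+* M} (hψ : IsEtaleModel φ A l ψ) (hφ : IsEtaleModel i A j φ) :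
    IsEtaleModel i A (l.comp j) ψ :=
  ⟨etale_comp hψ.etale hφ.etale, by rw [← RingHom.comp_assoc, hψ.comp_eq, hφ.comp_eq], hψ.mem⟩

theorem IsEtaleModel.exists_common {E₁ E₂ : Type u} [CommRing E₁] [CommRing E₂]
    {j₁ : P →+* E₁} {φ₁ : E₁ →+* M} (h₁ : IsEtaleModel i A j₁ φ₁)
    {j₂ : P →+* E₂} {φ₂ : E₂ →+* M} (h₂ : IsEtaleModel i A j₂ φ₂) :
    ∃ (E : Type u) (_ : CommRing E) (j : P →+* E) (φ : E →+* M) (α₁ : E₁ →+* E) (α₂ : E₂ →+* E),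
      IsEtaleModel i A j φ ∧ φ.comp α₁ = φ₁ ∧ φ.comp α₂ = φ₂ ∧ α₁.Etale ∧ α₁.comp j₁ = j ∧
      α₂.comp j₂ = j := by
  obtain ⟨E, _, α₁, α₂, φ, hφ, hα₁, hj, he⟩ := h₁.exists_pushout h₂.mem h₂.comp_eq
  exact ⟨E, _, α₂.comp j₂, φ, α₁, α₂, hφ.trans h₂, hα₁, hφ.comp_eq, he h₂.etale, hj, rfl⟩

theorem IsEtaleModel.exists_localization {E : Type u} [CommRing E] {j : P →+* E} {φ : E →+* M}
    (h : IsEtaleModel i A j φ) {e : E} {b : M} (hb : b ∈ A) (heb : φ e * b = 1) :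
    ∃ (F : Type u) (_ : CommRing F) (l : E →+* F) (ψ : F →+* M),
      IsEtaleModel φ A l ψ ∧ IsUnit (l e) := by
  have hu : IsUnit (φ e) := IsUnit.of_mul_eq_one _ heb
  have hlift : ∀ y, (IsLocalization.Away.lift e hu : Localization.Away e →+* M)
      (algebraMap E _ y) = φ y := IsLocalization.Away.lift_eq e hu
  refine ⟨_, inferInstance, algebraMap E (Localization.Away e), IsLocalization.Away.lift e hu,
    ⟨RingHom.etale_algebraMap.2 (Algebra.Etale.of_isLocalizationAway e), RingHom.ext hlift,
      fun y => ?_⟩, IsLocalization.Away.algebraMap_isUnit e⟩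
  obtain ⟨n, a, ha⟩ := IsLocalization.Away.surj e y
  have hy : IsLocalization.Away.lift e hu y = φ a * b ^ n := by
    rw [← hlift a, ← ha, map_mul, map_pow, hlift, mul_assoc, ← mul_pow, heb, one_pow, mul_one]
  rw [hy]
  exact A.mul_mem (h.mem a) (A.pow_mem hb n)

variable (i A) in
/-- The étale closure of `i.range` in `A`: the union of the images of the étale models of `i`. To
have a subring for every `A`, the models take their values in the subring generated by `A` and
`i.range`, which is `A` in all applications. -/
def etaleClosure : Subring M where
  carrier := {b | ∃ (E : Type u) (_ : CommRing E) (j : P →+* E) (φ : E →+* M),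
    IsEtaleModel i (A ⊔ i.range) j φ ∧ b ∈ Set.range φ}
  zero_mem' := ⟨P, _, _, i, .refl fun p => (le_sup_right : _ ≤ A ⊔ _) ⟨p, rfl⟩, 0, map_zero _⟩
  one_mem' := ⟨P, _, _, i, .refl fun p => (le_sup_right : _ ≤ A ⊔ _) ⟨p, rfl⟩, 1, map_one _⟩
  add_mem' := by
    rintro _ _ ⟨E₁, _, j₁, φ₁, h₁, a, rfl⟩ ⟨E₂, _, j₂, φ₂, h₂, b, rfl⟩
    obtain ⟨E, _, j, φ, α₁, α₂, h, rfl, rfl, -⟩ := h₁.exists_common h₂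
    exact ⟨E, _, j, φ, h, α₁ a + α₂ b, by simp⟩
  mul_mem' := by
    rintro _ _ ⟨E₁, _, j₁, φ₁, h₁, a, rfl⟩ ⟨E₂, _, j₂, φ₂, h₂, b, rfl⟩
    obtain ⟨E, _, j, φ, α₁, α₂, h, rfl, rfl, -⟩ := h₁.exists_common h₂
    exact ⟨E, _, j, φ, h, α₁ a * α₂ b, by simp⟩
  neg_mem' := by
    rintro _ ⟨E, _, j, φ, h, a, rfl⟩
    exact ⟨E, _, j, φ, h, -a, by simp⟩

theorem mem_etaleClosure_iff (hi : ∀ p, i p ∈ A) {b : M} :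
    b ∈ etaleClosure i A ↔ ∃ (E : Type u) (_ : CommRing E) (j : P →+* E) (φ : E →+* M),
      IsEtaleModel i A j φ ∧ b ∈ Set.range φ := by
  have hA : A ⊔ i.range = A := sup_eq_left.2 (by rintro _ ⟨p, rfl⟩; exact hi p)
  conv_rhs => rw [← hA]
  rfl

theorem IsEtaleModel.apply_mem {E : Type u} [CommRing E] {j : P →+* E} {φ : E →+* M}
    (h : IsEtaleModel i A j φ) (e : E) : φ e ∈ etaleClosure i A :=
  ⟨E, _, j, φ, ⟨h.etale, h.comp_eq, fun e => (le_sup_left : A ≤ _) (h.mem e)⟩, e, rfl⟩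

theorem etaleClosure_le (hi : ∀ p, i p ∈ A) : etaleClosure i A ≤ A := by
  intro b hb
  obtain ⟨E, _, j, φ, h, e, rfl⟩ := (mem_etaleClosure_iff hi).1 hb
  exact h.mem e

theorem apply_mem_etaleClosure (i : P →+* M) (A : Subring M) (p : P) : i p ∈ etaleClosure i A :=
  ⟨P, _, _, i, .refl fun p => (le_sup_right : _ ≤ A ⊔ _) ⟨p, rfl⟩, p, rfl⟩

theorem etaleClosure_mono (i : P →+* M) {A B : Subring M} (h : A ≤ B) :
    etaleClosure i A ≤ etaleClosure i B := by
  rintro _ ⟨E, _, j, φ, h', e, rfl⟩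
  exact ⟨E, _, j, φ, h'.mono (sup_le_sup_right h _), e, rfl⟩

theorem exists_etaleModel_of_finset (hi : ∀ p, i p ∈ A) (s : Finset M)
    (hs : ∀ b ∈ s, b ∈ etaleClosure i A) :
    ∃ (E : Type u) (_ : CommRing E) (j : P →+* E) (φ : E →+* M),
      IsEtaleModel i A j φ ∧ ∀ b ∈ s, b ∈ Set.range φ := by
  classical
  induction s using Finset.induction_on with
  | empty => exact ⟨P, _, _, i, .refl hi, by simp⟩
  | insert a s _ ih =>
    obtain ⟨E₁, _, j₁, φ₁, h₁, hs₁⟩ := ih fun b hb => hs b (Finset.mem_insert_of_mem hb)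
    obtain ⟨E₂, _, j₂, φ₂, h₂, a, rfl⟩ :=
      (mem_etaleClosure_iff hi).1 (hs a (Finset.mem_insert_self _ _))
    obtain ⟨E, _, j, φ, α₁, α₂, h, rfl, rfl, -⟩ := h₁.exists_common h₂
    refine ⟨E, _, j, φ, h, fun b hb => ?_⟩
    rcases Finset.mem_insert.1 hb with rfl | hb
    · exact ⟨α₂ a, rfl⟩
    · obtain ⟨c, rfl⟩ := hs₁ b hb
      exact ⟨α₁ c, rfl⟩

theorem etaleClosure_comp_le {Q : Type u} [CommRing Q] {ι : Q →+* P} (hi : ∀ p, i p ∈ A) :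
    etaleClosure (i.comp ι) A ≤ etaleClosure i A := by
  intro b hb
  obtain ⟨F, _, j, ψ, hψ, b, rfl⟩ := (mem_etaleClosure_iff (i := i.comp ι) fun p => hi _).1 hb
  obtain ⟨E, _, α, j', φ, hφ, rfl, -⟩ := hψ.exists_pushout hi rfl
  exact hφ.apply_mem (α b)

theorem aeval_mem_subring {K σ : Type*} [CommRing K] [Algebra K M] {x : σ → M}
    (hK : ∀ c, algebraMap K M c ∈ A) (hx : ∀ s, x s ∈ A) (p : MvPolynomial σ K) :
    aeval x p ∈ A := by
  induction p using MvPolynomial.induction_on with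
  | C a => simpa using hK a
  | add p q hp hq => rw [map_add]; exact A.add_mem hp hq
  | mul_X p s hp => rw [map_mul, MvPolynomial.aeval_X]; exact A.mul_mem hp (hx s)

theorem etaleClosure_aeval_le {K : Type u} [CommRing K] [Algebra K M] [Algebra K P] {τ : Type}
    [Finite τ] {x : τ → M} {i : P →ₐ[K] M} (hi : ∀ p, i p ∈ A)
    (hx : ∀ t, x t ∈ etaleClosure i.toRingHom A) :
    etaleClosure (aeval x : MvPolynomial τ K →ₐ[K] M).toRingHom A ≤
      etaleClosure i.toRingHom A := by
  classical
  have := Fintype.ofFinite τ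
  intro b hb
  have haeval : ∀ p, aeval x p ∈ A := aeval_mem_subring
    (fun c => i.commutes c ▸ hi (algebraMap K P c)) fun t => etaleClosure_le hi (hx t)
  obtain ⟨E₁, _, j₁, φ₁, h₁, b, rfl⟩ := (mem_etaleClosure_iff haeval).1 hb
  obtain ⟨E₂, _, j₂, φ₂, h₂, hr⟩ := exists_etaleModel_of_finset (i := i.toRingHom) hi
    (Finset.univ.image x) (by simpa using hx)
  choose e he using fun t => hr (x t) (by simp)
  let : Algebra K E₂ := (j₂.comp (algebraMap K P)).toAlgebra
  have hκ : φ₂.comp (aeval e : MvPolynomial τ K →ₐ[K] E₂).toRingHom = (aeval x).toRingHom := by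
    apply MvPolynomial.ringHom_ext
    · intro a
      have ha : φ₂ (j₂ (algebraMap K P a)) = i (algebraMap K P a) :=
        RingHom.congr_fun h₂.comp_eq _
      simpa [RingHom.algebraMap_toAlgebra] using ha
    · intro t; simp [he]
  obtain ⟨E, _, α₁, α₂, φ, hφ, rfl, -⟩ := h₁.exists_pushout h₂.mem hκ
  exact (hφ.trans h₂).apply_mem (α₁ b)

theorem mem_etaleClosure_of_mul_eq_one (hi : ∀ p, i p ∈ A) {a b : M}
    (ha : a ∈ etaleClosure i A) (hb : b ∈ A) (hab : a * b = 1) : b ∈ etaleClosure i A := by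
  obtain ⟨E, _, j, φ, hφ, e, rfl⟩ := (mem_etaleClosure_iff hi).1 ha
  obtain ⟨F, _, l, ψ, hψ, ⟨u, hu⟩⟩ := hφ.exists_localization hb hab
  have hb' : b = ψ ↑u⁻¹ := by
    calc b = ψ (↑u⁻¹ * u) * b := by simp
      _ = ψ ↑u⁻¹ * ((ψ.comp l) e * b) := by rw [map_mul, hu, mul_assoc]; rfl
      _ = ψ ↑u⁻¹ := by rw [hψ.comp_eq, hab, mul_one]
  rw [hb']
  exact (hψ.trans hφ).apply_mem _

end EtaleModels

section NormalBase

theorem exists_isUnit_mul_eq_zero_of_standardEtale {P E B : Type*} [CommRing P] [IsDomain P]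
    [IsIntegrallyClosed P] [CommRing E] [Algebra P E] (S : StandardEtalePresentation P E)
    [CommRing B] [IsDomain B] [Algebra P B] [FaithfulSMul P B] (ψ : E →ₐ[P] B) {y : E}
    (hy : ψ y = 0) : ∃ s, IsUnit (ψ s) ∧ s * y = 0 := by
  have hroot : Polynomial.aeval S.x S.f = 0 := S.hasMap.1
  have hint : IsIntegral P (ψ S.x) := ⟨S.f, S.monic_f, by
    rw [← Polynomial.aeval_def, Polynomial.aeval_algHom_apply, hroot, map_zero]⟩
  -- Write `S.f = μ * q` with `μ` the minimal polynomial of `ψ S.x`: then `s = q(S.x)` works.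
  obtain ⟨q, hq⟩ : minpoly P (ψ S.x) ∣ S.f := minpoly.isIntegrallyClosed_dvd hint (by
    rw [Polynomial.aeval_algHom_apply, hroot, map_zero])
  refine ⟨Polynomial.aeval S.x q, ?_, ?_⟩
  · have hunit := S.hasMap.isUnit_derivative_f.map ψ
    rw [← Polynomial.aeval_algHom_apply, hq, Polynomial.derivative_mul, map_add, map_mul, map_mul,
      minpoly.aeval, zero_mul, add_zero, Polynomial.aeval_algHom_apply ψ S.x q] at hunit
    exact isUnit_of_mul_isUnit_right hunit
  · obtain ⟨p, n, hp⟩ := S.exists_mul_aeval_x_g_pow_eq_aeval_x y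
    obtain ⟨r, rfl⟩ : minpoly P (ψ S.x) ∣ p := minpoly.isIntegrallyClosed_dvd hint (by
      rw [Polynomial.aeval_algHom_apply, ← hp, map_mul, hy, zero_mul])
    rw [← (S.hasMap.2.pow n).mul_left_eq_zero, mul_assoc, hp, ← map_mul, ← mul_assoc, mul_comm q,
      ← hq, map_mul, hroot, zero_mul]

theorem exists_isUnit_mul_eq_zero {P E B : Type*} [CommRing P] [IsDomain P] [IsIntegrallyClosed P]
    [CommRing E] [CommRing B] [IsDomain B] [IsLocalRing B] {j : P →+* E} (hj : j.Etale)
    {φ : E →+* B} (hi : Function.Injective (φ.comp j)) {y : E} (hy : φ y = 0) :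
    ∃ s, IsUnit (φ s) ∧ s * y = 0 := by
  let : Algebra P E := j.toAlgebra
  have : Algebra.Etale P E := hj
  let : Algebra P B := (φ.comp j).toAlgebra
  have : FaithfulSMul P B := (faithfulSMul_iff_algebraMap_injective P B).2 hi
  obtain ⟨g, hg, ⟨⟨S⟩⟩⟩ := Algebra.IsEtaleAt.exists_isStandardEtale (R := P)
    ((IsLocalRing.maximalIdeal B).comap φ)
  have hφg : IsUnit (φ g) := by
    by_contra hc
    exact hg ((IsLocalRing.mem_maximalIdeal _).2 hc)
  let lift : Localization.Away g →+* B := IsLocalization.Away.lift g hφg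
  have hlift : ∀ e, lift (algebraMap E _ e) = φ e := IsLocalization.Away.lift_eq g hφg
  let ψ : Localization.Away g →ₐ[P] B := { lift with
    commutes' := fun p => by
      change lift _ = φ (j p)
      rw [IsScalarTower.algebraMap_apply P E (Localization.Away g), hlift]; rfl }
  obtain ⟨s, hs, hsy⟩ := exists_isUnit_mul_eq_zero_of_standardEtale S ψ ((hlift y).trans hy)
  obtain ⟨m, a, ha⟩ := IsLocalization.Away.surj g s
  have hay : algebraMap E (Localization.Away g) (a * y) = 0 := by
    rw [map_mul, ← ha, mul_right_comm, hsy, zero_mul]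
  obtain ⟨⟨_, k, rfl⟩, hk⟩ := (IsLocalization.map_eq_zero_iff (Submonoid.powers g) _ _).1 hay
  have hφa : φ a = ψ s * φ g ^ m := by
    rw [← hlift a, ← ha, map_mul, map_pow, hlift]; rfl
  refine ⟨g ^ k * a, ?_, by rw [mul_assoc]; exact hk⟩
  rw [map_mul, map_pow, hφa]
  exact (hφg.pow k).mul (hs.mul (hφg.pow m))

theorem exists_isUnit_mul_ker_eq_zero {P E B : Type*} [CommRing P] [IsDomain P]
    [IsIntegrallyClosed P] [IsNoetherianRing P] [CommRing E] [CommRing B] [IsDomain B]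
    [IsLocalRing B] {j : P →+* E} (hj : j.Etale) {φ : E →+* B}
    (hi : Function.Injective (φ.comp j)) :
    ∃ s, IsUnit (φ s) ∧ ∀ y ∈ RingHom.ker φ, s * y = 0 := by
  have : IsNoetherianRing E := by
    let : Algebra P E := j.toAlgebra
    have : Algebra.Etale P E := hj
    exact Algebra.FiniteType.isNoetherianRing P E
  obtain ⟨t, ht⟩ := IsNoetherian.noetherian (RingHom.ker φ)
  have hgen : ∀ y : t, ∃ s, IsUnit (φ s) ∧ s * (y : E) = 0 := fun y =>
    exists_isUnit_mul_eq_zero hj hi (ht ▸ Submodule.subset_span y.2 : (y : E) ∈ RingHom.ker φ)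
  choose s hs hsy using hgen
  refine ⟨∏ y, s y, by rw [map_prod]; exact IsUnit.prod_univ_iff.2 hs, fun y hy => ?_⟩
  rw [← ht] at hy
  refine (Submodule.span_le (p := LinearMap.ker (LinearMap.mulLeft E (∏ y, s y)))).2
    (fun y hy => ?_) hy
  exact eq_zero_of_zero_dvd (hsy ⟨y, hy⟩ ▸ mul_dvd_mul_right
    (Finset.dvd_prod_of_mem s (Finset.mem_univ (⟨y, hy⟩ : t))) y)

end NormalBase

section Valuation

variable {P E M : Type u} [CommRing P] [CommRing E] [Field M] {𝒪 : ValuationSubring M}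

theorem valuation_eq_one_of_sub_lt_one {a b : M} (ha : 𝒪.valuation a = 1)
    (hab : 𝒪.valuation (a - b) < 1) : 𝒪.valuation b = 1 := by
  rw [← ha] at hab ⊢
  exact Valuation.map_eq_of_sub_lt _ (by rwa [Valuation.map_sub_swap] at hab)

theorem exists_valuation_eq_one_of_sum {ι : Type*} {s : Finset ι} {f : ι → M}
    (hf : 𝒪.valuation (∑ l ∈ s, f l) = 1) (hle : ∀ l ∈ s, 𝒪.valuation (f l) ≤ 1) :
    ∃ l ∈ s, 𝒪.valuation (f l) = 1 := by
  by_contra! h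
  exact (Valuation.map_sum_lt _ one_ne_zero fun l hl => (hle l hl).lt_of_ne (h l hl)).ne hf

theorem residue_eq_residue_iff {a b : 𝒪} :
    IsLocalRing.residue 𝒪 a = IsLocalRing.residue 𝒪 b ↔ 𝒪.valuation ((a : M) - b) < 1 := by
  rw [← sub_eq_zero, ← map_sub, IsLocalRing.residue_eq_zero_iff,
    ValuationSubring.valuation_lt_one_iff]
  rfl

theorem IsEtaleModel.exists_valuation_eq_one_mul_eq_zero [IsDomain P] [IsIntegrallyClosed P]
    {i : P →+* M} (hi : Function.Injective i) {A : Subring M} (hA : A ≤ 𝒪.toSubring) {j : P →+* E}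
    {φ : E →+* M} (hφ : IsEtaleModel i A j φ) {e : E} (he : φ e = 0) :
    ∃ s, 𝒪.valuation (φ s) = 1 ∧ s * e = 0 := by
  let φ' : E →+* 𝒪 := φ.codRestrict 𝒪.toSubring fun e => hA (hφ.mem e)
  have hφ' : (𝒪.subtype.comp φ').comp j = i := hφ.comp_eq
  have hinj : Function.Injective (φ'.comp j) := by
    rw [← hφ', RingHom.comp_assoc, RingHom.coe_comp] at hi
    exact hi.of_comp
  obtain ⟨s, hs, hse⟩ := exists_isUnit_mul_eq_zero hφ.etale hinj
    (Subtype.ext he : φ' e = 0)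
  exact ⟨s, (𝒪.valuation_eq_one_iff _).1 hs, hse⟩

theorem exists_of_flat_of_smul_eq_smul {R N : Type*} [CommRing R] [AddCommGroup N] [Module R N]
    [Module.Flat R N] {f g : R} {s t : N} (h : f • s = g • t) :
    ∃ (n : ℕ) (a b : Fin n → R) (y : Fin n → N), s = ∑ l, a l • y l ∧
      ∀ l, f * a l = g * b l := by
  have hrel : ∑ k : Fin 2, (![f, -g] k) • (![s, t] k) = 0 := by
    rw [Fin.sum_univ_two]
    simp [h]
  obtain ⟨n, a, y, hs, ha⟩ := Module.Flat.isTrivialRelation_of_sum_smul_eq_zero hrel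
  refine ⟨n, a 0, a 1, y, hs 0, fun l => ?_⟩
  have hl : f * a 0 l + -g * a 1 l = 0 := by simpa [Fin.sum_univ_two] using ha l
  linear_combination hl

theorem exists_of_flat_of_mul_eq_mul {R S : Type*} [CommRing R] [CommRing S] {α : R →+* S}
    (hα : α.Flat) {f g : R} {s t : S} (h : α f * s = α g * t) :
    ∃ (n : ℕ) (a b : Fin n → R) (y : Fin n → S), s = ∑ l, α (a l) * y l ∧
      ∀ l, f * a l = g * b l :=
  @exists_of_flat_of_smul_eq_smul R S _ _ α.toAlgebra.toModule hα f g s t h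

theorem exists_mul_eq_mul_of_etaleModels [IsDomain P] [IsIntegrallyClosed P] {i : P →+* M}
    (hi : Function.Injective i) (hi𝒪 : ∀ p, i p ∈ 𝒪) {j₁ : P →+* E} {φ₁ : E →+* M}
    (hφ₁ : IsEtaleModel i 𝒪.toSubring j₁ φ₁) {h : M} (hh : h ∈ etaleClosure i 𝒪.toSubring) {f g : E}
    (hfg : φ₁ f = φ₁ g * h) :
    ∃ a b : E, 𝒪.valuation (φ₁ a) = 1 ∧ f * a = g * b := by
  obtain ⟨E₂, _, j₂, φ₂, hφ₂, h, rfl⟩ := (mem_etaleClosure_iff hi𝒪).1 hh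
  obtain ⟨E', _, j, φ, α₁, α₂, hφ, rfl, rfl, hα₁, -⟩ := hφ₁.exists_common hφ₂
  obtain ⟨s, hs, hs0⟩ := hφ.exists_valuation_eq_one_mul_eq_zero hi le_rfl
    (e := α₁ f - α₁ g * α₂ h) (by rw [map_sub, map_mul, sub_eq_zero]; exact hfg)
  -- Flatness of `α₁` makes `(s, s * α₂ h)` a combination of solutions `(a l, b l)` over `E`; as `s`
  -- has value one, so has some `a l`.
  obtain ⟨n, a, b, y, hsum, hab⟩ := exists_of_flat_of_mul_eq_mul
    (RingHom.Etale.iff_flat_and_formallyUnramified.1 hα₁).1 (f := f) (g := g) (s := s)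
    (t := s * α₂ h) (by linear_combination hs0)
  have hle : ∀ e, 𝒪.valuation (φ e) ≤ 1 := fun e => (𝒪.valuation_le_one_iff _).2 (hφ.mem e)
  obtain ⟨l, -, hl⟩ := exists_valuation_eq_one_of_sum (s := Finset.univ)
    (f := fun l => φ (α₁ (a l) * y l)) (by rw [← map_sum, ← hsum, hs]) fun l _ => hle _
  rw [map_mul, map_mul] at hl
  exact ⟨a l, b l, (hle _).antisymm (hl ▸ mul_le_of_le_one_right' (hle _)), hab l⟩

theorem mem_etaleClosure_of_eq_mul [IsDomain P] [IsIntegrallyClosed P] {i : P →+* M}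
    (hi : Function.Injective i) {A : Subring M} (hA : A ≤ 𝒪.toSubring) (hiA : ∀ p, i p ∈ A)
    (hdiv : ∀ a ∈ A, 𝒪.valuation a = 1 → a⁻¹ ∈ A) {f g h : M} (hf : f ∈ etaleClosure i A)
    (hg : g ∈ etaleClosure i A) (hg0 : g ≠ 0) (hh : h ∈ etaleClosure i 𝒪.toSubring)
    (hfgh : f = g * h) : h ∈ etaleClosure i A := by
  classical
  obtain ⟨E, _, j, φ, hφ, hr⟩ := exists_etaleModel_of_finset hiA {f, g} (by simp [hf, hg])
  obtain ⟨f, rfl⟩ := hr f (by simp)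
  obtain ⟨g, rfl⟩ := hr g (by simp)
  obtain ⟨a, b, ha, hab⟩ :=
    exists_mul_eq_mul_of_etaleModels hi (fun p => hA (hiA p)) (hφ.mono hA) hh hfgh
  have ha0 : φ a ≠ 0 := (𝒪.valuation.ne_zero_iff).1 (ha ▸ one_ne_zero)
  have hb : φ a * h = φ b := mul_left_cancel₀ hg0 (by
    rw [← map_mul, ← hab, map_mul, hfgh]; ring)
  rw [← inv_mul_cancel_left₀ ha0 h, hb]
  exact (etaleClosure i A).mul_mem (mem_etaleClosure_of_mul_eq_one hiA (hφ.apply_mem a)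
    (hdiv _ (hφ.mem a) ha) (mul_inv_cancel₀ ha0)) (hφ.apply_mem b)

theorem IsEtaleModel.isAlgebraic [IsDomain P] {i : P →+* M} (hi : Function.Injective i)
    {A : Subring M} {j : P →+* E} {φ : E →+* M} (hφ : IsEtaleModel i A j φ) (e : E) :
    ∃ p : Polynomial P, p ≠ 0 ∧ p.eval₂ i (φ e) = 0 := by
  let F := FractionRing P
  let : Algebra P E := j.toAlgebra
  let : Algebra P M := i.toAlgebra
  let : Algebra F M := (IsFractionRing.lift hi).toAlgebra
  have : Algebra.Etale P E := hφ.etale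
  have : IsScalarTower P F M :=
    IsScalarTower.of_algebraMap_eq fun p => (IsFractionRing.lift_algebraMap hi p).symm
  have : Module.Finite F (F ⊗[P] E) := Algebra.FormallyUnramified.finite_of_free F (F ⊗[P] E)
  let Φ : F ⊗[P] E →ₐ[F] M := Algebra.TensorProduct.lift (Algebra.ofId F M)
    { φ with commutes' := RingHom.congr_fun hφ.comp_eq } fun _ _ => Commute.all _ _
  have hΦ : Φ (1 ⊗ₜ e) = φ e := by simp [Φ]
  have hF : IsAlgebraic F (φ e) :=
    hΦ ▸ (IsIntegral.of_finite F (1 ⊗ₜ e : F ⊗[P] E)).isAlgebraic.algHom Φ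
  exact (IsFractionRing.isAlgebraic_iff P F M).2 hF

theorem exists_mul_eq_apply [IsDomain P] {i : P →+* M} (hi : Function.Injective i) {A : Subring M}
    (hiA : ∀ p, i p ∈ A) {a : M} (ha : a ∈ etaleClosure i A) (ha0 : a ≠ 0) :
    ∃ b ∈ etaleClosure i A, ∃ p : P, p ≠ 0 ∧ a * b = i p := by
  obtain ⟨E, _, j, φ, hφ, e, rfl⟩ := (mem_etaleClosure_iff hiA).1 ha
  let R := etaleClosure i A
  let : Algebra P M := i.toAlgebra
  let : Algebra P R := (i.codRestrict R (apply_mem_etaleClosure i A)).toAlgebra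
  have : IsScalarTower P R M := IsScalarTower.of_algebraMap_eq fun p => rfl
  have halg : IsAlgebraic P (⟨φ e, ha⟩ : R) :=
    (isAlgebraic_algebraMap_iff (A := M) Subtype.val_injective).1 (hφ.isAlgebraic hi e)
  obtain ⟨p, hp, b, hb⟩ := halg.exists_nonzero_dvd (mem_nonZeroDivisors_of_ne_zero fun h0 =>
    ha0 (congrArg Subtype.val h0))
  exact ⟨b, b.2, p, hp, (congrArg Subtype.val hb).symm⟩

end Valuation

section Specialization

theorem tensorProduct_includeRight_surjective {R S T : Type*} [CommRing R] [CommRing S]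
    [CommRing T] [Algebra R S] [Algebra R T] (h : Function.Surjective (algebraMap R S)) :
    Function.Surjective (Algebra.TensorProduct.includeRight : T →ₐ[R] S ⊗[R] T) := by
  intro y
  induction y with
  | zero => exact ⟨0, map_zero _⟩
  | add x y hx hy =>
    obtain ⟨a, rfl⟩ := hx
    obtain ⟨b, rfl⟩ := hy
    exact ⟨a + b, map_add _ _ _⟩
  | tmul x y =>
    obtain ⟨r, rfl⟩ := h x
    exact ⟨r • y, by
      rw [Algebra.TensorProduct.includeRight_apply, ← TensorProduct.smul_tmul, Algebra.smul_def,
        mul_one]⟩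

theorem exists_etale_pushout {P P₀ E : Type u} [CommRing P] [CommRing P₀] [CommRing E]
    {ε : P →+* P₀} (hε : Function.Surjective ε) {j : P →+* E} (hj : j.Etale) :
    ∃ (F : Type u) (_ : CommRing F) (j₀ : P₀ →+* F) (q : E →+* F), j₀.Etale ∧
      q.comp j = j₀.comp ε ∧ Function.Surjective q ∧
      ∀ (B : Type u) [CommRing B] (f : P₀ →+* B) (g : E →+* B), g.comp j = f.comp ε →
        ∃ h : F →+* B, h.comp j₀ = f ∧ h.comp q = g := by
  let : Algebra P E := j.toAlgebra
  let : Algebra P P₀ := ε.toAlgebra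
  have : Algebra.Etale P E := hj
  let q : E →ₐ[P] P₀ ⊗[P] E := Algebra.TensorProduct.includeRight
  refine ⟨P₀ ⊗[P] E, inferInstance, algebraMap _ _, q.toRingHom,
    RingHom.etale_algebraMap.2 inferInstance, RingHom.ext q.commutes,
    tensorProduct_includeRight_surjective hε, fun B _ f g hfg => ?_⟩
  let : Algebra P B := (g.comp j).toAlgebra
  let h : P₀ ⊗[P] E →ₐ[P] B := Algebra.TensorProduct.lift
    { f with commutes' := fun p => (RingHom.congr_fun hfg p).symm }
    { g with commutes' := fun p => rfl } fun _ _ => Commute.all _ _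
  refine ⟨h.toRingHom, ?_, ?_⟩
  · ext p; simp [h, Algebra.TensorProduct.algebraMap_apply]
  · ext p; simp [h, q]

theorem comp_section_comp {P P₀ B : Type*} [CommRing P] [CommRing P₀] [CommRing B]
    {ι : P₀ →+* P} {ε : P →+* P₀} (hε : ε.comp ι = RingHom.id P₀) {z : P}
    (hz : ∀ p, ε p = 0 → z ∣ p) {g : P →+* B} (hg : g z = 0) : (g.comp ι).comp ε = g := by
  ext p
  obtain ⟨c, hc⟩ := hz (ι (ε p) - p) (by
    rw [map_sub, sub_eq_zero]
    exact RingHom.congr_fun hε (ε p))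
  exact sub_eq_zero.1 (by
    rw [RingHom.comp_apply, RingHom.comp_apply, ← map_sub, hc, map_mul, hg, zero_mul])

theorem exists_etale_specialization {P P₀ E : Type u} [CommRing P] [CommRing P₀] [CommRing E]
    {ι : P₀ →+* P} {ε : P →+* P₀} (hε : ε.comp ι = RingHom.id P₀) {z : P}
    (hz : ∀ p, ε p = 0 → z ∣ p) {j : P →+* E} (hj : j.Etale) :
    ∃ (F : Type u) (_ : CommRing F) (j₀ : P₀ →+* F) (q : E →+* F), j₀.Etale ∧
      q.comp j = j₀.comp ε ∧ Function.Surjective q ∧ (∀ e, q e = 0 → j z ∣ e) ∧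
      ∀ (B : Type u) [CommRing B] (g : E →+* B), g (j z) = 0 →
        ∃ h : F →+* B, h.comp j₀ = (g.comp j).comp ι ∧ h.comp q = g := by
  obtain ⟨F, _, j₀, q, hj₀, hq, hqs, hlift⟩ :=
    exists_etale_pushout (fun p => ⟨ι p, RingHom.congr_fun hε p⟩) hj
  have hlift' : ∀ (B : Type u) [CommRing B] (g : E →+* B), g (j z) = 0 →
      ∃ h : F →+* B, h.comp j₀ = (g.comp j).comp ι ∧ h.comp q = g := fun B _ g hg =>
    hlift B _ g (comp_section_comp hε hz hg).symm
  refine ⟨F, _, j₀, q, hj₀, hq, hqs, fun e he => ?_, hlift'⟩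
  obtain ⟨h, -, hg⟩ := hlift' _ (Ideal.Quotient.mk (Ideal.span {j z}))
    (Ideal.Quotient.eq_zero_iff_mem.2 (Ideal.mem_span_singleton_self _))
  rw [← Ideal.mem_span_singleton, ← Ideal.Quotient.eq_zero_iff_mem, ← hg, RingHom.comp_apply, he,
    map_zero]

section Residue

variable {M : Type*} [Field M] [IsAlgClosed M] {𝒪 : ValuationSubring M}

theorem exists_root_residue_eq {F : Polynomial 𝒪} (hF : F.Monic) {a : 𝒪}
    (ha : IsLocalRing.residue 𝒪 (F.eval a) = 0) :
    ∃ b, F.eval b = 0 ∧ IsLocalRing.residue 𝒪 a = IsLocalRing.residue 𝒪 b := by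
  let F' := F.map (algebraMap 𝒪 M)
  have heval : ∀ c : 𝒪, F'.eval (c : M) = F.eval c := fun c => by
    rw [Polynomial.eval_map_algebraMap]
    exact Polynomial.aeval_algebraMap_apply M c F
  have hlt : 𝒪.valuation (F'.eval (a : M)) < 1 := by
    rwa [heval, ← ValuationSubring.valuation_lt_one_iff, ← IsLocalRing.residue_eq_zero_iff]
  rw [(IsAlgClosed.splits F').eval_eq_prod_roots_of_monic (hF.map _), map_multiset_prod,
    Multiset.map_map] at hlt
  obtain ⟨b, hb, hab⟩ : ∃ b ∈ F'.roots, 𝒪.valuation ((a : M) - b) < 1 := by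
    by_contra! hc
    refine hlt.not_ge (Multiset.one_le_prod fun x hx => ?_)
    obtain ⟨b, hb, rfl⟩ := Multiset.mem_map.1 hx
    exact hc b hb
  have hroot : F'.eval b = 0 := (Polynomial.mem_roots'.1 hb).2
  obtain ⟨b, rfl⟩ := IsIntegrallyClosed.isIntegral_iff.1
    (⟨F, hF, by rwa [← Polynomial.eval_map]⟩ : IsIntegral 𝒪 b)
  exact ⟨b, Subtype.ext ((heval b).symm.trans hroot), residue_eq_residue_iff.2 hab⟩

theorem exists_lift_residue_of_standardEtale {P E : Type*} [CommRing P] [CommRing E] [Algebra P E]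
    (S : StandardEtalePresentation P E) [Algebra P 𝒪]
    (ρ : E →ₐ[P] IsLocalRing.ResidueField 𝒪) :
    ∃ ψ : E →ₐ[P] 𝒪, ∀ e, IsLocalRing.residue 𝒪 (ψ e) = ρ e := by
  let res : 𝒪 →ₐ[P] IsLocalRing.ResidueField 𝒪 :=
    IsScalarTower.toAlgHom P 𝒪 (IsLocalRing.ResidueField 𝒪)
  have hres : ∀ a, res a = IsLocalRing.residue 𝒪 a := fun a => rfl
  have heval : ∀ a, (S.f.map (algebraMap P 𝒪)).eval a = Polynomial.aeval a S.f :=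
    fun a => Polynomial.eval_map_algebraMap _ a
  obtain ⟨a, ha⟩ := IsLocalRing.residue_surjective (R := 𝒪) (ρ S.x)
  obtain ⟨b, hb, hab⟩ := exists_root_residue_eq (S.monic_f.map (algebraMap P 𝒪)) (a := a) (by
    rw [heval, ← hres, ← Polynomial.aeval_algHom_apply, hres, ha, Polynomial.aeval_algHom_apply,
      S.hasMap.1, map_zero])
  have hbx : res b = ρ S.x := by rw [hres, ← hab, ha]
  have hunit : IsUnit (res (Polynomial.aeval b S.g)) := by
    rw [← Polynomial.aeval_algHom_apply, hbx, Polynomial.aeval_algHom_apply]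
    exact S.hasMap.2.map ρ
  have hmap : S.HasMap b :=
    ⟨(heval b).symm.trans hb, (isUnit_map_iff (IsLocalRing.residue 𝒪) _).1 hunit⟩
  let ψ : E →ₐ[P] 𝒪 := (S.lift b hmap).comp S.equivRing.toAlgHom
  have hψ : res.comp ψ = ρ := S.hom_ext (by simp [ψ, hbx])
  exact ⟨ψ, DFunLike.congr_fun hψ⟩

theorem exists_lift_residue {P E : Type*} [CommRing P] [CommRing E] {j : P →+* E} (hj : j.Etale)
    {i : P →+* 𝒪} {ρ : E →+* IsLocalRing.ResidueField 𝒪}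
    (hρ : ρ.comp j = (IsLocalRing.residue 𝒪).comp i) :
    ∃ ψ : E →+* 𝒪, ψ.comp j = i ∧ (IsLocalRing.residue 𝒪).comp ψ = ρ := by
  let : Algebra P E := j.toAlgebra
  let : Algebra P 𝒪 := i.toAlgebra
  have : Algebra.Etale P E := hj
  have : (RingHom.ker ρ).IsPrime := RingHom.ker_isPrime ρ
  obtain ⟨g, hg, ⟨⟨S⟩⟩⟩ := Algebra.IsEtaleAt.exists_isStandardEtale (R := P) (RingHom.ker ρ)
  let ρ' : Localization.Away g →+* IsLocalRing.ResidueField 𝒪 :=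
    IsLocalization.Away.lift g (isUnit_iff_ne_zero.2 hg)
  have hρ' : ∀ e, ρ' (algebraMap E _ e) = ρ e := IsLocalization.Away.lift_eq g _
  obtain ⟨ψ, hψ⟩ := exists_lift_residue_of_standardEtale S ({ ρ' with
    commutes' := fun p => (hρ' (j p)).trans (RingHom.congr_fun hρ p) } :
      Localization.Away g →ₐ[P] IsLocalRing.ResidueField 𝒪)
  refine ⟨ψ.toRingHom.comp (algebraMap E _), RingHom.ext fun p => ψ.commutes p,
    RingHom.ext fun e => ?_⟩
  exact (hψ (algebraMap E _ e)).trans (hρ' e)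

end Residue

variable {P P₀ E M : Type u} [CommRing P] [CommRing P₀] [CommRing E] [Field M] [IsAlgClosed M]
  {𝒪 : ValuationSubring M} {i : P →+* M} {ι : P₀ →+* P} {ε : P →+* P₀} {z : P}

theorem IsEtaleModel.exists_specialization (hε : ε.comp ι = RingHom.id P₀)
    (hz : ∀ p, ε p = 0 → z ∣ p) (hiz : 𝒪.valuation (i z) < 1)
    {j : P →+* E} {φ : E →+* M} (hφ : IsEtaleModel i 𝒪.toSubring j φ) :
    ∃ (F : Type u) (_ : CommRing F) (j₀ : P₀ →+* F) (q : E →+* F) (ψ : F →+* M),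
      IsEtaleModel (i.comp ι) 𝒪.toSubring j₀ ψ ∧ q.comp j = j₀.comp ε ∧
      Function.Surjective q ∧ (∀ e, q e = 0 → j z ∣ e) ∧ ∀ e, 𝒪.valuation (φ e - ψ (q e)) < 1 := by
  obtain ⟨F, _, j₀, q, hj₀, hq, hqs, hqz, hlift⟩ := exists_etale_specialization hε hz hφ.etale
  let φ' : E →+* 𝒪 := φ.codRestrict 𝒪.toSubring hφ.mem
  obtain ⟨ρ, hρ, hρq⟩ := hlift _ ((IsLocalRing.residue 𝒪).comp φ') (by
    rw [RingHom.comp_apply, IsLocalRing.residue_eq_zero_iff, ValuationSubring.valuation_lt_one_iff]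
    rwa [← hφ.comp_eq] at hiz)
  obtain ⟨ψ, hψ, rfl⟩ := exists_lift_residue (i := (φ'.comp j).comp ι) hj₀ hρ
  refine ⟨F, _, j₀, q, 𝒪.subtype.comp ψ, ⟨hj₀, ?_, fun e => (ψ e).2⟩, hq, hqs, hqz, fun e => ?_⟩
  · rw [RingHom.comp_assoc, hψ, ← hφ.comp_eq]
    rfl
  · exact residue_eq_residue_iff.1 (RingHom.congr_fun hρq e).symm

theorem exists_tmul_sub_tmul_mul_eq {R E F : Type*} [CommRing R] [CommRing E] [CommRing F]
    [Algebra R E] [Algebra R F] [Algebra.EssFiniteType R F] [Algebra.FormallyUnramified R F]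
    {q : E →ₐ[R] F} (hq : Function.Surjective q) {t : E} (ht : ∀ e, q e = 0 → t ∣ e) (e : E) :
    ∃ l w : E ⊗[R] F,
      Algebra.TensorProduct.lmul' R (Algebra.TensorProduct.map q (AlgHom.id R F) l) = 1 ∧
      (e ⊗ₜ 1 - 1 ⊗ₜ q e) * l = (t ⊗ₜ 1) * w := by
  let Q := Algebra.TensorProduct.map q (AlgHom.id R F)
  have hQ : Function.Surjective Q := Algebra.TensorProduct.map_surjective _ _ hq
    Function.surjective_id
  obtain ⟨l, hl⟩ := hQ (Algebra.FormallyUnramified.elem R F)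
  have hker : (e ⊗ₜ 1 - 1 ⊗ₜ q e) * l ∈ RingHom.ker Q := by
    have hQe : Q (e ⊗ₜ 1 - 1 ⊗ₜ q e) = -(1 ⊗ₜ q e - q e ⊗ₜ 1) := by simp [Q]
    rw [RingHom.mem_ker, map_mul, hl, hQe, neg_mul,
      Algebra.FormallyUnramified.one_tmul_sub_tmul_one_mul_elem, neg_zero]
  have hle : Ideal.map (Algebra.TensorProduct.includeLeft : E →ₐ[R] E ⊗[R] F) (RingHom.ker q) ≤
      Ideal.span {t ⊗ₜ 1} := by
    rw [Ideal.map_le_iff_le_comap]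
    intro y hy
    obtain ⟨c, rfl⟩ := ht y hy
    rw [Ideal.mem_comap, map_mul]
    exact Ideal.mul_mem_right _ _ (Ideal.mem_span_singleton_self _)
  rw [Algebra.TensorProduct.rTensor_ker q hq] at hker
  obtain ⟨w, hw⟩ := Ideal.mem_span_singleton.1 (hle hker)
  exact ⟨l, w, hl ▸ Algebra.FormallyUnramified.lmul_elem, hw⟩

theorem valuation_productMap_sub_lt_one {R E F M : Type*} [CommRing R] [CommRing E] [CommRing F]
    [Field M] [Algebra R E] [Algebra R F] [Algebra R M] {𝒪 : ValuationSubring M} {q : E →ₐ[R] F}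
    {φ : E →ₐ[R] M} {ψ : F →ₐ[R] M} (hψ : ∀ y, ψ y ∈ 𝒪)
    (hφψ : ∀ e, 𝒪.valuation (φ e - ψ (q e)) < 1) (y : E ⊗[R] F) :
    𝒪.valuation (Algebra.TensorProduct.productMap φ ψ y - ψ (Algebra.TensorProduct.lmul' R
      (Algebra.TensorProduct.map q (AlgHom.id R F) y))) < 1 := by
  induction y with
  | zero => simp
  | add x y hx hy =>
    simp only [map_add]
    rw [add_sub_add_comm]
    exact Valuation.map_add_lt _ hx hy
  | tmul x y =>
    rw [Algebra.TensorProduct.productMap_apply_tmul, Algebra.TensorProduct.map_tmul,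
      Algebra.TensorProduct.lmul'_apply_tmul, AlgHom.id_apply, map_mul, ← sub_mul, map_mul]
    exact (mul_le_of_le_one_right' ((𝒪.valuation_le_one_iff _).2 (hψ y))).trans_lt (hφψ x)

theorem exists_sub_eq_mul (hε : ε.comp ι = RingHom.id P₀) (hz : ∀ p, ε p = 0 → z ∣ p)
    (hi : ∀ p, i p ∈ 𝒪) (hiz : 𝒪.valuation (i z) < 1) {f : M}
    (hf : f ∈ etaleClosure i 𝒪.toSubring) :
    ∃ a ∈ etaleClosure (i.comp ι) 𝒪.toSubring, ∃ w ∈ etaleClosure i 𝒪.toSubring,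
      f = a + i z * w := by
  obtain ⟨E, _, j, φ, hφ, e, rfl⟩ := (mem_etaleClosure_iff hi).1 hf
  obtain ⟨F, _, j₀, q, ψ, hψ, hqj, hqs, hqz, hφψ⟩ := hφ.exists_specialization hε hz hiz
  refine ⟨ψ (q e), hψ.apply_mem _, ?_⟩
  let : Algebra P₀ E := (j.comp ι).toAlgebra
  let : Algebra P₀ F := j₀.toAlgebra
  let : Algebra P₀ M := (i.comp ι).toAlgebra
  have : Algebra.Etale P₀ F := hψ.etale
  have hqι : (q.comp j).comp ι = j₀ := by rw [hqj, RingHom.comp_assoc, hε, RingHom.comp_id]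
  let q' : E →ₐ[P₀] F := { q with commutes' := RingHom.congr_fun hqι }
  let φ' : E →ₐ[P₀] M := { φ with commutes' := fun p => RingHom.congr_fun hφ.comp_eq (ι p) }
  let ψ' : F →ₐ[P₀] M := { ψ with commutes' := RingHom.congr_fun hψ.comp_eq }
  let χ : E ⊗[P₀] F →ₐ[P₀] M := Algebra.TensorProduct.productMap φ' ψ'
  have hχ : ∀ x y, χ (x ⊗ₜ y) = φ x * ψ y := Algebra.TensorProduct.productMap_apply_tmul φ' ψ'
  have hmodel : IsEtaleModel i 𝒪.toSubring ((algebraMap E (E ⊗[P₀] F)).comp j) χ.toRingHom := by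
    refine ⟨etale_comp (RingHom.etale_algebraMap.2 inferInstance) hφ.etale, ?_, fun y => ?_⟩
    · rw [← hφ.comp_eq]
      ext p
      exact (hχ _ _).trans (by rw [map_one, mul_one]; rfl)
    · induction y with
      | zero => simp [zero_mem]
      | add x y hx hy => rw [map_add]; exact add_mem hx hy
      | tmul x y => exact (hχ x y).symm ▸ mul_mem (hφ.mem x) (hψ.mem y)
  obtain ⟨l, w, hl, hlw⟩ := exists_tmul_sub_tmul_mul_eq (q := q') hqs hqz e
  have hχl : 𝒪.valuation (χ l) = 1 := by
    have hsub := valuation_productMap_sub_lt_one (q := q') (φ := φ') (ψ := ψ') hψ.mem hφψ l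
    rw [hl, map_one, Valuation.map_sub_swap] at hsub
    exact valuation_eq_one_of_sub_lt_one (map_one _) hsub
  have hχl0 : χ l ≠ 0 := 𝒪.valuation.ne_zero_iff.1 (hχl ▸ one_ne_zero)
  have hmul : (φ e - ψ (q e)) * χ l = i z * χ w := by
    have hχlw : χ ((e ⊗ₜ 1 - 1 ⊗ₜ q e) * l) = χ ((j z ⊗ₜ 1) * w) := congrArg χ hlw
    simpa only [map_mul, map_sub, hχ, map_one, mul_one, one_mul, ← RingHom.comp_apply,
      hφ.comp_eq] using hχlw
  refine ⟨χ w * (χ l)⁻¹, mul_mem (hmodel.apply_mem w) (mem_etaleClosure_of_mul_eq_one hi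
    (hmodel.apply_mem l) ((𝒪.valuation_le_one_iff _).1 (by simp [hχl])) (mul_inv_cancel₀ hχl0)), ?_⟩
  rw [← mul_assoc, ← hmul, mul_inv_cancel_right₀ hχl0, add_sub_cancel]

theorem eq_zero_of_eq_mul [IsDomain P] [IsDomain P₀] [IsIntegrallyClosed P]
    (hinj : Function.Injective i) (hε : ε.comp ι = RingHom.id P₀) (hεz : ε z = 0)
    (hz : ∀ p, ε p = 0 → z ∣ p) (hi : ∀ p, i p ∈ 𝒪) (hiz : 𝒪.valuation (i z) < 1) {a w : M}
    (ha : a ∈ etaleClosure (i.comp ι) 𝒪.toSubring) (hw : w ∈ etaleClosure i 𝒪.toSubring)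
    (haw : a = i z * w) : a = 0 := by
  by_contra ha0
  have hει : ∀ p, ε (ι p) = p := RingHom.congr_fun hε
  obtain ⟨b, hb, c, hc, hab⟩ := exists_mul_eq_apply (i := i.comp ι)
    (hinj.comp (Function.LeftInverse.injective hει)) (fun p => hi _) ha ha0
  obtain ⟨E, _, j, φ, hφ, e, he⟩ :=
    (mem_etaleClosure_iff hi).1 (mul_mem hw (etaleClosure_comp_le hi hb))
  obtain ⟨F, _, j₀, q, ψ, hψ, hqj, -, -, hφψ⟩ := hφ.exists_specialization hε hz hiz
  have hφj : ∀ p, φ (j p) = i p := RingHom.congr_fun hφ.comp_eq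
  have hqj' : ∀ p, q (j p) = j₀ (ε p) := RingHom.congr_fun hqj
  obtain ⟨s, hs, hs0⟩ := hφ.exists_valuation_eq_one_mul_eq_zero hinj le_rfl
    (e := j (ι c) - j z * e) (by
      rw [map_sub, map_mul, hφj, hφj, he, ← RingHom.comp_apply, ← hab, haw]; ring)
  have hqs : j₀ c * q s = 0 := by
    have hq0 := congrArg q hs0
    rwa [map_mul, map_sub, map_mul, hqj', hqj', hεz, map_zero, zero_mul, sub_zero, hει, map_zero,
      mul_comm] at hq0
  -- `F` is flat over the domain `P₀`, so the nonzero element `c` of `P₀` is regular on `F`.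
  have hqs0 : q s = 0 := by
    let : Algebra P₀ F := j₀.toAlgebra
    have : Algebra.Etale P₀ F := hψ.etale
    have hreg : IsSMulRegular F (algebraMap P₀ F c) :=
      (IsSMulRegular.of_right_eq_zero_of_smul fun x hx =>
        (mul_eq_zero.1 hx).resolve_left hc : IsSMulRegular P₀ c).of_flat
    exact hreg.right_eq_zero_of_smul hqs
  have hlt := hφψ s
  rw [hqs0, map_zero, sub_zero, hs] at hlt
  exact lt_irrefl _ hlt

end Specialization

section DualDerivations

variable {K M σ : Type*} [Field K] [Field M] [Algebra K M]

theorem derivation_aeval [DecidableEq σ] {x : σ → M} {i : σ} {D : Derivation K M M}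
    (hD : ∀ j, D (x j) = if i = j then 1 else 0) (p : MvPolynomial σ K) :
    D (aeval x p) = aeval x (MvPolynomial.pderiv i p) := by
  induction p using MvPolynomial.induction_on with
  | C a => simp
  | add p q hp hq => simp [hp, hq]
  | mul_X p j hp =>
    rw [map_mul, Derivation.leibniz, hp, MvPolynomial.aeval_X, hD, Derivation.leibniz,
      MvPolynomial.pderiv_X]
    by_cases h : i = j
    · subst h; simp
    · simp [h]

variable [CharZero K]

theorem eq_C_of_pderiv_eq_zero {p : MvPolynomial σ K}
    (hp : ∀ i, MvPolynomial.pderiv i p = 0) : p = MvPolynomial.C (p.coeff 0) := by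
  classical
  ext m
  rw [MvPolynomial.coeff_C]
  split_ifs with hm
  · rw [hm]
  · obtain ⟨i, hi⟩ := Finsupp.ne_iff.1 (Ne.symm hm)
    have hcoeff := MvPolynomial.coeff_pderiv (i := i) p (m - Finsupp.single i 1)
    rw [hp, MvPolynomial.coeff_zero, tsub_add_cancel_of_le
      (by simpa [Nat.one_le_iff_ne_zero] using hi)] at hcoeff
    exact (mul_eq_zero.1 hcoeff.symm).resolve_right (by norm_cast)

theorem algebraicIndependent_of_derivation [DecidableEq σ] {x : σ → M}
    {D : σ → Derivation K M M}
    (hD : ∀ i j, D i (x j) = if i = j then 1 else 0) : AlgebraicIndependent K x := by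
  rw [algebraicIndependent_iff]
  suffices h : ∀ (n : ℕ) (p : MvPolynomial σ K), (∀ m : σ →₀ ℕ, n ≤ m.degree → p.coeff m = 0) →
      aeval x p = 0 → p = 0 from fun p => h (p.totalDegree + 1) p fun m hm =>
    MvPolynomial.coeff_eq_zero_of_totalDegree_lt (Nat.lt_of_succ_le hm)
  intro n
  induction n with
  | zero => exact fun p hp _ => MvPolynomial.ext _ _ fun m => by simp [hp m]
  | succ n ih =>
    intro p hp h0
    have hpderiv : ∀ i, MvPolynomial.pderiv i p = 0 := fun i => by
      refine ih _ (fun m hm => ?_) (by rw [← derivation_aeval (hD i), h0, map_zero])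
      rw [MvPolynomial.coeff_pderiv, hp _ (by simpa using hm), zero_mul]
    rw [eq_C_of_pderiv_eq_zero hpderiv, MvPolynomial.aeval_C] at h0
    rw [eq_C_of_pderiv_eq_zero hpderiv, (map_eq_zero (algebraMap K M)).1 h0, map_zero]

end DualDerivations

section Coordinates

variable {K M : Type u} [Field K] [Field M] [Algebra K M]

/-- The valuation ring induced by `𝒪` on the intermediate field `L`. -/
def valRing (𝒪 : ValuationSubring M) (L : IntermediateField K M) : Subring M :=
  𝒪.toSubring ⊓ L.toSubfield.toSubring

/-- The étale closure in `valRing 𝒪 L` of the polynomial ring in the elements `x t`, `t ∈ T`: the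
functions on étale neighbourhoods of the center of `𝒪` in the affine space with these coordinates
that take values in `L`. -/
noncomputable def coordRing {σ : Type} (𝒪 : ValuationSubring M) (L : IntermediateField K M)
    (x : σ → M) (T : Finset σ) : Subring M :=
  etaleClosure (aeval (fun t : T => x t) : MvPolynomial T K →ₐ[K] M).toRingHom (valRing 𝒪 L)

/-- Elements `x` of the valuation ring `valRing 𝒪 L`, which contains the ground field, together with
a dual family `D` of derivations (which make `x` algebraically independent in characteristic
zero). -/
structure IsCoordSystem {σ : Type} [DecidableEq σ] (𝒪 : ValuationSubring M)
    (L : IntermediateField K M) (x : σ → M) (D : σ → Derivation K M M) : Prop where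
  algebraMap_mem : ∀ c : K, algebraMap K M c ∈ 𝒪
  mem : ∀ i, x i ∈ valRing 𝒪 L
  apply_eq : ∀ i j, D i (x j) = if i = j then 1 else 0

variable {𝒪 : ValuationSubring M} {L L' : IntermediateField K M}

theorem mem_valRing {a : M} : a ∈ valRing 𝒪 L ↔ a ∈ 𝒪 ∧ a ∈ L := Iff.rfl

theorem valRing_le : valRing 𝒪 L ≤ 𝒪.toSubring := inf_le_left

theorem valRing_mono (h : L ≤ L') : valRing 𝒪 L ≤ valRing 𝒪 L' :=
  fun _ ha => ⟨ha.1, h ha.2⟩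

theorem valRing_top : valRing 𝒪 (⊤ : IntermediateField K M) = 𝒪.toSubring :=
  le_antisymm valRing_le fun _ ha => ⟨ha, trivial⟩

theorem inv_mem_valRing {a : M} (ha : a ∈ valRing 𝒪 L) (ha1 : 𝒪.valuation a = 1) :
    a⁻¹ ∈ valRing 𝒪 L :=
  ⟨(𝒪.valuation_le_one_iff _).1 (by rw [map_inv₀, ha1, inv_one]), L.inv_mem ha.2⟩

section CoordRing

variable {σ : Type} {x y : σ → M} {S T : Finset σ}

theorem aeval_mem_coordRing (p : MvPolynomial T K) :
    aeval (fun t : T => x t) p ∈ coordRing 𝒪 L x T :=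
  apply_mem_etaleClosure (aeval (fun t : T => x t) : MvPolynomial T K →ₐ[K] M).toRingHom
    (valRing 𝒪 L) p

theorem apply_mem_coordRing {t : σ} (ht : t ∈ T) : x t ∈ coordRing 𝒪 L x T := by
  simpa using aeval_mem_coordRing (K := K) (x := x) (.X ⟨t, ht⟩)

theorem algebraMap_mem_coordRing (c : K) : algebraMap K M c ∈ coordRing 𝒪 L x T := by
  simpa using aeval_mem_coordRing (𝒪 := 𝒪) (L := L) (x := x) (T := T) (.C c)

theorem coordRing_mono (h : L ≤ L') : coordRing 𝒪 L x T ≤ coordRing 𝒪 L' x T :=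
  etaleClosure_mono _ (valRing_mono h)

theorem coordRing_le_top : coordRing 𝒪 L x T ≤ coordRing 𝒪 (⊤ : IntermediateField K M) x T :=
  coordRing_mono le_top

theorem coordRing_congr (h : ∀ t ∈ T, x t = y t) : coordRing 𝒪 L x T = coordRing 𝒪 L y T := by
  have hxy : (fun t : T => x t) = fun t : T => y t := funext fun t => h t t.2
  rw [coordRing, coordRing, hxy]

theorem coordRing_eq_etaleClosure_comp_rename (h : ∀ t ∈ S, t ∈ T) :
    coordRing 𝒪 L x S = etaleClosure ((aeval (fun t : T => x t) :
      MvPolynomial T K →ₐ[K] M).toRingHom.comp (MvPolynomial.rename (Subtype.map id h) :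
        MvPolynomial S K →ₐ[K] MvPolynomial T K).toRingHom) (valRing 𝒪 L) := by
  rw [coordRing]
  congr 1
  apply MvPolynomial.ringHom_ext <;> intro <;> simp [Subtype.map]

end CoordRing

variable {σ : Type} [DecidableEq σ] {x y : σ → M} {D : σ → Derivation K M M} {S T : Finset σ}

namespace IsCoordSystem

theorem of_le (hx : IsCoordSystem 𝒪 L x D) (h : L ≤ L') : IsCoordSystem 𝒪 L' x D :=
  ⟨hx.algebraMap_mem, fun i => valRing_mono h (hx.mem i), hx.apply_eq⟩

theorem aeval_mem (hx : IsCoordSystem 𝒪 L x D) (p : MvPolynomial T K) :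
    (aeval (fun t : T => x t) : MvPolynomial T K →ₐ[K] M).toRingHom p ∈ valRing 𝒪 L :=
  aeval_mem_subring (A := valRing 𝒪 L) (x := fun t : T => x t)
    (fun c => mem_valRing.2 ⟨hx.algebraMap_mem c, L.algebraMap_mem c⟩) (fun t => hx.mem t) p

theorem ne_zero (hx : IsCoordSystem 𝒪 L x D) (i : σ) : x i ≠ 0 := fun h => by
  simpa [h] using hx.apply_eq i i

theorem algebraicIndependent [CharZero K] (hx : IsCoordSystem 𝒪 L x D) :
    AlgebraicIndependent K x := algebraicIndependent_of_derivation hx.apply_eq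

theorem injective [CharZero K] (hx : IsCoordSystem 𝒪 L x D) :
    Function.Injective (aeval (fun t : T => x t) : MvPolynomial T K →ₐ[K] M).toRingHom :=
  hx.algebraicIndependent.comp _ Subtype.val_injective

theorem coordRing_le (hx : IsCoordSystem 𝒪 L x D) : coordRing 𝒪 L x T ≤ valRing 𝒪 L :=
  etaleClosure_le hx.aeval_mem

theorem mem_of_mem (hx : IsCoordSystem 𝒪 L x D) {a : M} (ha : a ∈ coordRing 𝒪 L x T) : a ∈ 𝒪 :=
  (hx.coordRing_le ha).1

theorem valuation_le_one (hx : IsCoordSystem 𝒪 L x D) {a : M} (ha : a ∈ coordRing 𝒪 L x T) :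
    𝒪.valuation a ≤ 1 := (𝒪.valuation_le_one_iff _).2 (hx.mem_of_mem ha)

theorem coordRing_le_coordRing {D' : σ → Derivation K M M} (hy : IsCoordSystem 𝒪 L y D')
    (h : ∀ t ∈ S, x t ∈ coordRing 𝒪 L y T) : coordRing 𝒪 L x S ≤ coordRing 𝒪 L y T :=
  etaleClosure_aeval_le hy.aeval_mem fun t => h t t.2

theorem coordRing_subset (hx : IsCoordSystem 𝒪 L x D) (h : S ⊆ T) :
    coordRing 𝒪 L x S ≤ coordRing 𝒪 L x T :=
  hx.coordRing_le_coordRing fun _ ht => apply_mem_coordRing (h ht)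

theorem inv_mem (hx : IsCoordSystem 𝒪 L x D) {a : M} (ha : a ∈ coordRing 𝒪 L x T)
    (ha1 : 𝒪.valuation a = 1) : a⁻¹ ∈ coordRing 𝒪 L x T :=
  mem_etaleClosure_of_mul_eq_one hx.aeval_mem ha (inv_mem_valRing (hx.coordRing_le ha) ha1)
    (mul_inv_cancel₀ (𝒪.valuation.ne_zero_iff.1 (ha1 ▸ one_ne_zero)))

theorem derivation_mem (hx : IsCoordSystem 𝒪 L x D) (N : AddSubgroup M)
    (hN : ∀ a ∈ coordRing 𝒪 L x T, ∀ n ∈ N, a * n ∈ N) (Δ : Derivation K M M)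
    (hΔ : ∀ t ∈ T, Δ (x t) ∈ N) {a : M} (ha : a ∈ coordRing 𝒪 L x T) : Δ a ∈ N := by
  have hpoly (p : MvPolynomial T K) : Δ (aeval (fun t : T => x t) p) ∈ N := by
    induction p using MvPolynomial.induction_on with
    | C a => simp [N.zero_mem]
    | add p q hp hq => rw [map_add, map_add]; exact N.add_mem hp hq
    | mul_X p t hp =>
      rw [map_mul, Derivation.leibniz, MvPolynomial.aeval_X, smul_eq_mul, smul_eq_mul]
      exact N.add_mem (hN _ (aeval_mem_coordRing p) _ (hΔ t t.2))
        (hN _ (apply_mem_coordRing t.2) _ hp)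
  obtain ⟨E, _, j, φ, hφ, e, rfl⟩ := (mem_etaleClosure_iff hx.aeval_mem).1 ha
  let : Algebra (MvPolynomial T K) E := j.toAlgebra
  have : Algebra.Etale (MvPolynomial T K) E := hφ.etale
  refine derivation_mem_of_formallyUnramified (P := MvPolynomial T K) φ N
    (fun e n hn => hN _ (hφ.apply_mem e) n hn) (Δ.restrictScalars ℤ) (fun p => ?_) e
  have hp : φ (algebraMap (MvPolynomial T K) E p) = aeval (fun t : T => x t) p :=
    RingHom.congr_fun hφ.comp_eq p
  exact hp ▸ hpoly p

theorem apply_mem (hx : IsCoordSystem 𝒪 L x D) {a : M} (ha : a ∈ coordRing 𝒪 L x T) (i : σ) :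
    D i a ∈ coordRing 𝒪 L x T :=
  hx.derivation_mem (coordRing 𝒪 L x T).toAddSubgroup
    (fun _ ha _ hn => (coordRing 𝒪 L x T).mul_mem ha hn) (D i) (fun t _ => by
      rw [hx.apply_eq]
      split_ifs
      exacts [Subring.one_mem _, Subring.zero_mem _]) ha

theorem iterate_mem (hx : IsCoordSystem 𝒪 L x D) {a : M} (ha : a ∈ coordRing 𝒪 L x T) (i : σ)
    (n : ℕ) : (D i)^[n] a ∈ coordRing 𝒪 L x T := by
  induction n with
  | zero => exact ha
  | succ n ih => rw [Function.iterate_succ_apply']; exact hx.apply_mem ih i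

theorem apply_eq_zero (hx : IsCoordSystem 𝒪 L x D) {a : M} (ha : a ∈ coordRing 𝒪 L x T) {i : σ}
    (hi : i ∉ T) : D i a = 0 := by
  refine AddSubgroup.mem_bot.1 (hx.derivation_mem ⊥ (fun a _ n hn => ?_) (D i) (fun t ht => ?_) ha)
  · rw [AddSubgroup.mem_bot.1 hn, mul_zero]
    exact zero_mem _
  · rw [hx.apply_eq, if_neg (ne_of_mem_of_not_mem ht hi).symm]
    exact zero_mem _

variable [CharZero K]

theorem mem_of_eq_mul (hx : IsCoordSystem 𝒪 L x D) {f g h : M} (hf : f ∈ coordRing 𝒪 L x T)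
    (hg : g ∈ coordRing 𝒪 L x T) (hg0 : g ≠ 0)
    (hh : h ∈ coordRing 𝒪 (⊤ : IntermediateField K M) x T) (hfgh : f = g * h) :
    h ∈ coordRing 𝒪 L x T := by
  rw [coordRing, valRing_top] at hh
  exact mem_etaleClosure_of_eq_mul hx.injective valRing_le hx.aeval_mem
    (fun _ => inv_mem_valRing) hf hg hg0 hh hfgh

theorem exists_mul_eq_aeval (hx : IsCoordSystem 𝒪 L x D) {a : M} (ha : a ∈ coordRing 𝒪 L x T)
    (ha0 : a ≠ 0) : ∃ b ∈ coordRing 𝒪 L x T, ∃ p : MvPolynomial T K, p ≠ 0 ∧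
      a * b = aeval (fun t : T => x t) p :=
  exists_mul_eq_apply hx.injective hx.aeval_mem ha ha0

end IsCoordSystem

end Coordinates

section KillCompl

variable {K τ τ' : Type*} [CommRing K] {f : τ → τ'} (hf : Function.Injective f) {i : τ'}

theorem killCompl_X_eq_zero (hi : i ∉ Set.range f) :
    MvPolynomial.killCompl hf (.X i : MvPolynomial τ' K) = 0 := by
  rw [MvPolynomial.killCompl, MvPolynomial.aeval_X, dif_neg hi]

theorem X_dvd_of_killCompl_eq_zero (hi : ∀ t ∉ Set.range f, t = i) {p : MvPolynomial τ' K}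
    (hp : MvPolynomial.killCompl hf p = 0) : MvPolynomial.X i ∣ p := by
  suffices hdvd : ∀ p : MvPolynomial τ' K, MvPolynomial.X i ∣
      p - MvPolynomial.rename f (MvPolynomial.killCompl hf p) by simpa [hp] using hdvd p
  intro p
  induction p using MvPolynomial.induction_on with
  | C a => simp
  | add p q hp hq =>
    rw [map_add, map_add, add_sub_add_comm]
    exact dvd_add hp hq
  | mul_X p t hp =>
    by_cases ht : t ∈ Set.range f
    · obtain ⟨s, rfl⟩ := ht
      rw [map_mul, map_mul, ← MvPolynomial.rename_X, MvPolynomial.killCompl_rename_app, ← sub_mul]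
      exact hp.mul_right _
    · rw [map_mul, killCompl_X_eq_zero hf ht, mul_zero, map_zero, sub_zero, hi t ht]
      exact dvd_mul_left _ _

theorem notMem_range_map_id_erase {σ : Type*} [DecidableEq σ] {T : Finset σ} {i : σ} {t : T} :
    t ∉ Set.range (Subtype.map id fun _ => Finset.mem_of_mem_erase :
      ↥(T.erase i) → T) ↔ (t : σ) = i := by
  refine ⟨fun h => ?_, ?_⟩
  · by_contra hti
    exact h ⟨⟨t, Finset.mem_erase.2 ⟨hti, t.2⟩⟩, rfl⟩
  · rintro rfl ⟨s, hs⟩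
    exact Finset.ne_of_mem_erase s.2 (congrArg Subtype.val hs)

end KillCompl

section Monomials

variable {M σ : Type*} [Field M] {x y : σ → M} {S : Finset σ} {a b : σ → ℤ}

/-- The Laurent monomial in the elements `x i`, `i ∈ S`, with exponents `a`. -/
def mon (x : σ → M) (S : Finset σ) (a : σ → ℤ) : M := ∏ i ∈ S, x i ^ a i

theorem mon_ne_zero (hx : ∀ i ∈ S, x i ≠ 0) (a : σ → ℤ) : mon x S a ≠ 0 :=
  Finset.prod_ne_zero_iff.2 fun i hi => zpow_ne_zero _ (hx i hi)

theorem mon_add (hx : ∀ i ∈ S, x i ≠ 0) (a b : σ → ℤ) :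
    mon x S (a + b) = mon x S a * mon x S b := by
  rw [mon, mon, mon, ← Finset.prod_mul_distrib]
  exact Finset.prod_congr rfl fun i hi => zpow_add₀ (hx i hi) _ _

theorem mon_neg (a : σ → ℤ) : mon x S (-a) = (mon x S a)⁻¹ := by
  simp [mon]

theorem mon_sub (hx : ∀ i ∈ S, x i ≠ 0) (a b : σ → ℤ) :
    mon x S (a - b) = mon x S a / mon x S b := by
  rw [sub_eq_add_neg, mon_add hx, mon_neg, div_eq_mul_inv]

theorem mon_zero : mon x S 0 = 1 := by simp [mon]

theorem mon_congr (hxy : ∀ i ∈ S, x i = y i) (h : ∀ i ∈ S, a i = b i) : mon x S a = mon y S b :=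
  Finset.prod_congr rfl fun i hi => by rw [h i hi, hxy i hi]

theorem mon_single [DecidableEq σ] {i : σ} (hi : i ∈ S) (n : ℤ) :
    mon x S (Pi.single i n) = x i ^ n := by
  rw [mon, Finset.prod_eq_single_of_mem i hi fun j _ hj => by simp [hj], Pi.single_eq_same]

theorem mon_zsmul (n : ℤ) (a : σ → ℤ) : mon x S (n • a) = mon x S a ^ n := by
  simp only [mon, ← Finset.prod_zpow]
  exact Finset.prod_congr rfl fun i _ => by rw [Pi.smul_apply, smul_eq_mul, mul_comm, zpow_mul]

theorem mon_erase [DecidableEq σ] {j : σ} (hj : j ∈ S) (a : σ → ℤ) :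
    mon x S a = x j ^ a j * mon x (S.erase j) a := (Finset.mul_prod_erase S _ hj).symm

theorem mon_insert [DecidableEq σ] {j : σ} (hj : j ∉ S) (a : σ → ℤ) :
    mon x (insert j S) a = x j ^ a j * mon x S a := Finset.prod_insert hj

theorem mon_insert_update [DecidableEq σ] {j : σ} (hj : j ∉ S) (a : σ → ℤ) (n : ℤ) :
    mon x (insert j S) (Function.update a j n) = mon x S a * x j ^ n := by
  rw [mon_insert hj, Function.update_self, mul_comm]
  congr 1
  exact mon_congr (fun _ _ => rfl)
    fun k hk => Function.update_of_ne (ne_of_mem_of_not_mem hk hj) _ _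

theorem zpow_mem_subring {R : Subring M} {b : M} (hb : b ∈ R) {n : ℤ} (hn : 0 ≤ n) :
    b ^ n ∈ R := by
  lift n to ℕ using hn
  rw [zpow_natCast]
  exact R.pow_mem hb n

theorem mon_mem {R : Subring M} (hx : ∀ i ∈ S, x i ∈ R) (ha : ∀ i ∈ S, 0 ≤ a i) :
    mon x S a ∈ R :=
  R.prod_mem fun i hi => zpow_mem_subring (hx i hi) (ha i hi)

theorem exists_eq_add_single [DecidableEq σ] (ha : ∀ i ∈ S, 0 ≤ a i) {n : ℕ}
    (hn : ∑ i ∈ S, a i = (n + 1 : ℕ)) :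
    ∃ i ∈ S, ∃ b : σ → ℤ, (∀ k ∈ S, 0 ≤ b k) ∧ ∑ k ∈ S, b k = n ∧ a = b + Pi.single i 1 := by
  obtain ⟨i, hi, hi0⟩ : ∃ i ∈ S, a i ≠ 0 := Finset.exists_ne_zero_of_sum_ne_zero (by omega)
  refine ⟨i, hi, a - Pi.single i 1, fun k hk => ?_, ?_, (sub_add_cancel _ _).symm⟩
  · obtain rfl | hki := eq_or_ne k i
    · have := ha k hk
      simp only [Pi.sub_apply, Pi.single_eq_same]
      omega
    · simp [hki, ha k hk]
  · simp only [Pi.sub_apply]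
    rw [Finset.sum_sub_distrib, Finset.sum_pi_single', if_pos hi, hn]
    push_cast
    ring

end Monomials

section Divisors

variable {K M : Type u} [Field K] [Field M] [IsAlgClosed M] [Algebra K M]
  {σ : Type} [DecidableEq σ] {𝒪 : ValuationSubring M} {L : IntermediateField K M}
  {x : σ → M} {D : σ → Derivation K M M} {S T : Finset σ} {i : σ}

namespace IsCoordSystem

theorem exists_eq_add_mul (hx : IsCoordSystem 𝒪 L x D) (hi : i ∈ T)
    (hm : 𝒪.valuation (x i) < 1) {f : M} (hf : f ∈ coordRing 𝒪 (⊤ : IntermediateField K M) x T) :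
    ∃ a ∈ coordRing 𝒪 (⊤ : IntermediateField K M) x (T.erase i),
      ∃ w ∈ coordRing 𝒪 (⊤ : IntermediateField K M) x T, f = a + x i * w := by
  rw [coordRing_eq_etaleClosure_comp_rename (fun _ => Finset.mem_of_mem_erase)]
  simp only [coordRing, valRing_top] at hf ⊢
  have hinj : Function.Injective (Subtype.map id fun _ => Finset.mem_of_mem_erase :
      ↥(T.erase i) → T) := Subtype.map_injective _ Function.injective_id
  obtain ⟨a, ha, w, hw, h⟩ := exists_sub_eq_mul (z := MvPolynomial.X ⟨i, hi⟩)
    (ε := (MvPolynomial.killCompl (R := K) hinj).toRingHom)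
    (congrArg AlgHom.toRingHom (MvPolynomial.killCompl_comp_rename hinj))
    (fun p hp => X_dvd_of_killCompl_eq_zero hinj
      (fun t ht => Subtype.ext (notMem_range_map_id_erase.1 ht)) hp)
    (fun p => (hx.aeval_mem p).1) (by simpa using hm) hf
  exact ⟨a, ha, w, hw, by simpa [sub_eq_iff_eq_add'] using h⟩

variable [CharZero K]

theorem eq_zero_of_eq_mul (hx : IsCoordSystem 𝒪 L x D) (hi : i ∈ T)
    (hm : 𝒪.valuation (x i) < 1) {a w : M}
    (ha : a ∈ coordRing 𝒪 (⊤ : IntermediateField K M) x (T.erase i))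
    (hw : w ∈ coordRing 𝒪 (⊤ : IntermediateField K M) x T) (h : a = x i * w) : a = 0 := by
  rw [coordRing_eq_etaleClosure_comp_rename (fun _ => Finset.mem_of_mem_erase)] at ha
  simp only [coordRing, valRing_top] at ha hw
  have hinj : Function.Injective (Subtype.map id fun _ => Finset.mem_of_mem_erase :
      ↥(T.erase i) → T) := Subtype.map_injective _ Function.injective_id
  exact LocalUniformization.eq_zero_of_eq_mul (z := MvPolynomial.X ⟨i, hi⟩)
    (ε := (MvPolynomial.killCompl (R := K) hinj).toRingHom) hx.injective
    (congrArg AlgHom.toRingHom (MvPolynomial.killCompl_comp_rename hinj))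
    (killCompl_X_eq_zero hinj (notMem_range_map_id_erase.2 rfl))
    (fun p hp => X_dvd_of_killCompl_eq_zero hinj
      (fun t ht => Subtype.ext (notMem_range_map_id_erase.1 ht)) hp)
    (fun p => (hx.aeval_mem p).1) (by simpa using hm) ha hw (by simpa using h)

theorem exists_eq_mul_of_mul_eq_mul (hx : IsCoordSystem 𝒪 L x D) (hi : i ∈ T)
    (hm : 𝒪.valuation (x i) < 1) {a b c : M} (ha : a ∈ coordRing 𝒪 L x T)
    (hb : b ∈ coordRing 𝒪 L x T) (hc : c ∈ coordRing 𝒪 L x T) (h : a * b = x i * c) :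
    (∃ a' ∈ coordRing 𝒪 L x T, a = x i * a') ∨ ∃ b' ∈ coordRing 𝒪 L x T, b = x i * b' := by
  have hle := coordRing_le_top (𝒪 := 𝒪) (L := L) (x := x) (T := T)
  have herase := (hx.of_le (L' := ⊤) le_top).coordRing_subset (T.erase_subset i)
  obtain ⟨a₀, ha₀, a₁, ha₁, haeq⟩ := hx.exists_eq_add_mul hi hm (hle ha)
  obtain ⟨b₀, hb₀, b₁, hb₁, hbeq⟩ := hx.exists_eq_add_mul hi hm (hle hb)
  have hab : a₀ * b₀ = 0 := hx.eq_zero_of_eq_mul hi hm (mul_mem ha₀ hb₀)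
    (w := c - a₁ * b₀ - a * b₁)
    (sub_mem (sub_mem (hle hc) (mul_mem ha₁ (herase hb₀))) (mul_mem (hle ha) hb₁))
    (by rw [mul_sub, mul_sub, ← h, haeq, hbeq]; ring)
  rcases mul_eq_zero.1 hab with h0 | h0
  · rw [h0, zero_add] at haeq
    exact .inl ⟨a₁, hx.mem_of_eq_mul ha (apply_mem_coordRing hi) (hx.ne_zero i) ha₁ haeq, haeq⟩
  · rw [h0, zero_add] at hbeq
    exact .inr ⟨b₁, hx.mem_of_eq_mul hb (apply_mem_coordRing hi) (hx.ne_zero i) hb₁ hbeq, hbeq⟩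

theorem exists_eq_mul_mon (hx : IsCoordSystem 𝒪 L x D) (hST : S ⊆ T)
    (hm : ∀ i ∈ S, 𝒪.valuation (x i) < 1) {α : σ → ℤ} (hα : ∀ i ∈ S, 0 ≤ α i) {a b c : M}
    (ha : a ∈ coordRing 𝒪 L x T) (hb : b ∈ coordRing 𝒪 L x T) (hc : c ∈ coordRing 𝒪 L x T)
    (hc1 : 𝒪.valuation c = 1) (h : a * b = c * mon x S α) :
    ∃ β : σ → ℤ, (∀ i ∈ S, 0 ≤ β i) ∧ ∃ ε ∈ coordRing 𝒪 L x T, 𝒪.valuation ε = 1 ∧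
      a = ε * mon x S β := by
  have hmon {β : σ → ℤ} {i : σ} (hi : i ∈ S) :
      mon x S (β + Pi.single i 1) = mon x S β * x i := by
    rw [mon_add (fun i _ => hx.ne_zero i), mon_single hi, zpow_one]
  obtain ⟨n, hn⟩ := Int.eq_ofNat_of_zero_le (Finset.sum_nonneg hα)
  induction n generalizing α a b with
  | zero =>
    have hα0 : mon x S α = 1 := mon_zero (x := x) (S := S) ▸
      mon_congr (fun _ _ => rfl) ((Finset.sum_eq_zero_iff_of_nonneg hα).1 hn)
    refine ⟨0, fun i _ => le_rfl, a, ha, (hx.valuation_le_one ha).antisymm ?_, ?_⟩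
    · rw [← hc1, ← mul_one c, ← hα0, ← h, map_mul]
      exact mul_le_of_le_one_right' (hx.valuation_le_one hb)
    · rw [mon_zero, mul_one]
  | succ n ih =>
    obtain ⟨i, hi, α', hα', hn', rfl⟩ := exists_eq_add_single hα hn
    rw [hmon hi, ← mul_assoc, mul_comm _ (x i)] at h
    have hcm : c * mon x S α' ∈ coordRing 𝒪 L x T :=
      mul_mem hc (mon_mem (fun k hk => apply_mem_coordRing (hST hk)) hα')
    rcases hx.exists_eq_mul_of_mul_eq_mul (hST hi) (hm i hi) ha hb hcm h with
      ⟨a', ha', rfl⟩ | ⟨b', hb', rfl⟩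
    · rw [mul_assoc] at h
      obtain ⟨β, hβ, ε, hε, hε1, rfl⟩ := ih hα' ha' hb
        (mul_left_cancel₀ (hx.ne_zero i) h) hn'
      refine ⟨β + Pi.single i 1, fun k hk => add_nonneg (hβ k hk) ?_, ε, hε, hε1, ?_⟩
      · exact (Pi.single_nonneg.2 zero_le_one : (0 : σ → ℤ) ≤ Pi.single i 1) k
      · rw [hmon hi]
        ring
    · rw [mul_left_comm] at h
      exact ih hα' ha hb' (mul_left_cancel₀ (hx.ne_zero i) h) hn'

end IsCoordSystem

end Divisors

section EtaleCoordinates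

variable {K E F M τ : Type*} [CommRing K] [CommRing E] [Algebra K E] [CommRing F] [Algebra K F]
  [CommRing M] [Algebra K M] {y : τ → E}

theorem map_derivation_of_etale_aeval (hy : (aeval y : MvPolynomial τ K →ₐ[K] E).toRingHom.Etale)
    (φ : E →ₐ[K] F) {d : Derivation K E E} {D : Derivation K F F}
    (h : ∀ s, φ (d (y s)) = D (φ (y s))) (e : E) : φ (d e) = D (φ e) := by
  let P := MvPolynomial τ K
  let : Algebra P E := (aeval y : P →ₐ[K] E).toAlgebra
  let : Algebra E F := φ.toAlgebra
  let : Algebra P F := (φ.comp (aeval y : P →ₐ[K] E)).toAlgebra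
  have : Algebra.Etale P E := hy
  have : IsScalarTower P E F := IsScalarTower.of_algebraMap_eq fun _ => rfl
  have : IsScalarTower K P E := IsScalarTower.of_algebraMap_eq' (aeval y).comp_algebraMap.symm
  have : IsScalarTower K E F := IsScalarTower.of_algebraMap_eq' φ.comp_algebraMap.symm
  have : IsScalarTower K P F := IsScalarTower.to₁₂₄ K P E F
  refine DFunLike.congr_fun (derivation_ext_of_formallyUnramified (P := P)
    (d₁ := (Algebra.linearMap E F).compDer d) (d₂ := D.compAlgebraMap E) fun p => ?_) e
  refine DFunLike.congr_fun (MvPolynomial.derivation_ext (D₁ :=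
    ((Algebra.linearMap E F).compDer d).compAlgebraMap P) (D₂ :=
      (D.compAlgebraMap E).compAlgebraMap P) fun s => ?_) p
  have hs : algebraMap P E (.X s) = y s := MvPolynomial.aeval_X y s
  change φ (d (algebraMap P E (.X s))) = D (φ (algebraMap P E (.X s)))
  rw [hs, h]

theorem exists_derivation_of_etale_aeval [DecidableEq τ]
    (hy : (aeval y : MvPolynomial τ K →ₐ[K] E).toRingHom.Etale) (t : τ) :
    ∃ d : Derivation K E E, ∀ s, d (y s) = if s = t then 1 else 0 := by
  let P := MvPolynomial τ K
  let : Algebra P E := (aeval y : P →ₐ[K] E).toAlgebra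
  have : Algebra.Etale P E := hy
  have : IsScalarTower K P E := IsScalarTower.of_algebraMap_eq' (aeval y).comp_algebraMap.symm
  obtain ⟨d, hd⟩ := exists_derivation_extension (k := K) (P := P) (E := E)
    ((Algebra.linearMap P E).compDer (MvPolynomial.pderiv t))
  refine ⟨d, fun s => ?_⟩
  have hs : algebraMap P E (.X s) = y s := MvPolynomial.aeval_X y s
  rw [← hs, hd]
  change algebraMap P E (MvPolynomial.pderiv t (.X s)) = _
  rw [MvPolynomial.pderiv_X, Pi.single_apply, apply_ite (algebraMap P E), map_one, map_zero]

theorem IsEtaleModel.update [Finite τ] [DecidableEq τ] {x : τ → M} {A : Subring M}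
    {φ : E →ₐ[K] M} (h : IsEtaleModel (aeval x : MvPolynomial τ K →ₐ[K] M).toRingHom A
      (aeval y : MvPolynomial τ K →ₐ[K] E).toRingHom φ.toRingHom) {t : τ} {w : E}
    {d : Derivation K E E} (hd : ∀ s, d (y s) = if s = t then 1 else 0) (hw : IsUnit (d w)) :
    IsEtaleModel (aeval (Function.update x t (φ w)) : MvPolynomial τ K →ₐ[K] M).toRingHom A
      (aeval (Function.update y t w) : MvPolynomial τ K →ₐ[K] E).toRingHom φ.toRingHom := by
  have hx : (fun s => φ (y s)) = x := funext fun s => by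
    simpa using RingHom.congr_fun h.comp_eq (.X s)
  refine ⟨etale_aeval_update h.etale d hd hw, ?_, h.mem⟩
  refine congrArg AlgHom.toRingHom (MvPolynomial.algHom_ext (f :=
    φ.comp (aeval (Function.update y t w))) fun s => ?_)
  rw [AlgHom.comp_apply, MvPolynomial.aeval_X, MvPolynomial.aeval_X, ← hx]
  exact Function.apply_update (fun _ => φ) y t w s

end EtaleCoordinates

section ChangeOfCoordinates

variable {K M : Type u} [Field K] [Field M] [Algebra K M]

section Aeval

variable {τ : Type} {x : τ → M} {A : Subring M} {E : Type u} [CommRing E] {φ : E →+* M}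

theorem IsEtaleModel.exists_eq_aeval {j : MvPolynomial τ K →+* E}
    (h : IsEtaleModel (aeval x : MvPolynomial τ K →ₐ[K] M).toRingHom A j φ) :
    ∃ (_ : Algebra K E) (y : τ → E) (φ' : E →ₐ[K] M),
      (aeval y : MvPolynomial τ K →ₐ[K] E).toRingHom = j ∧ φ'.toRingHom = φ :=
  let : Algebra K E := (j.comp MvPolynomial.C).toAlgebra
  ⟨_, fun s => j (.X s),
    { φ with commutes' := fun c =>
        (RingHom.congr_fun h.comp_eq (.C c)).trans (MvPolynomial.aeval_C x c) },
    MvPolynomial.ringHom_ext (fun c => MvPolynomial.aeval_C _ c) fun s => MvPolynomial.aeval_X _ s,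
    rfl⟩

theorem IsEtaleModel.exists_aeval_localization [Algebra K E] {y : τ → E} {φ : E →ₐ[K] M}
    (h : IsEtaleModel (aeval x : MvPolynomial τ K →ₐ[K] M).toRingHom A
      (aeval y : MvPolynomial τ K →ₐ[K] E).toRingHom φ.toRingHom) {e : E} {b : M} (hb : b ∈ A)
    (heb : φ e * b = 1) :
    ∃ (F : Type u) (_ : CommRing F) (_ : Algebra K F) (l : E →ₐ[K] F) (ψ : F →ₐ[K] M),
      IsEtaleModel (aeval x : MvPolynomial τ K →ₐ[K] M).toRingHom A
        (aeval fun s => l (y s) : MvPolynomial τ K →ₐ[K] F).toRingHom ψ.toRingHom ∧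
      ψ.comp l = φ ∧ IsUnit (l e) := by
  obtain ⟨F, _, l, ψ, hψ, hu⟩ := h.exists_localization hb heb
  let : Algebra K F := (l.comp (algebraMap K E)).toAlgebra
  let l' : E →ₐ[K] F := { l with commutes' := fun _ => rfl }
  let ψ' : F →ₐ[K] M := { ψ with
    commutes' := fun c => (RingHom.congr_fun hψ.comp_eq _).trans (φ.commutes c) }
  refine ⟨F, _, _, l', ψ', ?_, AlgHom.ext (RingHom.congr_fun hψ.comp_eq), hu⟩
  rw [← MvPolynomial.comp_aeval]
  exact hψ.trans h

theorem apply_mem_etaleClosure_update [Finite τ] [DecidableEq τ]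
    (hA : ∀ p, (aeval x : MvPolynomial τ K →ₐ[K] M).toRingHom p ∈ A)
    {t : τ} {D : Derivation K M M} (hD : ∀ s, D (x s) = if s = t then 1 else 0) {w : M}
    (hw : w ∈ etaleClosure (aeval x : MvPolynomial τ K →ₐ[K] M).toRingHom A) (hw0 : D w ≠ 0)
    (hDw : (D w)⁻¹ ∈ A) :
    x t ∈ etaleClosure
      (aeval (Function.update x t w) : MvPolynomial τ K →ₐ[K] M).toRingHom A := by
  obtain ⟨E, _, j, φ, hφ, e, rfl⟩ := (mem_etaleClosure_iff hA).1 hw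
  obtain ⟨_, y, φ, rfl, rfl⟩ := hφ.exists_eq_aeval
  have hφy (s : τ) : φ (y s) = x s := by simpa using RingHom.congr_fun hφ.comp_eq (.X s)
  obtain ⟨d, hd⟩ := exists_derivation_of_etale_aeval hφ.etale t
  have hφd (e : E) : φ (d e) = D (φ e) := map_derivation_of_etale_aeval hφ.etale φ
    (fun s => by rw [hφy, hd, hD, apply_ite φ, map_one, map_zero]) e
  obtain ⟨F, _, _, l, ψ, hψ, rfl, hu⟩ := hφ.exists_aeval_localization (e := d e) hDw
    ((hφd e).symm ▸ mul_inv_cancel₀ hw0)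
  obtain ⟨d', hd'⟩ := exists_derivation_of_etale_aeval hψ.etale t
  have hld : l (d e) = d' (l e) := map_derivation_of_etale_aeval hφ.etale l
    (fun s => by rw [hd, hd', apply_ite l, map_one, map_zero]) e
  have hmem := (hψ.update hd' (w := l e) (hld ▸ hu)).apply_mem (l (y t))
  exact hφy t ▸ hmem

end Aeval

variable {σ : Type} [DecidableEq σ] {𝒪 : ValuationSubring M} {L : IntermediateField K M}
  {x : σ → M} {D : σ → Derivation K M M} {T : Finset σ}

/-- The derivations dual to the coordinates in which `x j` is replaced by `w`. -/
noncomputable def updateDer (D : σ → Derivation K M M) (j : σ) (w : M) (k : σ) : Derivation K M M :=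
  if k = j then (D j w)⁻¹ • D j else D k - (D k w / D j w) • D j

namespace IsCoordSystem

theorem update (hx : IsCoordSystem 𝒪 L x D) {j : σ} {w : M} (hw : w ∈ valRing 𝒪 L)
    (h : D j w ≠ 0) : IsCoordSystem 𝒪 L (Function.update x j w) (updateDer D j w) := by
  refine ⟨hx.algebraMap_mem, fun i => ?_, fun i k => ?_⟩
  · rw [Function.update_apply]
    split_ifs
    exacts [hw, hx.mem i]
  · by_cases hij : i = j
    · subst hij
      by_cases hk : k = i
      · subst hk; simp [updateDer, h]
      · simp [updateDer, hk, hx.apply_eq, Ne.symm hk]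
    · by_cases hk : k = j
      · subst hk; simp [updateDer, h, hij]
      · simp [updateDer, hk, hx.apply_eq, hij, Ne.symm hk]

theorem update_mem (hx : IsCoordSystem 𝒪 L x D) {j : σ} (hj : j ∈ T) {w : M}
    (hw : w ∈ coordRing 𝒪 L x T) (h : 𝒪.valuation (D j w) = 1) :
    x j ∈ coordRing 𝒪 L (Function.update x j w) T := by
  have hDw := inv_mem_valRing (hx.coordRing_le (hx.apply_mem hw j)) h
  have hD : ∀ t : T, D j (x t) = if t = ⟨j, hj⟩ then 1 else 0 := fun t => by
    simp only [hx.apply_eq, Subtype.ext_iff, eq_comm]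
  have hmem := apply_mem_etaleClosure_update (x := fun t : T => x t) hx.aeval_mem hD hw
    (𝒪.valuation.ne_zero_iff.1 (h ▸ one_ne_zero)) hDw
  rwa [← Function.update_comp_eq_of_injective' x Subtype.val_injective] at hmem

theorem coordRing_update (hx : IsCoordSystem 𝒪 L x D) {j : σ} (hj : j ∈ T) {w : M}
    (hw : w ∈ coordRing 𝒪 L x T) (h : 𝒪.valuation (D j w) = 1) :
    coordRing 𝒪 L (Function.update x j w) T = coordRing 𝒪 L x T := by
  have hDw : D j w ≠ 0 := 𝒪.valuation.ne_zero_iff.1 (h ▸ one_ne_zero)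
  have hx' := hx.update (hx.coordRing_le hw) hDw
  refine le_antisymm (hx.coordRing_le_coordRing fun t ht => ?_)
    (hx'.coordRing_le_coordRing fun t ht => ?_)
  · rw [Function.update_apply]
    split_ifs
    exacts [hw, apply_mem_coordRing ht]
  · obtain rfl | htj := eq_or_ne t j
    · exact hx.update_mem hj hw h
    · rw [← Function.update_of_ne htj w x]
      exact apply_mem_coordRing ht

end IsCoordSystem

end ChangeOfCoordinates

section Perron

variable {X σ : Type*} [DecidableEq σ] {S : Finset σ} {Q : X → (σ → ℤ) → Prop}

-- Changing an entry equal to `m + 1`, or a negative one, brings it into `[0, m]`.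
theorem perron_step_bound (hnn : ∀ s a, (∀ i ∈ S, 0 ≤ a i) → Q s a)
    (hstep : ∀ s, ∀ i ∈ S, ∀ j ∈ S, i ≠ j → (∀ a, Q s a) ∨
      (∃ s', ∀ a, Q s' (a + Pi.single i (a j)) → Q s a) ∨
      ∃ s', ∀ a, Q s' (a + Pi.single j (a i)) → Q s a)
    {l m : ℕ} (hlm : l ≤ m + 1) (ih : ∀ s a, (∀ k ∈ S, -(l : ℤ) ≤ a k ∧ a k ≤ (m : ℤ)) → Q s a)
    (s : X) (a : σ → ℤ) (ha : ∀ k ∈ S, -(l : ℤ) ≤ a k ∧ a k ≤ (m : ℤ) + 1) : Q s a := by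
  let outside (a : σ → ℤ) : Finset σ := {k ∈ S | a k < 0 ∨ (m : ℤ) < a k}
  induction hn : (outside a).card using Nat.strong_induction_on generalizing s a with
  | _ n ihn =>
    subst hn
    have hadd {s' i j} (hi : i ∈ outside a) (h0 : 0 ≤ a i + a j) (hm : a i + a j ≤ m) :
        Q s' (a + Pi.single i (a j)) := by
      have hne {k} (hk : k ≠ i) : (a + Pi.single i (a j) : σ → ℤ) k = a k := by simp [hk]
      have hself : (a + Pi.single i (a j) : σ → ℤ) i = a i + a j := by simp
      refine ihn _ (Finset.card_lt_card ((Finset.ssubset_iff_of_subset fun k hk => ?_).2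
        ⟨i, hi, ?_⟩)) _ _ (fun k hk => ?_) rfl
      · obtain rfl | hki := eq_or_ne k i
        · exact hi
        · simpa only [outside, Finset.mem_filter, hne hki] using hk
      · simp only [outside, Finset.mem_filter, hself]
        omega
      · obtain rfl | hki := eq_or_ne k i
        · rw [hself]; omega
        · rw [hne hki]; exact ha k hk
    by_cases hi : ∃ i ∈ S, (m : ℤ) < a i
    swap
    · push Not at hi
      exact ih s a fun k hk => ⟨(ha k hk).1, hi k hk⟩
    by_cases hj : ∃ j ∈ S, a j < 0
    swap
    · push Not at hj
      exact hnn s a hj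
    obtain ⟨i, hi, him⟩ := hi
    obtain ⟨j, hj, hj0⟩ := hj
    have := ha i hi
    have := ha j hj
    rcases hstep s i hi j hj (by rintro rfl; omega) with hs | ⟨s', hs⟩ | ⟨s', hs⟩
    · exact hs a
    · exact hs a (hadd (Finset.mem_filter.2 ⟨hi, .inr him⟩) (by omega) (by omega))
    · exact hs a (hadd (Finset.mem_filter.2 ⟨hj, .inl hj0⟩) (by omega) (by omega))

-- Perron's algorithm: a vector of integers can be made one-signed by adding entries of opposite
-- sign to each other, even if an adversary chooses which one of the two entries is changed.
theorem perron_induction (hneg : ∀ s a, Q s (-a) → Q s a)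
    (hnn : ∀ s a, (∀ i ∈ S, 0 ≤ a i) → Q s a)
    (hstep : ∀ s, ∀ i ∈ S, ∀ j ∈ S, i ≠ j → (∀ a, Q s a) ∨
      (∃ s', ∀ a, Q s' (a + Pi.single i (a j)) → Q s a) ∨
      ∃ s', ∀ a, Q s' (a + Pi.single j (a i)) → Q s a) (s : X) (a : σ → ℤ) : Q s a := by
  suffices hbound : ∀ n l m : ℕ, l + m = n → ∀ s a,
      (∀ k ∈ S, -(l : ℤ) ≤ a k ∧ a k ≤ (m : ℤ)) → Q s a by
    refine hbound _ (∑ k ∈ S, (a k).natAbs) (∑ k ∈ S, (a k).natAbs) rfl s a fun k hk => ?_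
    have : (a k).natAbs ≤ ∑ k ∈ S, (a k).natAbs :=
      Finset.single_le_sum (f := fun k => (a k).natAbs) (fun _ _ => Nat.zero_le _) hk
    omega
  intro n
  induction n with
  | zero =>
    intro l m hlm s a ha
    exact hnn s a fun k hk => by have := ha k hk; omega
  | succ n ihn =>
    have hle (l m : ℕ) (hlm : l + m = n + 1) (h : l ≤ m) (s : X) (a : σ → ℤ)
        (ha : ∀ k ∈ S, -(l : ℤ) ≤ a k ∧ a k ≤ (m : ℤ)) : Q s a := by
      obtain ⟨m, rfl⟩ := Nat.exists_eq_succ_of_ne_zero (by omega : m ≠ 0)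
      exact perron_step_bound hnn hstep h (ihn l m (by omega)) s a (by simpa using ha)
    intro l m hlm s a ha
    obtain h | h := le_total l m
    · exact hle l m hlm h s a ha
    · refine hneg s a (hle m l (by omega) h s _ fun k hk => ?_)
      have := ha k hk
      simp only [Pi.neg_apply]
      omega

end Perron

section Toric

variable {M σ : Type*} [Field M] {x y z : σ → M} {S T : Finset σ} {e : (σ → ℤ) ≃+ (σ → ℤ)}

/-- A monomial change of the coordinates in `S` under which the old coordinates are monomials in
the new ones: `e` sends the exponents of a monomial in `x` to its exponents in `y`. -/
structure IsToric (S : Finset σ) (x y : σ → M) (e : (σ → ℤ) ≃+ (σ → ℤ)) : Prop where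
  mon_eq : ∀ a, mon x S a = mon y S (e a)
  nonneg : ∀ a, (∀ i ∈ S, 0 ≤ a i) → ∀ i ∈ S, 0 ≤ e a i
  apply_of_notMem : ∀ a, ∀ k ∉ S, e a k = a k
  eq_zero : ∀ a, (∀ i ∈ S, a i = 0) → ∀ i ∈ S, e a i = 0
  eq_of_notMem : ∀ k ∉ S, y k = x k

namespace IsToric

theorem refl (S : Finset σ) (x : σ → M) : IsToric S x x (AddEquiv.refl _) :=
  ⟨fun _ => rfl, fun _ h => h, fun _ _ _ => rfl, fun _ h => h, fun _ _ => rfl⟩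

theorem trans {e' : (σ → ℤ) ≃+ (σ → ℤ)} (h : IsToric S x y e) (h' : IsToric S y z e') :
    IsToric S x z (e.trans e') where
  mon_eq a := (h.mon_eq a).trans (h'.mon_eq _)
  nonneg a ha := h'.nonneg _ (h.nonneg a ha)
  apply_of_notMem a k hk := (h'.apply_of_notMem _ k hk).trans (h.apply_of_notMem a k hk)
  eq_zero a ha := h'.eq_zero _ (h.eq_zero a ha)
  eq_of_notMem k hk := (h'.eq_of_notMem k hk).trans (h.eq_of_notMem k hk)

theorem mono (hST : S ⊆ T) (h : IsToric S x y e) : IsToric T x y e where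
  mon_eq a := by
    classical
    rw [mon, mon, ← Finset.prod_sdiff hST, ← Finset.prod_sdiff hST]
    congr 1
    · refine Finset.prod_congr rfl fun k hk => ?_
      have hk := (Finset.mem_sdiff.1 hk).2
      rw [h.apply_of_notMem a k hk, h.eq_of_notMem k hk]
    · exact h.mon_eq a
  nonneg a ha k hk := by
    by_cases hkS : k ∈ S
    · exact h.nonneg a (fun i hi => ha i (hST hi)) k hkS
    · rw [h.apply_of_notMem a k hkS]; exact ha k hk
  apply_of_notMem a k hk := h.apply_of_notMem a k fun hkS => hk (hST hkS)
  eq_zero a ha k hk := by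
    by_cases hkS : k ∈ S
    · exact h.eq_zero a (fun i hi => ha i (hST hi)) k hkS
    · rw [h.apply_of_notMem a k hkS]; exact ha k hk
  eq_of_notMem k hk := h.eq_of_notMem k fun hkS => hk (hST hkS)

theorem congr (h : IsToric S x y e) {a b : σ → ℤ} (hab : ∀ i ∈ S, a i = b i) :
    ∀ i ∈ S, e a i = e b i := fun i hi => by
  have := h.eq_zero (a - b) (fun i hi => by simp [hab i hi]) i hi
  rwa [map_sub, Pi.sub_apply, sub_eq_zero] at this

theorem eq_zero_of_apply_eq_zero (h : IsToric S x y e) {a : σ → ℤ} (ha : ∀ i ∈ S, e a i = 0)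
    {i : σ} (hi : i ∈ S) : a i = 0 := by
  classical
  have hext : e (fun i => if i ∈ S then a i else 0) = 0 := by
    ext k
    by_cases hk : k ∈ S
    · rw [h.congr (b := a) (fun i hi => if_pos hi) k hk, ha k hk, Pi.zero_apply]
    · rw [h.apply_of_notMem _ k hk, if_neg hk, Pi.zero_apply]
  simpa [hi] using congrFun ((map_eq_zero_iff e e.injective).1 hext) i

theorem nonpos (h : IsToric S x y e) {a : σ → ℤ} (ha : ∀ i ∈ S, a i ≤ 0) :
    ∀ i ∈ S, e a i ≤ 0 := fun i hi => by
  have := h.nonneg (-a) (fun i hi => by simpa using ha i hi) i hi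
  rwa [map_neg, Pi.neg_apply, Int.neg_nonneg] at this

theorem apply_eq [DecidableEq σ] (h : IsToric S x y e) {i : σ} (hi : i ∈ S) :
    x i = mon y S (e (Pi.single i 1)) := by
  rw [← h.mon_eq, mon_single hi, zpow_one]

end IsToric

theorem IsToric.apply_mem {K M : Type u} [Field K] [Field M] [Algebra K M] {σ : Type}
    {𝒪 : ValuationSubring M} {L : IntermediateField K M} {x y : σ → M} {S T : Finset σ}
    {e : (σ → ℤ) ≃+ (σ → ℤ)} (h : IsToric S x y e) (hST : S ⊆ T) {i : σ} (hi : i ∈ T) :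
    x i ∈ coordRing 𝒪 L y T := by
  classical
  by_cases hiS : i ∈ S
  · rw [h.apply_eq hiS]
    exact mon_mem (fun k hk => apply_mem_coordRing (hST hk)) (h.nonneg _ fun k _ =>
      (Pi.single_nonneg.2 zero_le_one : (0 : σ → ℤ) ≤ Pi.single i 1) k)
  · rw [← h.eq_of_notMem i hiS]
    exact apply_mem_coordRing hi

/-- The automorphism of `σ → ℤ` describing the effect on exponents of replacing `x j` by
`x j / x i`. -/
def shear [DecidableEq σ] {i j : σ} (hij : i ≠ j) : (σ → ℤ) ≃+ (σ → ℤ) where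
  toFun a := a + Pi.single i (a j)
  invFun a := a - Pi.single i (a j)
  left_inv a := by simp [hij.symm]
  right_inv a := by simp [hij.symm]
  map_add' a b := by rw [Pi.add_apply, Pi.single_add, add_add_add_comm]

theorem shear_apply [DecidableEq σ] {i j : σ} (hij : i ≠ j) (a : σ → ℤ) :
    shear hij a = a + Pi.single i (a j) := rfl

theorem mon_update [DecidableEq σ] {j : σ} (hj : j ∈ S) (w : M) (a : σ → ℤ) :
    mon (Function.update x j w) S a * x j ^ a j = w ^ a j * mon x S a := by
  rw [mon, mon, ← Finset.mul_prod_erase S _ hj, ← Finset.mul_prod_erase S _ hj,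
    Function.update_self, Finset.prod_congr rfl fun k hk => by
      rw [Function.update_of_ne (Finset.ne_of_mem_erase hk)]]
  ring

theorem isToric_update_div [DecidableEq σ] (hx : ∀ k ∈ S, x k ≠ 0) {i j : σ} (hi : i ∈ S)
    (hj : j ∈ S) (hij : i ≠ j) :
    IsToric S x (Function.update x j (x j / x i)) (shear hij) where
  mon_eq a := by
    have hne : ∀ k ∈ S, Function.update x j (x j / x i) k ≠ 0 := fun k hk => by
      obtain rfl | hkj := eq_or_ne k j
      · simp [hx i hi, hx k hk]
      · simp [hkj, hx k hk]
    rw [shear_apply, mon_add hne, mon_single hi, Function.update_of_ne hij]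
    refine mul_right_cancel₀ (zpow_ne_zero (a j) (hx j hj)) ?_
    rw [mul_right_comm, mon_update hj, div_zpow, mul_right_comm,
      div_mul_cancel₀ _ (zpow_ne_zero _ (hx i hi)), mul_comm]
  nonneg a ha k hk := by
    obtain rfl | hki := eq_or_ne k i
    · simpa [shear_apply] using add_nonneg (ha k hk) (ha j hj)
    · simpa [shear_apply, hki] using ha k hk
  apply_of_notMem a k hk := by
    have : k ≠ i := fun h => hk (h ▸ hi)
    simp [shear_apply, this]
  eq_zero a ha k hk := by simp [shear_apply, ha k hk, ha j hj]
  eq_of_notMem k hk := Function.update_of_ne (fun h : k = j => hk (h ▸ hj)) _ _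

end Toric

section Block

variable {M σ : Type*} [Field M] {𝒪 : ValuationSubring M} {x y : σ → M} {S : Finset σ}
  {e : (σ → ℤ) ≃+ (σ → ℤ)}

/-- The values of the `x i`, `i ∈ S`, are positive and rationally independent. The valuation is
written multiplicatively, so that positive values are those smaller than `1`. -/
structure IsBlock (𝒪 : ValuationSubring M) (S : Finset σ) (x : σ → M) : Prop where
  lt_one : ∀ i ∈ S, 𝒪.valuation (x i) < 1
  eq_zero : ∀ a, 𝒪.valuation (mon x S a) = 1 → ∀ i ∈ S, a i = 0

theorem IsBlock.toric (hb : IsBlock 𝒪 S x) (h : IsToric S x y e)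
    (hy : ∀ i ∈ S, 𝒪.valuation (y i) < 1) : IsBlock 𝒪 S y := by
  refine ⟨hy, fun a ha => ?_⟩
  have hmon : mon x S (e.symm a) = mon y S a := by rw [h.mon_eq, e.apply_symm_apply]
  have := h.eq_zero _ (hb.eq_zero (e.symm a) (by rw [hmon, ha]))
  rwa [e.apply_symm_apply] at this

theorem IsBlock.valuation_ne (hb : IsBlock 𝒪 S x) (hx : ∀ i ∈ S, x i ≠ 0)
    {i j : σ} (hi : i ∈ S) (hj : j ∈ S) (hij : i ≠ j) :
    𝒪.valuation (x i) ≠ 𝒪.valuation (x j) := fun h => by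
  classical
  have := hb.eq_zero (Pi.single i 1 - Pi.single j 1) (by
    rw [mon_sub hx, mon_single hi, mon_single hj, map_div₀, zpow_one, zpow_one, h,
      div_self ((Valuation.ne_zero_iff _).2 (hx j hj))]) i hi
  simp [hij] at this

theorem valuation_mon_lt_one (hm : ∀ i ∈ S, 𝒪.valuation (x i) < 1) {a : σ → ℤ}
    (ha : ∀ i ∈ S, 0 ≤ a i) {i : σ} (hi : i ∈ S) (hai : a i ≠ 0) :
    𝒪.valuation (mon x S a) < 1 := by
  classical
  rw [mon, map_prod, ← Finset.mul_prod_erase S _ hi]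
  refine mul_lt_one_of_lt_of_le ?_ (Finset.prod_le_one' fun k hk => ?_)
  · obtain ⟨n, hn⟩ := Int.eq_ofNat_of_zero_le (ha i hi)
    have : n ≠ 0 := by rintro rfl; exact hai hn
    rw [hn, zpow_natCast, map_pow]
    exact pow_lt_one₀ zero_le (hm i hi) this
  · have hk := Finset.mem_of_mem_erase hk
    obtain ⟨n, hn⟩ := Int.eq_ofNat_of_zero_le (ha k hk)
    rw [hn, zpow_natCast, map_pow]
    exact pow_le_one₀ zero_le (hm k hk).le

end Block

section Blowup

variable {K M : Type u} [Field K] [Field M] [Algebra K M] {σ : Type} [DecidableEq σ]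
  {𝒪 : ValuationSubring M} {L : IntermediateField K M} {x : σ → M} {D : σ → Derivation K M M}
  {S : Finset σ}

namespace IsCoordSystem

theorem update_div (hx : IsCoordSystem 𝒪 L x D) {i j : σ} (hij : i ≠ j)
    (h : 𝒪.valuation (x j) ≤ 𝒪.valuation (x i)) :
    IsCoordSystem 𝒪 L (Function.update x j (x j / x i)) (updateDer D j (x j / x i)) := by
  have hle : 𝒪.valuation (x j / x i) ≤ 1 := by
    rw [map_div₀]
    exact div_le_one_of_le₀ h zero_le
  refine hx.update ⟨(𝒪.valuation_le_one_iff _).1 hle, L.div_mem (hx.mem j).2 (hx.mem i).2⟩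
    fun h0 => ?_
  have hD : D j (x j) = D j (x j / x i * x i) := by rw [div_mul_cancel₀ _ (hx.ne_zero i)]
  rw [Derivation.leibniz, hx.apply_eq, hx.apply_eq, if_pos rfl, if_neg hij.symm, h0, smul_zero,
    smul_zero, add_zero] at hD
  exact one_ne_zero hD

theorem exists_isToric_shear (hx : IsCoordSystem 𝒪 L x D)
    (hm : ∀ i ∈ S, 𝒪.valuation (x i) < 1) {i j : σ} (hi : i ∈ S) (hj : j ∈ S) (hij : i ≠ j)
    (h : 𝒪.valuation (x j) < 𝒪.valuation (x i)) :
    ∃ y D', IsCoordSystem 𝒪 L y D' ∧ (∀ k ∈ S, 𝒪.valuation (y k) < 1) ∧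
      IsToric S x y (shear hij) := by
  refine ⟨_, _, hx.update_div hij h.le, fun k hk => ?_,
    isToric_update_div (fun k _ => hx.ne_zero k) hi hj hij⟩
  obtain rfl | hkj := eq_or_ne k j
  · rw [Function.update_self, map_div₀]
    exact (div_lt_one₀ ((Valuation.pos_iff _).2 (hx.ne_zero i))).2 h
  · simpa [hkj] using hm k hk

theorem exists_isToric_nonneg_or_nonpos (hx : IsCoordSystem 𝒪 L x D)
    (hm : ∀ i ∈ S, 𝒪.valuation (x i) < 1) (a : σ → ℤ) :
    ∃ y D' e, IsCoordSystem 𝒪 L y D' ∧ IsToric S x y e ∧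
      (∀ i ∈ S, 𝒪.valuation (y i) < 1) ∧ ((∀ i ∈ S, 0 ≤ e a i) ∨ (∀ i ∈ S, e a i ≤ 0) ∨
        ∃ i ∈ S, ∃ j ∈ S, i ≠ j ∧ 𝒪.valuation (y i) = 𝒪.valuation (y j)) := by
  let X := {p : (σ → M) × (σ → Derivation K M M) //
    IsCoordSystem 𝒪 L p.1 p.2 ∧ ∀ i ∈ S, 𝒪.valuation (p.1 i) < 1}
  refine perron_induction (X := X) (S := S) (Q := fun s a => ∃ y D' e, IsCoordSystem 𝒪 L y D' ∧
    IsToric S s.1.1 y e ∧ (∀ i ∈ S, 𝒪.valuation (y i) < 1) ∧ ((∀ i ∈ S, 0 ≤ e a i) ∨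
      (∀ i ∈ S, e a i ≤ 0) ∨
        ∃ i ∈ S, ∃ j ∈ S, i ≠ j ∧ 𝒪.valuation (y i) = 𝒪.valuation (y j))) ?_ ?_ ?_
    ⟨(x, D), hx, hm⟩ a
  · rintro s a ⟨y, D', e, hy, he, hm, h⟩
    refine ⟨y, D', e, hy, he, hm, ?_⟩
    simp only [map_neg, Pi.neg_apply, Int.neg_nonneg, Left.neg_nonpos_iff] at h
    tauto
  · exact fun s a ha => ⟨_, _, _, s.2.1, .refl S _, s.2.2, .inl ha⟩
  · intro s i hi j hj hij
    rcases lt_trichotomy (𝒪.valuation (s.1.1 i)) (𝒪.valuation (s.1.1 j)) with h | h | h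
    · obtain ⟨y, D', hy, hym, hs⟩ := s.2.1.exists_isToric_shear s.2.2 hj hi hij.symm h
      exact .inr (.inr ⟨⟨(y, D'), hy, hym⟩, fun a ⟨z, D'', e, hz, he, h⟩ =>
        ⟨z, D'', _, hz, hs.trans he, h⟩⟩)
    · exact .inl fun a => ⟨_, _, _, s.2.1, .refl S _, s.2.2, .inr (.inr ⟨i, hi, j, hj, hij, h⟩)⟩
    · obtain ⟨y, D', hy, hym, hs⟩ := s.2.1.exists_isToric_shear s.2.2 hi hj hij h
      exact .inr (.inl ⟨⟨(y, D'), hy, hym⟩, fun a ⟨z, D'', e, hz, he, h⟩ =>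
        ⟨z, D'', _, hz, hs.trans he, h⟩⟩)

theorem exists_isToric_forall_nonneg_or_nonpos (hx : IsCoordSystem 𝒪 L x D) (hb : IsBlock 𝒪 S x)
    (B : Finset (σ → ℤ)) : ∃ y D' e, IsCoordSystem 𝒪 L y D' ∧ IsToric S x y e ∧ IsBlock 𝒪 S y ∧
      ∀ a ∈ B, (∀ i ∈ S, 0 ≤ e a i) ∨ ∀ i ∈ S, e a i ≤ 0 := by
  classical
  induction B using Finset.induction_on with
  | empty => exact ⟨x, D, _, hx, .refl S x, hb, by simp⟩
  | insert b B _ ih =>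
    obtain ⟨y, D', e, hy, he, hyb, hB⟩ := ih
    obtain ⟨z, D'', e', hz, he', hm, h⟩ := hy.exists_isToric_nonneg_or_nonpos hyb.lt_one (e b)
    have hzb := hyb.toric he' hm
    refine ⟨z, D'', _, hz, he.trans he', hzb, fun a ha => ?_⟩
    rcases Finset.mem_insert.1 ha with rfl | ha
    · rcases h with h | h | ⟨i, hi, j, hj, hij, h⟩
      · exact .inl h
      · exact .inr h
      · exact absurd h (hzb.valuation_ne (fun k _ => hz.ne_zero k) hi hj hij)
    · exact (hB a ha).imp (he'.nonneg _) he'.nonpos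

theorem exists_isToric_forall_le (hx : IsCoordSystem 𝒪 L x D) (hb : IsBlock 𝒪 S x)
    {ι : Type*} (I : Finset ι) (hI : I.Nonempty) (α : ι → σ → ℤ) :
    ∃ y D' e, IsCoordSystem 𝒪 L y D' ∧ IsToric S x y e ∧ IsBlock 𝒪 S y ∧
      ∃ k₀ ∈ I, ∀ k ∈ I, ∀ i ∈ S, e (α k₀) i ≤ e (α k) i := by
  classical
  obtain ⟨y, D', e, hy, he, hyb, h⟩ :=
    hx.exists_isToric_forall_nonneg_or_nonpos hb ((I ×ˢ I).image fun p => α p.1 - α p.2)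
  obtain ⟨k₀, hk₀, hmax⟩ := Finset.exists_max_image I (fun k => 𝒪.valuation (mon x S (α k))) hI
  refine ⟨y, D', e, hy, he, hyb, k₀, hk₀, fun k hk i hi => ?_⟩
  have hsub (k l : ι) (i : σ) : e (α k - α l) i = e (α k) i - e (α l) i := by
    rw [map_sub, Pi.sub_apply]
  rcases h (α k - α k₀) (Finset.mem_image.2 ⟨(k, k₀), Finset.mk_mem_product hk hk₀, rfl⟩) with
    h | h
  · exact sub_nonneg.1 (hsub k k₀ i ▸ h i hi)
  · by_contra! hlt
    have hval : 𝒪.valuation (mon y S (e (α k₀ - α k))) < 1 :=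
      valuation_mon_lt_one hyb.lt_one (fun i hi => by
        rw [hsub]
        exact sub_nonneg.2 (sub_nonpos.1 (hsub k k₀ i ▸ h i hi))) hi
        (by rw [hsub]; exact (sub_pos.2 hlt).ne')
    have hne : ∀ i ∈ S, x i ≠ 0 := fun i _ => hx.ne_zero i
    rw [← he.mon_eq, mon_sub hne, map_div₀, div_lt_one₀
      ((Valuation.pos_iff _).2 (mon_ne_zero hne _))] at hval
    exact (hmax k hk).not_gt hval

end IsCoordSystem

end Blowup

section Dependent

variable {M σ : Type*} [Field M] [DecidableEq σ] {𝒪 : ValuationSubring M} {x w : σ → M}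
  {S : Finset σ} {e : (σ → ℤ) ≃+ (σ → ℤ)}

theorem IsBlock.eq_zero_of_insert (hb : IsBlock 𝒪 S x) {z : σ} (hz : z ∉ S) {a : σ → ℤ}
    (haz : a z = 0) (ha : 𝒪.valuation (mon x (insert z S) a) = 1) : ∀ i ∈ insert z S, a i = 0 := by
  intro i hi
  rw [mon_insert hz, haz, zpow_zero, one_mul] at ha
  obtain rfl | hi := Finset.mem_insert.1 hi
  exacts [haz, hb.eq_zero a ha i hi]

-- The relations between the values of the `x i`, `i ∈ insert z S`, form a group of rank one. The
-- relation given by `w j` therefore has a multiple in common with every other one.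
theorem IsBlock.erase_of_isToric (hb : IsBlock 𝒪 S x) {z j : σ} (hz : z ∉ S)
    (hx : ∀ i ∈ insert z S, x i ≠ 0) (he : IsToric (insert z S) x w e) (hj : j ∈ insert z S)
    (hwj : 𝒪.valuation (w j) = 1) (hlt : ∀ k ∈ (insert z S).erase j, 𝒪.valuation (w k) < 1) :
    IsBlock 𝒪 ((insert z S).erase j) w := by
  refine ⟨hlt, fun r hr k hk => ?_⟩
  obtain ⟨hkj, hkS⟩ := Finset.mem_erase.1 hk
  have hmon (b : σ → ℤ) : mon x (insert z S) (e.symm b) = mon w (insert z S) b := by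
    rw [he.mon_eq, e.apply_symm_apply]
  set γ := e.symm (Pi.single j 1) with hγ
  have hvγ : 𝒪.valuation (mon x (insert z S) γ) = 1 := by
    rw [hmon, mon_single hj, zpow_one, hwj]
  have hγz : γ z ≠ 0 := fun hγz => by
    have := he.eq_zero γ (hb.eq_zero_of_insert hz hγz hvγ) j hj
    simp [hγ] at this
  set ρ := e.symm (Function.update r j 0) with hρ
  have hvρ : 𝒪.valuation (mon x (insert z S) ρ) = 1 := by
    rw [hmon, mon_erase hj, Function.update_self, zpow_zero, one_mul, ← hr]
    exact congrArg _ (mon_congr (fun _ _ => rfl) fun k hk =>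
      Function.update_of_ne (Finset.ne_of_mem_erase hk) _ _)
  have hrel : 𝒪.valuation (mon x (insert z S) (γ z • ρ - ρ z • γ)) = 1 := by
    rw [mon_sub hx, mon_zsmul, mon_zsmul, map_div₀, map_zpow₀, map_zpow₀, hvρ, hvγ, one_zpow,
      one_zpow, div_one]
  have hzero := he.eq_zero _ (hb.eq_zero_of_insert hz (by simp [mul_comm]) hrel) k hkS
  simp only [map_sub, map_zsmul, hρ, hγ, AddEquiv.apply_symm_apply, Pi.sub_apply, Pi.smul_apply,
    Pi.single_eq_of_ne hkj, smul_eq_mul, mul_zero, sub_zero, Function.update_of_ne hkj] at hzero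
  exact (mul_eq_zero.1 hzero).resolve_left hγz

end Dependent

section DependentCoordinates

variable {K M : Type u} [Field K] [Field M] [Algebra K M] {σ : Type} [DecidableEq σ]
  {𝒪 : ValuationSubring M} {L : IntermediateField K M} {x : σ → M} {D : σ → Derivation K M M}
  {S : Finset σ}

namespace IsCoordSystem

theorem exists_isToric_valuation_eq (hx : IsCoordSystem 𝒪 L x D)
    (hm : ∀ i ∈ S, 𝒪.valuation (x i) < 1) (hS : ¬ IsBlock 𝒪 S x) :
    ∃ y D' e, IsCoordSystem 𝒪 L y D' ∧ IsToric S x y e ∧ (∀ i ∈ S, 𝒪.valuation (y i) < 1) ∧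
      ∃ i ∈ S, ∃ j ∈ S, i ≠ j ∧ 𝒪.valuation (y i) = 𝒪.valuation (y j) := by
  obtain ⟨a, ha, i₀, hi₀, hai₀⟩ : ∃ a, 𝒪.valuation (mon x S a) = 1 ∧ ∃ i ∈ S, a i ≠ 0 := by
    by_contra! h
    exact hS ⟨hm, h⟩
  obtain ⟨y, D', e, hy, he, hmy, hsign⟩ := hx.exists_isToric_nonneg_or_nonpos hm a
  obtain ⟨i, hi, hai⟩ : ∃ i ∈ S, e a i ≠ 0 := by
    by_contra! h
    exact hai₀ (he.eq_zero_of_apply_eq_zero h hi₀)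
  rw [he.mon_eq] at ha
  refine ⟨y, D', e, hy, he, hmy, ?_⟩
  obtain hnonneg | hnonpos | heq := hsign
  · exact absurd ha (valuation_mon_lt_one hmy hnonneg hi hai).ne
  · have hlt := valuation_mon_lt_one hmy (a := -e a) (fun i hi => neg_nonneg.2 (hnonpos i hi)) hi
      (neg_ne_zero.2 hai)
    rw [mon_neg, map_inv₀, ha, inv_one] at hlt
    exact absurd hlt (lt_irrefl _)
  · exact heq

theorem exists_isToric_valuation_eq_one (hx : IsCoordSystem 𝒪 L x D)
    (hm : ∀ i ∈ S, 𝒪.valuation (x i) < 1) (hS : ¬ IsBlock 𝒪 S x) :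
    ∃ y D' e, IsCoordSystem 𝒪 L y D' ∧ IsToric S x y e ∧
      ∃ j ∈ S, 𝒪.valuation (y j) = 1 ∧ ∀ k ∈ S.erase j, 𝒪.valuation (y k) < 1 := by
  obtain ⟨y, D', e, hy, he, hmy, i, hi, j, hj, hij, hv⟩ := hx.exists_isToric_valuation_eq hm hS
  refine ⟨_, _, _, hy.update_div hij hv.ge,
    he.trans (isToric_update_div (fun k _ => hy.ne_zero k) hi hj hij), j, hj, ?_, fun k hk => ?_⟩
  · rw [Function.update_self, map_div₀, hv]
    exact div_self ((Valuation.ne_zero_iff _).2 (hy.ne_zero j))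
  · obtain ⟨hkj, hk⟩ := Finset.mem_erase.1 hk
    rw [Function.update_of_ne hkj]
    exact hmy k hk

-- A coordinate whose value depends on a block can be traded for a unit.
theorem exists_block_of_dependent (hx : IsCoordSystem 𝒪 L x D) (hb : IsBlock 𝒪 S x) {z : σ}
    (hz : z ∉ S) (hxz : 𝒪.valuation (x z) < 1) (hbz : ¬ IsBlock 𝒪 (insert z S) x) :
    ∃ y D' e, IsCoordSystem 𝒪 L y D' ∧ IsToric (insert z S) x y e ∧ ∃ j ∈ insert z S,
      𝒪.valuation (y j) = 1 ∧ IsBlock 𝒪 ((insert z S).erase j) y := by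
  obtain ⟨y, D', e, hy, he, j, hj, hyj, hlt⟩ := hx.exists_isToric_valuation_eq_one
    (Finset.forall_mem_insert _ _ _ |>.2 ⟨hxz, hb.lt_one⟩) hbz
  exact ⟨y, D', e, hy, he, j, hj, hyj,
    hb.erase_of_isToric hz (fun i _ => hx.ne_zero i) he hj hyj hlt⟩

end IsCoordSystem

end DependentCoordinates

section Monomialization

variable {K M : Type u} [Field K] [Field M] [Algebra K M] {σ : Type} {𝒪 : ValuationSubring M}
  {L : IntermediateField K M} {x y : σ → M} {D : σ → Derivation K M M} {S T : Finset σ} {f g : M}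

/-- `f` is a monomial in the coordinates in `S`, up to a unit of the coordinate ring. -/
def IsMonomial (𝒪 : ValuationSubring M) (L : IntermediateField K M) (T S : Finset σ) (x : σ → M)
    (f : M) : Prop :=
  ∃ α : σ → ℤ, (∀ i ∈ S, 0 ≤ α i) ∧ ∃ ε ∈ coordRing 𝒪 L x T, 𝒪.valuation ε = 1 ∧
    f = ε * mon x S α

theorem IsMonomial.mul_mon (hx : ∀ i ∈ S, x i ≠ 0) (h : IsMonomial 𝒪 L T S x f) {β : σ → ℤ}
    (hβ : ∀ i ∈ S, 0 ≤ β i) : IsMonomial 𝒪 L T S x (f * mon x S β) := by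
  obtain ⟨α, hα, ε, hε, hvε, rfl⟩ := h
  exact ⟨α + β, fun i hi => add_nonneg (hα i hi) (hβ i hi), ε, hε, hvε,
    by rw [mon_add hx, mul_assoc]⟩

variable [DecidableEq σ]

/-- After a change of the coordinates in `T` that enlarges the coordinate ring, `f` becomes a
monomial in a block, up to a unit. -/
def IsMonomializable (𝒪 : ValuationSubring M) (L : IntermediateField K M) (T : Finset σ) (x : σ → M)
    (f : M) : Prop :=
  ∃ y D', IsCoordSystem 𝒪 L y D' ∧ (∀ i ∉ T, y i = x i) ∧ (∀ i ∈ T, x i ∈ coordRing 𝒪 L y T) ∧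
    ∃ S ⊆ T, IsBlock 𝒪 S y ∧ IsMonomial 𝒪 L T S y f

theorem IsMonomial.of_subset (hx : IsCoordSystem 𝒪 L x D) {T' : Finset σ} (hT : T ⊆ T')
    (h : IsMonomial 𝒪 L T S x f) : IsMonomial 𝒪 L T' S x f := by
  obtain ⟨α, hα, ε, hε, hvε, hf⟩ := h
  exact ⟨α, hα, ε, hx.coordRing_subset hT hε, hvε, hf⟩

theorem IsMonomial.isMonomializable (hx : IsCoordSystem 𝒪 L x D) (hST : S ⊆ T)
    (hb : IsBlock 𝒪 S x) (h : IsMonomial 𝒪 L T S x f) : IsMonomializable 𝒪 L T x f :=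
  ⟨x, D, hx, fun _ _ => rfl, fun _ hi => apply_mem_coordRing hi, S, hST, hb, h⟩

namespace IsMonomializable

theorem of_change (hxy : ∀ i ∉ T, y i = x i) (hx : ∀ i ∈ T, x i ∈ coordRing 𝒪 L y T)
    (h : IsMonomializable 𝒪 L T y f) : IsMonomializable 𝒪 L T x f := by
  obtain ⟨z, D', hz, hzy, hyz, hf⟩ := h
  exact ⟨z, D', hz, fun i hi => (hzy i hi).trans (hxy i hi),
    fun i hi => hz.coordRing_le_coordRing hyz (hx i hi), hf⟩

theorem unit_mul {c : M} (hc : c ∈ coordRing 𝒪 L x T) (hvc : 𝒪.valuation c = 1)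
    (h : IsMonomializable 𝒪 L T x f) : IsMonomializable 𝒪 L T x (c * f) := by
  obtain ⟨z, D', hz, hzx, hxz, S, hS, hb, α, hα, ε, hε, hvε, rfl⟩ := h
  exact ⟨z, D', hz, hzx, hxz, S, hS, hb, α, hα, c * ε,
    mul_mem (hz.coordRing_le_coordRing hxz hc) hε, by rw [map_mul, hvc, hvε, one_mul],
    (mul_assoc _ _ _).symm⟩

theorem of_mul [CharZero K] [IsAlgClosed M] (hf : f ∈ coordRing 𝒪 L x T)
    (hg : g ∈ coordRing 𝒪 L x T) (h : IsMonomializable 𝒪 L T x (f * g)) :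
    IsMonomializable 𝒪 L T x f := by
  obtain ⟨z, D', hz, hzx, hxz, S, hS, hb, α, hα, ε, hε, hvε, heq⟩ := h
  have hle := hz.coordRing_le_coordRing hxz
  exact ⟨z, D', hz, hzx, hxz, S, hS, hb,
    hz.exists_eq_mul_mon hS hb.lt_one hα (hle hf) (hle hg) hε hvε heq⟩

theorem of_erase {i : σ} (h : IsMonomializable 𝒪 L (T.erase i) x f) :
    IsMonomializable 𝒪 L T x f := by
  obtain ⟨z, D', hz, hzx, hxz, S, hS, hb, hfS⟩ := h
  have hsub := T.erase_subset i
  refine ⟨z, D', hz, fun k hk => hzx k fun h => hk (hsub h), fun k hk => ?_, S, hS.trans hsub, hb,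
    hfS.of_subset hz hsub⟩
  obtain rfl | hki := eq_or_ne k i
  · rw [← hzx k (Finset.notMem_erase k T)]
    exact apply_mem_coordRing hk
  · exact hz.coordRing_subset hsub (hxz k (Finset.mem_erase.2 ⟨hki, hk⟩))

end IsMonomializable

end Monomialization

section Valuation

variable {M : Type*} [Field M] {𝒪 : ValuationSubring M}

theorem valuation_natCast_eq_one {K : Type*} [Field K] [CharZero K] [Algebra K M]
    (hK : ∀ c : K, algebraMap K M c ∈ 𝒪) {n : ℕ} (hn : n ≠ 0) : 𝒪.valuation (n : M) = 1 := by
  have hn' : (n : K) ≠ 0 := Nat.cast_ne_zero.2 hn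
  have hle := (𝒪.valuation_le_one_iff _).2 (hK n)
  have hinv := (𝒪.valuation_le_one_iff _).2 (hK (n : K)⁻¹)
  have hpos : 0 < 𝒪.valuation (algebraMap K M n) := (Valuation.pos_iff _).2 ((map_ne_zero _).2 hn')
  rw [map_inv₀, map_inv₀] at hinv
  simpa using hle.antisymm ((inv_le_one₀ hpos).1 hinv)

theorem valuation_intCast_le_one (n : ℤ) : 𝒪.valuation (n : M) ≤ 1 :=
  (𝒪.valuation_le_one_iff _).2 (intCast_mem 𝒪.toSubring n)

theorem valuation_intCast_eq_one {K : Type*} [Field K] [CharZero K] [Algebra K M]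
    (hK : ∀ c : K, algebraMap K M c ∈ 𝒪) {n : ℤ} (hn : n ≠ 0) : 𝒪.valuation (n : M) = 1 := by
  obtain h | h := Int.natAbs_eq n
  · rw [h, Int.cast_natCast, valuation_natCast_eq_one hK (Int.natAbs_ne_zero.2 hn)]
  · rw [h, Int.cast_neg, Valuation.map_neg, Int.cast_natCast,
      valuation_natCast_eq_one hK (Int.natAbs_ne_zero.2 hn)]

theorem valuation_mul_lt_one {R : Subring M} (hR : ∀ a ∈ R, 𝒪.valuation a ≤ 1) {a b : M}
    (ha : 𝒪.valuation a < 1) (hb : b ∈ R) : 𝒪.valuation (a * b) < 1 := by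
  rw [map_mul]
  exact mul_lt_one_of_lt_of_le ha (hR b hb)

end Valuation

section IteratedDerivation

variable {K M : Type*} [Field K] [Field M] [Algebra K M] {R : Subring M} {D : Derivation K M M}
  {z : M}

theorem iterate_derivation_mem (hD : ∀ a ∈ R, D a ∈ R) (n : ℕ) {a : M} (ha : a ∈ R) :
    D^[n] a ∈ R :=
  Set.MapsTo.iterate (s := (R : Set M)) hD n ha

theorem iterate_derivation_mul {a : M} (ha : D a = 0) (b : M) (n : ℕ) :
    D^[n] (a * b) = a * D^[n] b := by
  induction n with
  | zero => rfl
  | succ n ih =>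
    rw [Function.iterate_succ_apply', ih, Function.iterate_succ_apply', Derivation.leibniz, ha,
      smul_zero, add_zero, smul_eq_mul]

theorem iterate_derivation_sum {ι : Type*} (s : Finset ι) (b : ι → M) (n : ℕ) :
    D^[n] (∑ k ∈ s, b k) = ∑ k ∈ s, D^[n] (b k) := by
  have hpow (a : M) : D^[n] a = ((D : M →ₗ[K] M) ^ n) a := by rw [Module.End.pow_apply]; rfl
  simp only [hpow, map_sum]

theorem exists_iterate_derivation_eq (hD : ∀ a ∈ R, D a ∈ R) (hz : z ∈ R) {F : M} (hF : F ∈ R)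
    (m k : ℕ) : ∃ G ∈ R, D^[k] (F * z ^ (m + k)) =
      (m + k).descFactorial k * D z ^ k * F * z ^ m + z ^ (m + 1) * G := by
  induction k generalizing m with
  | zero => exact ⟨0, R.zero_mem, by simp⟩
  | succ k ih =>
    obtain ⟨G, hG, h⟩ := ih (m + 1)
    have hDz := hD z hz
    have hDF := hD _ (R.mul_mem (R.pow_mem hDz k) hF)
    have hm : ((m : M) + 2) ∈ R := by exact_mod_cast natCast_mem R (m + 2)
    refine ⟨(m + 1 + k).descFactorial k * D (D z ^ k * F) + (m + 2) * D z * G + z * D G,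
      R.add_mem (R.add_mem (R.mul_mem (natCast_mem R _) hDF)
        (R.mul_mem (R.mul_mem hm hDz) hG)) (R.mul_mem hz (hD G hG)), ?_⟩
    rw [Function.iterate_succ_apply', show m + (k + 1) = m + 1 + k by ring, h, mul_assoc _ _ F,
      mul_assoc]
    simp only [map_add, Derivation.leibniz, Derivation.leibniz_pow, Derivation.map_natCast,
      smul_eq_mul, nsmul_eq_mul, Nat.descFactorial_succ]
    rw [show m + 1 + k - k = m + 1 by omega]
    push_cast
    ring

theorem exists_iterate_derivation_mul_pow_self (hD : ∀ a ∈ R, D a ∈ R) (hz : z ∈ R) {F : M}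
    (hF : F ∈ R) (i : ℕ) :
    ∃ G ∈ R, D^[i] (F * z ^ i) = i.factorial * D z ^ i * F + z * G := by
  simpa [Nat.descFactorial_self] using exists_iterate_derivation_eq hD hz hF 0 i

theorem exists_iterate_derivation_mul_pow_succ (hD : ∀ a ∈ R, D a ∈ R) (hz : z ∈ R) {F : M}
    (hF : F ∈ R) (i : ℕ) : ∃ G ∈ R, D^[i] (F * z ^ (i + 1)) =
      z * ((i + 1).factorial * D z ^ i * F + z * G) := by
  obtain ⟨G, hG, h⟩ := exists_iterate_derivation_eq hD hz hF 1 i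
  have hfac : (1 + i).descFactorial i = (i + 1).factorial := by
    rw [add_comm, ← Nat.descFactorial_self (i + 1), Nat.descFactorial_succ,
      Nat.add_sub_cancel_left, one_mul]
  refine ⟨G, hG, ?_⟩
  rw [add_comm i 1, h, hfac, add_comm i 1]
  ring

end IteratedDerivation

section Tschirnhausen

variable {K M : Type*} [Field K] [Field M] [Algebra K M] {𝒪 : ValuationSubring M}
  {R R₀ : Subring M} {D : Derivation K M M} {z f w : M} {a : ℕ → M} {m n : ℕ}

theorem exists_expansion (he : ∀ f ∈ R, ∃ a ∈ R₀, ∃ w ∈ R, f = a + z * w) (hf : f ∈ R) (m : ℕ) :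
    ∃ a : ℕ → M, (∀ k, a k ∈ R₀) ∧ ∃ w ∈ R, f = ∑ k ∈ Finset.range m, a k * z ^ k + w * z ^ m := by
  induction m with
  | zero => exact ⟨0, fun _ => R₀.zero_mem, f, hf, by simp⟩
  | succ m ih =>
    obtain ⟨a, ha, w, hw, h⟩ := ih
    obtain ⟨b, hb, w', hw', h'⟩ := he w hw
    refine ⟨Function.update a m b, fun k => ?_, w', hw', ?_⟩
    · obtain rfl | hk := eq_or_ne k m
      · simpa using hb
      · simpa [hk] using ha k
    · have hsum : ∑ k ∈ Finset.range m, Function.update a m b k * z ^ k =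
          ∑ k ∈ Finset.range m, a k * z ^ k := Finset.sum_congr rfl fun k hk => by
        rw [Function.update_of_ne (Finset.mem_range.1 hk).ne]
      rw [h, Finset.sum_range_succ, Function.update_self, h', hsum]
      ring

theorem iterate_derivation_expansion (hDa : ∀ k, D (a k) = 0)
    (h : f = ∑ k ∈ Finset.range m, a k * z ^ k + w * z ^ m) (i : ℕ) :
    D^[i] f = ∑ k ∈ Finset.range m, a k * D^[i] (z ^ k) + D^[i] (w * z ^ m) := by
  rw [h, iterate_map_add, iterate_derivation_sum]
  simp only [iterate_derivation_mul (hDa _)]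

variable (hR : ∀ a ∈ R, 𝒪.valuation a ≤ 1) (hD : ∀ a ∈ R, D a ∈ R) (hz : z ∈ R)
  (hvz : 𝒪.valuation z < 1)

include hR hD hz hvz

theorem valuation_iterate_derivation_mul_pow_lt_one {F : M} (hF : F ∈ R) {i : ℕ} (him : i < m) :
    𝒪.valuation (D^[i] (F * z ^ m)) < 1 := by
  obtain ⟨k, rfl⟩ : ∃ k, m = k + 1 + i := ⟨m - i - 1, by omega⟩
  obtain ⟨G, hG, h⟩ := exists_iterate_derivation_eq hD hz hF (k + 1) i
  have hfactor : D^[i] (F * z ^ (k + 1 + i)) =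
      z * ((k + 1 + i).descFactorial i * D z ^ i * F * z ^ k + z ^ (k + 1) * G) := by
    rw [h]
    ring
  rw [hfactor]
  exact valuation_mul_lt_one hR hvz (R.add_mem (R.mul_mem (R.mul_mem (R.mul_mem (natCast_mem R _)
    (R.pow_mem (hD z hz) _)) hF) (R.pow_mem hz _)) (R.mul_mem (R.pow_mem hz _) hG))

theorem valuation_coeff_lt_one [CharZero K] (hK : ∀ c : K, algebraMap K M c ∈ 𝒪)
    (hDz : 𝒪.valuation (D z) = 1) (ha : ∀ k, a k ∈ R) (hDa : ∀ k, D (a k) = 0) (hw : w ∈ R)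
    (h : f = ∑ k ∈ Finset.range m, a k * z ^ k + w * z ^ m)
    (hlt : ∀ i < m, 𝒪.valuation (D^[i] f) < 1) : ∀ i < m, 𝒪.valuation (a i) < 1 := by
  intro i
  induction i using Nat.strong_induction_on with
  | _ i ih =>
    intro hi
    have hrest : 𝒪.valuation
        (∑ k ∈ (Finset.range m).erase i, a k * D^[i] (z ^ k)) < 1 := by
      refine Valuation.map_sum_lt _ one_ne_zero fun k hk => ?_
      obtain ⟨hki, hk⟩ := Finset.mem_erase.1 hk
      rcases lt_or_gt_of_ne hki with hki | hki
      · exact valuation_mul_lt_one hR (ih k hki (Finset.mem_range.1 hk))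
          (iterate_derivation_mem hD i (R.pow_mem hz _))
      · have := valuation_iterate_derivation_mul_pow_lt_one hR hD hz hvz R.one_mem hki
        rw [one_mul] at this
        rw [mul_comm]
        exact valuation_mul_lt_one hR this (ha k)
    have htail := valuation_iterate_derivation_mul_pow_lt_one hR hD hz hvz hw hi
    obtain ⟨G, hG, hdiag⟩ := exists_iterate_derivation_mul_pow_self hD hz (ha i) i
    have hf := iterate_derivation_expansion hDa h i
    rw [← Finset.add_sum_erase _ _ (Finset.mem_range.2 hi), ← iterate_derivation_mul (hDa i),
      hdiag] at hf
    have hlead : 𝒪.valuation ((i.factorial : M) * D z ^ i * a i) < 1 := by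
      convert Valuation.map_sub_lt _ (Valuation.map_sub_lt _ (Valuation.map_sub_lt _ (hlt i hi)
        htail) hrest) (valuation_mul_lt_one hR hvz hG) using 2
      linear_combination -hf
    rwa [map_mul, map_mul, map_pow, hDz, one_pow, mul_one,
      valuation_natCast_eq_one hK i.factorial_ne_zero, one_mul] at hlead

theorem valuation_iterate_derivation_sub_lt_one (ha : ∀ k < m, 𝒪.valuation (a k) < 1)
    (hDa : ∀ k, D (a k) = 0) (hw : w ∈ R)
    (h : f = ∑ k ∈ Finset.range m, a k * z ^ k + w * z ^ m) :
    𝒪.valuation (D^[m] f - m.factorial * D z ^ m * w) < 1 := by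
  obtain ⟨G, hG, hdiag⟩ := exists_iterate_derivation_mul_pow_self hD hz hw m
  have hsum : 𝒪.valuation (∑ k ∈ Finset.range m, a k * D^[m] (z ^ k)) < 1 :=
    Valuation.map_sum_lt _ one_ne_zero fun k hk =>
      valuation_mul_lt_one hR (ha k (Finset.mem_range.1 hk))
        (iterate_derivation_mem hD _ (R.pow_mem hz _))
  convert Valuation.map_add_lt _ hsum (valuation_mul_lt_one hR hvz hG) using 2
  rw [iterate_derivation_expansion hDa h, hdiag]
  ring

-- Since `D^[n] f = z`, applying `D^[n]` to the expansion of `f` yields a linear equation for the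
-- coefficient of `z ^ n`.
theorem exists_mul_coeff_eq [CharZero K] (hK : ∀ c : K, algebraMap K M c ∈ 𝒪)
    (hinv : ∀ a ∈ R, 𝒪.valuation a = 1 → a⁻¹ ∈ R)
    (hDz : 𝒪.valuation (D z) = 1) (ha : ∀ k < n + 1, 𝒪.valuation (a k) < 1)
    (hDa : ∀ k, D (a k) = 0) (hw : w ∈ R)
    (h : f = ∑ k ∈ Finset.range (n + 1), a k * z ^ k + w * z ^ (n + 1)) (hfz : D^[n] f = z) :
    ∃ U ∈ R, 𝒪.valuation U = 1 ∧ ∃ μ ∈ R, 𝒪.valuation μ < 1 ∧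
      U * a n = z * μ - ∑ k ∈ Finset.range n, a k * D^[n] (z ^ k) := by
  have hDzR := hD z hz
  obtain ⟨G, hG, hGeq⟩ := exists_iterate_derivation_mul_pow_self hD hz R.one_mem n
  obtain ⟨G', hG', hGeq'⟩ := exists_iterate_derivation_mul_pow_succ hD hz hw n
  have hDn : (n.factorial : M) * D z ^ n ∈ R := R.mul_mem (natCast_mem R _) (R.pow_mem hDzR _)
  refine ⟨n.factorial * D z ^ n + z * G, R.add_mem hDn (R.mul_mem hz hG), ?_,
    1 - (n + 1).factorial * D z ^ n * w - z * G', R.sub_mem (R.sub_mem R.one_mem (R.mul_mem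
      (R.mul_mem (natCast_mem R _) (R.pow_mem hDzR _)) hw)) (R.mul_mem hz hG'), ?_, ?_⟩
  · have hlead : 𝒪.valuation ((n.factorial : M) * D z ^ n) = 1 := by
      rw [map_mul, map_pow, hDz, one_pow, mul_one,
        valuation_natCast_eq_one hK n.factorial_ne_zero]
    refine valuation_eq_one_of_sub_lt_one hlead ?_
    rw [sub_add_cancel_left, Valuation.map_neg]
    exact valuation_mul_lt_one hR hvz hG
  · have hDz0 : D z ≠ 0 := (Valuation.ne_zero_iff 𝒪.valuation).1 (hDz ▸ one_ne_zero)
    have hsub := valuation_iterate_derivation_sub_lt_one hR hD hz hvz ha hDa hw h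
    rw [Function.iterate_succ_apply', hfz] at hsub
    refine Valuation.map_sub_lt _ ?_ (valuation_mul_lt_one hR hvz hG')
    convert valuation_mul_lt_one hR hsub (hinv _ hDzR hDz) using 2
    field_simp
    ring
  · have hf := iterate_derivation_expansion hDa h n
    rw [one_mul, mul_one] at hGeq
    rw [hfz, Finset.sum_range_succ, hGeq, hGeq'] at hf
    linear_combination -hf

-- A function of order `n + 1` in the direction of `D` is a polynomial in its `n`-th derivative
-- without term of degree `n`, up to units.
theorem exists_tschirnhausen [CharZero K] (hK : ∀ c : K, algebraMap K M c ∈ 𝒪)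
    (hinv : ∀ a ∈ R, 𝒪.valuation a = 1 → a⁻¹ ∈ R) (hDz : 𝒪.valuation (D z) = 1) (hR₀ : R₀ ≤ R)
    (hD₀ : ∀ a ∈ R₀, D a = 0) (he : ∀ g ∈ R, ∃ a ∈ R₀, ∃ w ∈ R, g = a + z * w) (hf : f ∈ R)
    (hlt : ∀ k ≤ n, 𝒪.valuation (D^[k] f) < 1) (hfz : D^[n] f = z) :
    ∃ a c : ℕ → M, (∀ k, a k ∈ R₀) ∧ (∀ k < n, c k ∈ R ∧ 𝒪.valuation (c k) = 1) ∧
      ∃ w ∈ R, 𝒪.valuation w = 1 ∧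
        f = ∑ k ∈ Finset.range n, c k * (a k * z ^ k) + w * z ^ (n + 1) := by
  obtain ⟨a, ha, w, hw, h⟩ := exists_expansion he hf (n + 1)
  have hDa : ∀ k, D (a k) = 0 := fun k => hD₀ _ (ha k)
  have hva := valuation_coeff_lt_one hR hD hz hvz hK hDz (fun k => hR₀ (ha k)) hDa hw h
    fun i hi => hlt i (Nat.lt_succ_iff.1 hi)
  have hvw : 𝒪.valuation w = 1 := by
    have hsub := valuation_iterate_derivation_sub_lt_one hR hD hz hvz hva hDa hw h
    rw [Function.iterate_succ_apply', hfz] at hsub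
    have := valuation_eq_one_of_sub_lt_one hDz hsub
    rwa [map_mul, map_mul, map_pow, hDz, one_pow, mul_one,
      valuation_natCast_eq_one hK (n + 1).factorial_ne_zero, one_mul] at this
  obtain ⟨U, hU, hvU, μ, hμ, hvμ, hUa⟩ :=
    exists_mul_coeff_eq hR hD hz hvz hK hinv hDz hva hDa hw h hfz
  have hU0 : U ≠ 0 := (Valuation.ne_zero_iff 𝒪.valuation).1 (hvU ▸ one_ne_zero)
  have hUi := hinv U hU hvU
  have hUz (k : ℕ) : U⁻¹ * D^[n] (z ^ k) ∈ R :=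
    R.mul_mem hUi (iterate_derivation_mem hD n (R.pow_mem hz _))
  refine ⟨a, fun k => 1 - U⁻¹ * D^[n] (z ^ k) * z ^ (n - k), ha, fun k hk =>
    ⟨R.sub_mem R.one_mem (R.mul_mem (hUz k) (R.pow_mem hz _)), ?_⟩,
    w + U⁻¹ * μ, R.add_mem hw (R.mul_mem hUi hμ), ?_, ?_⟩
  · refine valuation_eq_one_of_sub_lt_one (map_one _) ?_
    rw [sub_sub_cancel, ← Nat.sub_add_cancel (Nat.sub_pos_of_lt hk), pow_succ', mul_left_comm]
    exact valuation_mul_lt_one hR hvz (R.mul_mem (hUz k) (R.pow_mem hz _))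
  · refine valuation_eq_one_of_sub_lt_one hvw ?_
    rw [sub_add_cancel_left, Valuation.map_neg, mul_comm]
    exact valuation_mul_lt_one hR hvμ hUi
  · have hterm : ∑ k ∈ Finset.range n, (1 - U⁻¹ * D^[n] (z ^ k) * z ^ (n - k)) * (a k * z ^ k) =
        ∑ k ∈ Finset.range n, a k * z ^ k -
          U⁻¹ * (∑ k ∈ Finset.range n, a k * D^[n] (z ^ k)) * z ^ n := by
      rw [Finset.mul_sum, Finset.sum_mul, ← Finset.sum_sub_distrib]
      refine Finset.sum_congr rfl fun k hk => ?_
      rw [← Nat.sub_add_cancel (Finset.mem_range.1 hk).le, pow_add, Nat.add_sub_cancel]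
      ring
    have han : a n = U⁻¹ * (z * μ - ∑ k ∈ Finset.range n, a k * D^[n] (z ^ k)) := by
      rw [← hUa, inv_mul_cancel_left₀ hU0]
    rw [hterm, h, Finset.sum_range_succ, han]
    ring

theorem exists_finset_tschirnhausen [CharZero K] (hK : ∀ c : K, algebraMap K M c ∈ 𝒪)
    (hinv : ∀ a ∈ R, 𝒪.valuation a = 1 → a⁻¹ ∈ R) (hDz : 𝒪.valuation (D z) = 1) (hR₀ : R₀ ≤ R)
    (hD₀ : ∀ a ∈ R₀, D a = 0) (he : ∀ g ∈ R, ∃ a ∈ R₀, ∃ w ∈ R, g = a + z * w) (hf : f ∈ R)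
    (hlt : ∀ k ≤ n, 𝒪.valuation (D^[k] f) < 1) (hfz : D^[n] f = z) :
    ∃ (I : Finset ℕ) (a c : ℕ → M), I.Nonempty ∧ I.card ≤ n + 1 ∧
      (∀ k ∈ I, a k ∈ R₀ ∧ a k ≠ 0 ∧ c k ∈ R ∧ 𝒪.valuation (c k) = 1) ∧
        f = ∑ k ∈ I, c k * (a k * z ^ k) := by
  classical
  obtain ⟨a, c, ha, hc, w, hw, hvw, hf⟩ :=
    exists_tschirnhausen hR hD hz hvz hK hinv hDz hR₀ hD₀ he hf hlt hfz
  set I := {k ∈ Finset.range n | a k ≠ 0}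
  have hlt {k : ℕ} (hk : k ∈ I) : k < n := Finset.mem_range.1 (Finset.mem_filter.1 hk).1
  have hnI : n + 1 ∉ I := fun h => by simpa using hlt h
  refine ⟨insert (n + 1) I, Function.update a (n + 1) 1, Function.update c (n + 1) w,
    Finset.insert_nonempty _ _, ?_, fun k hk => ?_, ?_⟩
  · rw [Finset.card_insert_of_notMem hnI]
    exact Nat.succ_le_succ ((Finset.card_filter_le _ _).trans (Finset.card_range n).le)
  · obtain rfl | hk := Finset.mem_insert.1 hk
    · simp only [Function.update_self]
      exact ⟨R₀.one_mem, one_ne_zero, hw, hvw⟩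
    · have hkn : k ≠ n + 1 := ((hlt hk).trans n.lt_succ_self).ne
      simp only [Function.update_of_ne hkn]
      exact ⟨ha k, (Finset.mem_filter.1 hk).2, hc k (hlt hk)⟩
  · have hsum : ∑ k ∈ I, c k * (a k * z ^ k) = ∑ k ∈ Finset.range n, c k * (a k * z ^ k) :=
      Finset.sum_filter_of_ne fun k _ hk h0 => hk (by rw [h0, zero_mul, mul_zero])
    rw [Finset.sum_insert hnI, Function.update_self, Function.update_self, one_mul, hf, ← hsum,
      add_comm]
    congr 1
    refine Finset.sum_congr rfl fun k hk => ?_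
    have hkn : k ≠ n + 1 := ((hlt hk).trans n.lt_succ_self).ne
    rw [Function.update_of_ne hkn, Function.update_of_ne hkn]

end Tschirnhausen

section EulerOperator

variable {K M : Type*} [Field K] [Field M] [Algebra K M] {𝒪 : ValuationSubring M}
  {D : Derivation K M M} {u f : M} {J : AddSubgroup M} {ι : Type*} {I : Finset ι} {F : ι → M}
  {e : ι → ℤ}

theorem iterate_euler_operator (hu : D u = 1) (g : M) (e : ℤ) (s : ℕ) :
    D^[s] (u * D g - e * g) = u * D^[s + 1] g + (s - e) * D^[s] g := by
  induction s with
  | zero => simp [sub_eq_add_neg]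
  | succ s ih =>
    rw [Function.iterate_succ_apply', ih, Function.iterate_succ_apply' D (s + 1),
      Function.iterate_succ_apply' D s]
    simp only [map_add, map_sub, Derivation.leibniz, Derivation.map_natCast, Derivation.map_intCast,
      smul_eq_mul, hu]
    push_cast
    ring

theorem valuation_iterate_euler_operator_lt_one (hu : D u = 1) (hvu : 𝒪.valuation u ≤ 1) {g : M}
    {s : ℕ} (hg : ∀ t ≤ s + 1, 𝒪.valuation (D^[t] g) < 1) (n : ℤ) :
    𝒪.valuation (D^[s] (u * D g - n * g)) < 1 := by
  rw [iterate_euler_operator hu]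
  have hcoe : 𝒪.valuation ((s : M) - n) ≤ 1 := by
    exact_mod_cast valuation_intCast_le_one (𝒪 := 𝒪) (s - n)
  refine Valuation.map_add_lt _ ?_ ?_
  · rw [map_mul, mul_comm]
    exact mul_lt_one_of_lt_of_le (hg _ le_rfl) hvu
  · rw [map_mul, mul_comm]
    exact mul_lt_one_of_lt_of_le (hg _ s.le_succ) hcoe

theorem euler_operator_sub_sum_mem (hJu : ∀ g ∈ J, u * D g ∈ J)
    (hF : ∀ k ∈ I, u * D (F k) - e k * F k ∈ J) (c : ι → ℤ) {g : M}
    (hg : g - ∑ k ∈ I, c k * F k ∈ J) (n : ℤ) :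
    u * D g - n * g - ∑ k ∈ I, ((e k - n) * c k : ℤ) * F k ∈ J := by
  have hJz (m : ℤ) {a : M} (ha : a ∈ J) : (m : M) * a ∈ J :=
    zsmul_eq_mul a m ▸ J.zsmul_mem ha m
  have hsum : ∑ k ∈ I, (c k : M) * (u * D (F k) - e k * F k) ∈ J :=
    J.sum_mem fun k hk => hJz _ (hF k hk)
  convert J.add_mem (J.sub_mem (hJu _ hg) (hJz n hg)) hsum using 1
  simp only [map_sub, map_sum, Derivation.leibniz, Derivation.map_intCast, smul_eq_mul, mul_zero,
    add_zero, mul_sub, Finset.mul_sum, Finset.sum_sub_distrib, Int.cast_mul, Int.cast_sub, sub_mul]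
  simp only [mul_left_comm u, mul_left_comm (n : M), mul_left_comm (c _ : M) (e _ : M), mul_assoc]
  ring

theorem exists_sub_sum_prod_mul_mem (hu : D u = 1) (hvu : 𝒪.valuation u ≤ 1)
    (hJu : ∀ g ∈ J, u * D g ∈ J) (hF : ∀ k ∈ I, u * D (F k) - e k * F k ∈ J)
    (hf : f - ∑ k ∈ I, F k ∈ J) {n : ℕ} (hlt : ∀ s < n, 𝒪.valuation (D^[s] f) < 1) (Q : Finset ι) :
    ∃ g, (∀ s, s + Q.card < n → 𝒪.valuation (D^[s] g) < 1) ∧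
      g - ∑ k ∈ I, (∏ q ∈ Q, (e k - e q) : ℤ) * F k ∈ J := by
  classical
  induction Q using Finset.induction_on with
  | empty => exact ⟨f, by simpa using hlt, by simpa using hf⟩
  | insert q Q hq ih =>
    obtain ⟨g, hg, hgJ⟩ := ih
    refine ⟨u * D g - e q * g, fun s hs => ?_, ?_⟩
    · rw [Finset.card_insert_of_notMem hq] at hs
      exact valuation_iterate_euler_operator_lt_one hu hvu (fun t ht => hg t (by omega)) _
    · simpa only [Finset.prod_insert hq] using euler_operator_sub_sum_mem hJu hF _ hgJ (e q)

-- The operators `u * D - e q` for `q ≠ i` kill all the summands of `f` but `F i`.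
theorem exists_valuation_iterate_derivation_eq_one [CharZero K]
    (hK : ∀ c : K, algebraMap K M c ∈ 𝒪) (hu : D u = 1) (hvu : 𝒪.valuation u ≤ 1)
    (hJ : ∀ g ∈ J, 𝒪.valuation g < 1) (hJu : ∀ g ∈ J, u * D g ∈ J) {i : ι} (hi : i ∈ I)
    (hF : ∀ k ∈ I, u * D (F k) - e k * F k ∈ J) (he : Set.InjOn e I) (hf : f - ∑ k ∈ I, F k ∈ J)
    (hle : ∀ s, 𝒪.valuation (D^[s] f) ≤ 1) (hvF : 𝒪.valuation (F i) = 1) :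
    ∃ s < I.card, 𝒪.valuation (D^[s] f) = 1 := by
  classical
  by_contra! hne
  obtain ⟨g, hg, hgJ⟩ := exists_sub_sum_prod_mul_mem hu hvu hJu hF hf
    (fun s hs => lt_of_le_of_ne (hle s) (hne s hs)) (I.erase i)
  have hprod : ∏ q ∈ I.erase i, (e i - e q) ≠ 0 :=
    Finset.prod_ne_zero_iff.2 fun q hq => sub_ne_zero.2 fun h =>
      Finset.ne_of_mem_erase hq (he hi (Finset.mem_of_mem_erase hq) h).symm
  rw [Finset.sum_eq_single_of_mem i hi fun k hk hki => by
    rw [Finset.prod_eq_zero (Finset.mem_erase.2 ⟨hki, hk⟩) (sub_self _), Int.cast_zero,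
      zero_mul]] at hgJ
  have hvg : 𝒪.valuation g < 1 :=
    hg 0 (by rw [zero_add]; exact Finset.card_erase_lt_of_mem hi)
  have hlt := Valuation.map_sub_lt _ hvg (hJ _ hgJ)
  rw [sub_sub_cancel, map_mul, hvF, mul_one, valuation_intCast_eq_one hK hprod] at hlt
  exact lt_irrefl _ hlt

end EulerOperator

section CoordinateIdeal

variable {K M σ : Type*} [Field K] [Field M] [Algebra K M] {𝒪 : ValuationSubring M} {R : Subring M}
  {y : σ → M} {S : Finset σ}

/-- The `R`-submodule of `M` spanned by the `y i`, `i ∈ S`. For a coordinate ring `R` containing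
the `y i` it is an ideal of `R`, viewed inside `M` so that derivations of `M` act on it. -/
def coordIdeal (R : Subring M) (y : σ → M) (S : Finset σ) : Submodule R M :=
  Submodule.span R (y '' S)

theorem mul_mem_coordIdeal {r b : M} (hr : r ∈ R) (hb : b ∈ coordIdeal R y S) :
    r * b ∈ coordIdeal R y S :=
  (coordIdeal R y S).smul_mem ⟨r, hr⟩ hb

theorem apply_mem_coordIdeal {i : σ} (hi : i ∈ S) : y i ∈ coordIdeal R y S :=
  Submodule.subset_span ⟨i, hi, rfl⟩

theorem valuation_lt_one_of_mem_coordIdeal (hR : ∀ a ∈ R, 𝒪.valuation a ≤ 1)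
    (hy : ∀ i ∈ S, 𝒪.valuation (y i) < 1) {b : M} (hb : b ∈ coordIdeal R y S) :
    𝒪.valuation b < 1 := by
  induction hb using Submodule.span_induction with
  | mem _ hb =>
    obtain ⟨i, hi, rfl⟩ := hb
    exact hy i hi
  | zero => simp
  | add _ _ _ _ ha hb => exact Valuation.map_add_lt _ ha hb
  | smul r _ _ hb =>
    rw [Subring.smul_def, smul_eq_mul, map_mul]
    exact (mul_le_of_le_one_left' (hR r r.2)).trans_lt hb

theorem derivation_mem_coordIdeal {Δ : Derivation K M M} (hR : ∀ a ∈ R, Δ a ∈ R)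
    (hy : ∀ i ∈ S, Δ (y i) = 0) {b : M} (hb : b ∈ coordIdeal R y S) : Δ b ∈ coordIdeal R y S := by
  induction hb using Submodule.span_induction with
  | mem _ hb =>
    obtain ⟨i, hi, rfl⟩ := hb
    rw [hy i hi]
    exact zero_mem _
  | zero => simp
  | add _ _ _ _ ha hb =>
    rw [map_add]
    exact add_mem ha hb
  | smul r b hb hΔb =>
    rw [Subring.smul_def, smul_eq_mul, Derivation.leibniz, smul_eq_mul, smul_eq_mul, mul_comm b]
    exact add_mem (mul_mem_coordIdeal r.2 hΔb) (mul_mem_coordIdeal (hR r r.2) hb)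

theorem mon_mem_coordIdeal (hyR : ∀ i ∈ S, y i ∈ R) (hy0 : ∀ i ∈ S, y i ≠ 0) {a : σ → ℤ}
    (ha : ∀ i ∈ S, 0 ≤ a i) {i : σ} (hi : i ∈ S) (hai : a i ≠ 0) :
    mon y S a ∈ coordIdeal R y S := by
  classical
  have hmon : mon y S a = mon y S (a - Pi.single i 1) * y i := by
    rw [mon_sub hy0, mon_single hi, zpow_one, div_mul_cancel₀ _ (hy0 i hi)]
  rw [hmon]
  refine mul_mem_coordIdeal (mon_mem hyR fun k hk => ?_) (apply_mem_coordIdeal hi)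
  have hak := ha k hk
  obtain rfl | hki := eq_or_ne k i
  · rw [Pi.sub_apply, Pi.single_eq_same]
    omega
  · rwa [Pi.sub_apply, Pi.single_eq_of_ne hki, sub_zero]

theorem sum_mul_mon_sub_sum_filter_mem_coordIdeal (hyR : ∀ i ∈ S, y i ∈ R)
    (hy0 : ∀ i ∈ S, y i ≠ 0) {ι : Type*} {I : Finset ι} {F : ι → M} (hF : ∀ k ∈ I, F k ∈ R)
    {α : ι → σ → ℤ} {β : σ → ℤ} (hβ : ∀ k ∈ I, ∀ i ∈ S, β i ≤ α k i) :
    ∑ k ∈ I, F k * mon y S (α k - β) - ∑ k ∈ I with ∀ i ∈ S, α k i = β i, F k ∈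
      coordIdeal R y S := by
  rw [Finset.sum_filter, ← Finset.sum_sub_distrib]
  refine sum_mem fun k hk => ?_
  split_ifs with h
  · have hmon : mon y S (α k - β) = 1 :=
      (mon_congr (fun _ _ => rfl) fun i hi => sub_eq_zero.2 (h i hi)).trans mon_zero
    rw [hmon, mul_one, sub_self]
    exact zero_mem _
  · push Not at h
    obtain ⟨i, hi, hne⟩ := h
    rw [sub_zero]
    exact mul_mem_coordIdeal (hF k hk) (mon_mem_coordIdeal hyR hy0
      (fun i hi => sub_nonneg.2 (hβ k hk i hi)) hi (sub_ne_zero.2 hne))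

theorem euler_operator_mul_zpow {Δ : Derivation K M M} {u : M} (hu : Δ u = 1) (hu0 : u ≠ 0) (c : M)
    (n : ℤ) : u * Δ (c * u ^ n) - n * (c * u ^ n) = u * u ^ n * Δ c := by
  rw [Derivation.leibniz, Derivation.leibniz_zpow, hu, zpow_sub_one₀ hu0]
  simp only [smul_eq_mul, zsmul_eq_mul, mul_one]
  field_simp
  ring

theorem sum_mul_mon_eq (hy : ∀ i ∈ S, y i ≠ 0) {ι : Type*} (I : Finset ι) (c : ι → M)
    (α : ι → σ → ℤ) (β : σ → ℤ) :
    ∑ k ∈ I, c k * mon y S (α k) = mon y S β * ∑ k ∈ I, c k * mon y S (α k - β) := by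
  rw [Finset.mul_sum]
  refine Finset.sum_congr rfl fun k _ => ?_
  rw [mon_sub hy, mul_left_comm, mul_div_cancel₀ _ (mon_ne_zero hy β)]

-- The terms of minimal exponent are, modulo the coordinate ideal, eigenvectors of `u * Δ` for
-- distinct eigenvalues, and there are at most `I.card` of them.
theorem exists_valuation_iterate_sum_mul_mon_eq_one [CharZero K]
    (hK : ∀ c : K, algebraMap K M c ∈ 𝒪) {Δ : Derivation K M M}
    (hR : ∀ a ∈ R, 𝒪.valuation a ≤ 1) (hΔ : ∀ a ∈ R, Δ a ∈ R) (hyR : ∀ i ∈ S, y i ∈ R)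
    (hy0 : ∀ i ∈ S, y i ≠ 0) (hΔy : ∀ i ∈ S, Δ (y i) = 0) (hm : ∀ i ∈ S, 𝒪.valuation (y i) < 1)
    {u : M} (hu : u ∈ R) (hvu : 𝒪.valuation u = 1) (hΔu : Δ u = 1)
    {ι : Type*} {I : Finset ι} {c : ι → M} {n : ι → ℤ} {α : ι → σ → ℤ} {k₀ : ι}
    (hc : ∀ k ∈ I, c k ∈ R) (hΔc : ∀ k ∈ I, Δ (c k) ∈ coordIdeal R y S) (hn : ∀ k ∈ I, 0 ≤ n k)
    (hmin : ∀ k ∈ I, ∀ i ∈ S, α k₀ i ≤ α k i)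
    (hinj : Set.InjOn n ({k ∈ I | ∀ i ∈ S, α k i = α k₀ i} : Finset ι)) (hk₀ : k₀ ∈ I)
    (hvc : 𝒪.valuation (c k₀) = 1) :
    ∃ s < I.card,
      𝒪.valuation (Δ^[s] (∑ k ∈ I, c k * u ^ n k * mon y S (α k - α k₀))) = 1 := by
  have hu0 : u ≠ 0 := (Valuation.ne_zero_iff 𝒪.valuation).1 (hvu ▸ one_ne_zero)
  have hF : ∀ k ∈ I, c k * u ^ n k ∈ R := fun k hk =>
    mul_mem (hc k hk) (zpow_mem_subring hu (hn k hk))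
  have hf : ∑ k ∈ I, c k * u ^ n k * mon y S (α k - α k₀) ∈ R := sum_mem fun k hk =>
    mul_mem (hF k hk) (mon_mem hyR fun i hi => sub_nonneg.2 (hmin k hk i hi))
  have heigen : ∀ k ∈ ({k ∈ I | ∀ i ∈ S, α k i = α k₀ i} : Finset ι),
      u * Δ (c k * u ^ n k) - n k * (c k * u ^ n k) ∈ coordIdeal R y S := fun k hk => by
    have hk := (Finset.mem_filter.1 hk).1
    rw [euler_operator_mul_zpow hΔu hu0]
    exact mul_mem_coordIdeal (mul_mem hu (zpow_mem_subring hu (hn k hk))) (hΔc k hk)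
  obtain ⟨s, hs, hvs⟩ := exists_valuation_iterate_derivation_eq_one
    (J := (coordIdeal R y S).toAddSubgroup) hK hΔu hvu.le
    (fun g hg => valuation_lt_one_of_mem_coordIdeal hR hm hg)
    (fun g hg => mul_mem_coordIdeal hu (derivation_mem_coordIdeal hΔ hΔy hg))
    (Finset.mem_filter.2 ⟨hk₀, fun _ _ => rfl⟩) heigen hinj
    (sum_mul_mon_sub_sum_filter_mem_coordIdeal hyR hy0 hF hmin)
    (fun s => hR _ (iterate_derivation_mem hΔ s hf))
    (by rw [map_mul, hvc, map_zpow₀, hvu, one_zpow, one_mul])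
  exact ⟨s, hs.trans_le (Finset.card_filter_le _ _), hvs⟩

end CoordinateIdeal

section MonomialSum

variable {K M : Type u} [Field K] [Field M] [Algebra K M] {σ : Type} {𝒪 : ValuationSubring M}
  {L : IntermediateField K M} {x y : σ → M} {S T : Finset σ} {e : (σ → ℤ) ≃+ (σ → ℤ)} {f : M}
  {ι : Type*} {I : Finset ι} {c : ι → M} {α : ι → σ → ℤ} {k₀ : ι}

theorem mon_mem_coordRing (hST : S ⊆ T) {a : σ → ℤ} (ha : ∀ i ∈ S, 0 ≤ a i) :
    mon x S a ∈ coordRing 𝒪 L x T :=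
  mon_mem (fun _ hi => apply_mem_coordRing (hST hi)) ha

variable (K) in
/-- `f` is the sum over `k ∈ I` of the monomials with coefficient `c k` and exponent `α k` in the
coordinates in `S`, where the exponents are distinct and the coefficients are units of the
coordinate ring over the whole field `M`. -/
structure IsMonomialSum (𝒪 : ValuationSubring M) (T S : Finset σ) (x : σ → M) (I : Finset ι)
    (c : ι → M) (α : ι → σ → ℤ) (f : M) : Prop where
  mem : ∀ k ∈ I, c k ∈ coordRing 𝒪 (⊤ : IntermediateField K M) x T
  valuation_eq_one : ∀ k ∈ I, 𝒪.valuation (c k) = 1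
  nonneg : ∀ k ∈ I, ∀ i ∈ S, 0 ≤ α k i
  eq_of_forall_eq : ∀ k ∈ I, ∀ l ∈ I, (∀ i ∈ S, α k i = α l i) → k = l
  eq_sum : f = ∑ k ∈ I, c k * mon x S (α k)

variable [DecidableEq σ] {D D' : σ → Derivation K M M}

theorem IsToric.coordRing_le (ht : IsToric S x y e) (hy : IsCoordSystem 𝒪 L y D') (hST : S ⊆ T) :
    coordRing 𝒪 L x T ≤ coordRing 𝒪 L y T :=
  hy.coordRing_le_coordRing fun _ hi => ht.apply_mem hST hi

theorem IsToric.derivation_mem_coordIdeal (ht : IsToric S x y e) (hy : IsCoordSystem 𝒪 L y D')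
    (hST : S ⊆ T) (hm : ∀ i ∈ S, 𝒪.valuation (x i) < 1) {j : σ} (hj : j ∈ S)
    (hyj : 𝒪.valuation (y j) = 1) (t : σ) :
    D' j (x t) ∈ coordIdeal (coordRing 𝒪 L y T) y (S.erase j) := by
  by_cases htS : t ∈ S
  swap
  · rw [← ht.eq_of_notMem t htS, hy.apply_eq, if_neg (by rintro rfl; exact htS hj)]
    exact zero_mem _
  set a := e (Pi.single t 1)
  have ha : ∀ i ∈ S, 0 ≤ a i :=
    ht.nonneg _ fun i _ => (Pi.single_nonneg.2 zero_le_one : (0 : σ → ℤ) ≤ Pi.single t 1) i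
  have ha' : ∀ i ∈ S.erase j, 0 ≤ a i := fun i hi => ha i (Finset.mem_of_mem_erase hi)
  have hxt : x t = y j ^ a j * mon y (S.erase j) a := (ht.apply_eq htS).trans (mon_erase hj a)
  obtain ⟨i, hi, hai⟩ : ∃ i ∈ S.erase j, a i ≠ 0 := by
    by_contra! h0
    refine (hm t htS).ne ?_
    rw [hxt, mon_congr (b := 0) (fun _ _ => rfl) h0, mon_zero, mul_one, map_zpow₀, hyj, one_zpow]
  have hmon : mon y (S.erase j) a ∈ coordRing 𝒪 L y (T.erase j) :=
    mon_mem_coordRing (Finset.erase_subset_erase j hST) ha'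
  rw [hxt, Derivation.leibniz, hy.apply_eq_zero hmon (T.notMem_erase j), smul_zero, zero_add,
    smul_eq_mul, mul_comm]
  exact mul_mem_coordIdeal
    (hy.apply_mem (zpow_mem_subring (apply_mem_coordRing (hST hj)) (ha j hj)) j)
    (mon_mem_coordIdeal (fun k hk => apply_mem_coordRing (hST (Finset.mem_of_mem_erase hk)))
      (fun k _ => hy.ne_zero k) ha' hi hai)

theorem IsCoordSystem.coordRing_top_le (hy : IsCoordSystem 𝒪 L y D')
    (h : coordRing 𝒪 L x T ≤ coordRing 𝒪 L y T) :
    coordRing 𝒪 (⊤ : IntermediateField K M) x T ≤ coordRing 𝒪 (⊤ : IntermediateField K M) y T :=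
  (hy.of_le le_top).coordRing_le_coordRing fun _ ht => coordRing_le_top (h (apply_mem_coordRing ht))

theorem IsCoordSystem.sum_mul_mon_sub_mem [CharZero K] (hx : IsCoordSystem 𝒪 L x D) (hST : S ⊆ T)
    (hc : ∀ k ∈ I, c k ∈ coordRing 𝒪 (⊤ : IntermediateField K M) x T) {β : σ → ℤ}
    (hβ : ∀ i ∈ S, 0 ≤ β i) (hβα : ∀ k ∈ I, ∀ i ∈ S, β i ≤ α k i)
    (hf : ∑ k ∈ I, c k * mon x S (α k) ∈ coordRing 𝒪 L x T) :
    ∑ k ∈ I, c k * mon x S (α k - β) ∈ coordRing 𝒪 L x T :=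
  have hx0 : ∀ i ∈ S, x i ≠ 0 := fun i _ => hx.ne_zero i
  hx.mem_of_eq_mul hf (mon_mem_coordRing hST hβ) (mon_ne_zero hx0 β)
    (sum_mem fun k hk => mul_mem (hc k hk)
      (mon_mem_coordRing hST fun i hi => sub_nonneg.2 (hβα k hk i hi)))
    (sum_mul_mon_eq hx0 I c α β)

namespace IsMonomialSum

theorem toric (h : IsMonomialSum K 𝒪 T S x I c α f) (ht : IsToric S x y e)
    (hy : IsCoordSystem 𝒪 L y D') (hST : S ⊆ T) :
    IsMonomialSum K 𝒪 T S y I c (fun k => e (α k)) f where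
  mem k hk := ht.coordRing_le (hy.of_le le_top) hST (h.mem k hk)
  valuation_eq_one := h.valuation_eq_one
  nonneg k hk := ht.nonneg _ (h.nonneg k hk)
  eq_of_forall_eq k hk l hl hkl := h.eq_of_forall_eq k hk l hl fun i hi =>
    sub_eq_zero.1 <| ht.eq_zero_of_apply_eq_zero (a := α k - α l)
      (fun i hi => by rw [map_sub, Pi.sub_apply, hkl i hi, sub_self]) hi
  eq_sum := h.eq_sum.trans <| Finset.sum_congr rfl fun k _ => by rw [ht.mon_eq]

variable [CharZero K]

theorem isMonomial (h : IsMonomialSum K 𝒪 T S x I c α f) (hx : IsCoordSystem 𝒪 L x D)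
    (hST : S ⊆ T) (hm : ∀ i ∈ S, 𝒪.valuation (x i) < 1) (hf : f ∈ coordRing 𝒪 L x T)
    (hk₀ : k₀ ∈ I) (hmin : ∀ k ∈ I, ∀ i ∈ S, α k₀ i ≤ α k i) : IsMonomial 𝒪 L T S x f := by
  classical
  have hx0 : ∀ i ∈ S, x i ≠ 0 := fun i _ => hx.ne_zero i
  refine ⟨α k₀, h.nonneg k₀ hk₀, ∑ k ∈ I, c k * mon x S (α k - α k₀),
    hx.sum_mul_mon_sub_mem hST h.mem (h.nonneg k₀ hk₀) hmin (h.eq_sum ▸ hf), ?_,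
    by rw [h.eq_sum, sum_mul_mon_eq hx0 I c α (α k₀), mul_comm]⟩
  refine valuation_eq_one_of_sub_lt_one (h.valuation_eq_one k₀ hk₀) ?_
  rw [← Finset.add_sum_erase _ _ hk₀, sub_self, mon_zero, mul_one, sub_add_cancel_left,
    Valuation.map_neg]
  refine Valuation.map_sum_lt _ one_ne_zero fun k hk => ?_
  obtain ⟨hne, hk⟩ := Finset.mem_erase.1 hk
  obtain ⟨i, hi, hαi⟩ : ∃ i ∈ S, α k i ≠ α k₀ i := by
    by_contra! h'
    exact hne (h.eq_of_forall_eq k hk k₀ hk₀ h')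
  rw [map_mul, h.valuation_eq_one k hk, one_mul]
  exact valuation_mon_lt_one hm (fun i hi => sub_nonneg.2 (hmin k hk i hi)) hi (sub_ne_zero.2 hαi)

theorem isMonomializable (h : IsMonomialSum K 𝒪 T S x I c α f) (hx : IsCoordSystem 𝒪 L x D)
    (hST : S ⊆ T) (hb : IsBlock 𝒪 S x) (hI : I.Nonempty) (hf : f ∈ coordRing 𝒪 L x T) {β : σ → ℤ}
    (hβ : ∀ i ∈ S, 0 ≤ β i) : IsMonomializable 𝒪 L T x (f * mon x S β) := by
  obtain ⟨y, D', e, hy, ht, hby, k₀, hk₀, hmin⟩ := hx.exists_isToric_forall_le hb I hI α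
  have hfy : IsMonomial 𝒪 L T S y f := (h.toric ht hy hST).isMonomial hy hST hby.lt_one
    (ht.coordRing_le hy hST hf) hk₀ hmin
  refine .of_change (fun i hi => ht.eq_of_notMem i fun h => hi (hST h))
    (fun i hi => ht.apply_mem hST hi) (IsMonomial.isMonomializable hy hST hby ?_)
  rw [ht.mon_eq β]
  exact hfy.mul_mon (fun i _ => hy.ne_zero i) (ht.nonneg β hβ)

theorem exists_eq_mon_mul (h : IsMonomialSum K 𝒪 T S y I c α f) (hy : IsCoordSystem 𝒪 L y D)
    (hST : S ⊆ T) {j : σ} (hj : j ∈ S) (hyj : 𝒪.valuation (y j) = 1)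
    (hm : ∀ i ∈ S.erase j, 𝒪.valuation (y i) < 1)
    (hD : ∀ k ∈ I, D j (c k) ∈
      coordIdeal (coordRing 𝒪 (⊤ : IntermediateField K M) y T) y (S.erase j))
    (hf : f ∈ coordRing 𝒪 L y T) (hk₀ : k₀ ∈ I)
    (hmin : ∀ k ∈ I, ∀ i ∈ S.erase j, α k₀ i ≤ α k i) :
    ∃ f' ∈ coordRing 𝒪 L y T, f = mon y (S.erase j) (α k₀) * f' ∧
      ∃ s < I.card, 𝒪.valuation ((D j)^[s] f') = 1 := by
  set R := coordRing 𝒪 (⊤ : IntermediateField K M) y T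
  have hST' : S.erase j ⊆ T := (S.erase_subset j).trans hST
  have hytop : IsCoordSystem 𝒪 (⊤ : IntermediateField K M) y D := hy.of_le le_top
  have hy0 : ∀ i ∈ S.erase j, y i ≠ 0 := fun i _ => hy.ne_zero i
  have hyj' : y j ∈ R := apply_mem_coordRing (hST hj)
  have hcR : ∀ k ∈ I, c k * y j ^ α k j ∈ R := fun k hk =>
    mul_mem (h.mem k hk) (zpow_mem_subring hyj' (h.nonneg k hk j hj))
  have hfsum : f = ∑ k ∈ I, c k * y j ^ α k j * mon y (S.erase j) (α k) := h.eq_sum.trans <|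
    Finset.sum_congr rfl fun k _ => by rw [mon_erase hj, mul_assoc]
  have hinj : Set.InjOn (fun k => α k j)
      ({k ∈ I | ∀ i ∈ S.erase j, α k i = α k₀ i} : Finset ι) := fun k hk l hl hkl => by
    obtain ⟨hk, hαk⟩ := Finset.mem_filter.1 hk
    obtain ⟨hl, hαl⟩ := Finset.mem_filter.1 hl
    refine h.eq_of_forall_eq k hk l hl fun i hi => ?_
    obtain rfl | hij := eq_or_ne i j
    · exact hkl
    · have hi := Finset.mem_erase.2 ⟨hij, hi⟩
      rw [hαk i hi, hαl i hi]
  exact ⟨_, hy.sum_mul_mon_sub_mem hST' hcR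
      (fun i hi => h.nonneg k₀ hk₀ i (Finset.mem_of_mem_erase hi)) hmin (hfsum ▸ hf),
    hfsum.trans (sum_mul_mon_eq hy0 I _ α (α k₀)),
    exists_valuation_iterate_sum_mul_mon_eq_one hy.algebraMap_mem
      (fun a ha => hytop.valuation_le_one ha) (fun a ha => hytop.apply_mem ha j)
      (fun i hi => apply_mem_coordRing (hST' hi)) hy0
      (fun i hi => by rw [hy.apply_eq, if_neg (Finset.ne_of_mem_erase hi).symm]) hm hyj' hyj
      (by rw [hy.apply_eq, if_pos rfl]) h.mem hD (fun k hk => h.nonneg k hk j hj) hmin hinj hk₀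
      (h.valuation_eq_one k₀ hk₀)⟩

theorem exists_eq_mon_mul_of_isToric (h : IsMonomialSum K 𝒪 T S x I c α f)
    (hx : IsCoordSystem 𝒪 L x D) (hy : IsCoordSystem 𝒪 L y D') (ht : IsToric S x y e)
    (hST : S ⊆ T) (hmx : ∀ i ∈ S, 𝒪.valuation (x i) < 1) {j : σ} (hj : j ∈ S)
    (hyj : 𝒪.valuation (y j) = 1) (hmy : ∀ i ∈ S.erase j, 𝒪.valuation (y i) < 1)
    (hf : f ∈ coordRing 𝒪 L x T) (hk₀ : k₀ ∈ I)
    (hmin : ∀ k ∈ I, ∀ i ∈ S.erase j, e (α k₀) i ≤ e (α k) i) :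
    ∃ f' ∈ coordRing 𝒪 L y T, f = mon y (S.erase j) (e (α k₀)) * f' ∧
      ∃ s < I.card, 𝒪.valuation ((D' j)^[s] f') = 1 := by
  have hytop : IsCoordSystem 𝒪 (⊤ : IntermediateField K M) y D' := hy.of_le le_top
  have hle := ht.coordRing_le hytop hST
  exact (h.toric ht hy hST).exists_eq_mon_mul hy hST hj hyj hmy
    (fun k hk => (hx.of_le le_top).derivation_mem (coordIdeal _ y _).toAddSubgroup
      (fun a ha b hb => mul_mem_coordIdeal (hle ha) hb) (D' j)
      (fun t _ => ht.derivation_mem_coordIdeal hytop hST hmx hj hyj t) (h.mem k hk))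
    (ht.coordRing_le hy hST hf) hk₀ hmin

end IsMonomialSum

end MonomialSum

section Order

variable {K M : Type u} [Field K] [Field M] [Algebra K M] {σ : Type} [DecidableEq σ]
  {𝒪 : ValuationSubring M} {L : IntermediateField K M} {x : σ → M} {D : σ → Derivation K M M}
  {S T : Finset σ} {i : σ} {f g : M}

/-- Every product of a function of order `d` in some coordinate direction with a function of the
remaining coordinates is monomializable. The order is measured by the first iterated derivative
that is a unit; `f` has order at most `d` if the `d`-th one is. -/
def IsMonomializableOfOrder (𝒪 : ValuationSubring M) (L : IntermediateField K M) (T : Finset σ)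
    (d : ℕ) : Prop :=
  ∀ ⦃x : σ → M⦄ ⦃D : σ → Derivation K M M⦄, IsCoordSystem 𝒪 L x D → ∀ ⦃i⦄, i ∈ T →
    ∀ f ∈ coordRing 𝒪 L x T, ∀ g ∈ coordRing 𝒪 L x (T.erase i), g ≠ 0 →
      𝒪.valuation ((D i)^[d] f) = 1 → IsMonomializable 𝒪 L T x (f * g)

theorem update_nonneg_of_mem_insert {a : σ → ℤ} (ha : ∀ k ∈ S, 0 ≤ a k) {n : ℤ} (hn : 0 ≤ n) :
    ∀ k ∈ insert i S, 0 ≤ Function.update a i n k := fun k hk => by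
  obtain rfl | hki := eq_or_ne k i
  · rwa [Function.update_self]
  · rw [Function.update_of_ne hki]
    exact ha k (Finset.mem_of_mem_insert_of_ne hk hki)

theorem isMonomialSum_insert {I : Finset ℕ} {c : ℕ → M} {α : ℕ → σ → ℤ} (hi : i ∉ S)
    (hc : ∀ k ∈ I, c k ∈ coordRing 𝒪 (⊤ : IntermediateField K M) x T)
    (hvc : ∀ k ∈ I, 𝒪.valuation (c k) = 1) (hα : ∀ k ∈ I, ∀ i ∈ S, 0 ≤ α k i)
    (hf : f = ∑ k ∈ I, c k * (mon x S (α k) * x i ^ k)) :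
    IsMonomialSum K 𝒪 T (insert i S) x I c (fun k => Function.update (α k) i k) f where
  mem := hc
  valuation_eq_one := hvc
  nonneg k hk := update_nonneg_of_mem_insert (hα k hk) k.cast_nonneg
  eq_of_forall_eq k _ l _ h := by simpa using h i (Finset.mem_insert_self i S)
  eq_sum := hf.trans <| Finset.sum_congr rfl fun k _ => by rw [mon_insert_update hi, zpow_natCast]

variable [CharZero K]

theorem IsMonomialSum.isMonomializable_insert {ι : Type*} {I : Finset ι} {c : ι → M}
    {α : ι → σ → ℤ} (h : IsMonomialSum K 𝒪 T (insert i S) x I c α f) (hx : IsCoordSystem 𝒪 L x D)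
    (hi : i ∉ S) (hST : insert i S ⊆ T) (hb : IsBlock 𝒪 S x) (hxi : 𝒪.valuation (x i) < 1)
    (hI : I.Nonempty) (hord : ∀ s < I.card, IsMonomializableOfOrder 𝒪 L T s)
    (hf : f ∈ coordRing 𝒪 L x T) {β : σ → ℤ} (hβ : ∀ t ∈ insert i S, 0 ≤ β t) :
    IsMonomializable 𝒪 L T x (f * mon x (insert i S) β) := by
  by_cases hbi : IsBlock 𝒪 (insert i S) x
  · exact h.isMonomializable hx hST hbi hI hf hβ
  obtain ⟨y, _, e₁, hy, hxy, j, hj, hyj, hby⟩ := hx.exists_block_of_dependent hb hi hxi hbi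
  obtain ⟨w, D', e₂, hw, hyw, hbw, k₀, hk₀, hmin⟩ :=
    hy.exists_isToric_forall_le hby I hI fun k => e₁ (α k)
  have ht := hxy.trans (hyw.mono (Finset.erase_subset j _))
  set e := e₁.trans e₂
  have hwj : 𝒪.valuation (w j) = 1 := by rw [hyw.eq_of_notMem j (Finset.notMem_erase j _), hyj]
  obtain ⟨f', hf', rfl, s, hs, hvs⟩ := h.exists_eq_mon_mul_of_isToric hx hw ht hST
    (Finset.forall_mem_insert _ _ _ |>.2 ⟨hxi, hb.lt_one⟩) hj hwj hbw.lt_one hf hk₀ hmin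
  have hw0 : ∀ t ∈ (insert i S).erase j, w t ≠ 0 := fun t _ => hw.ne_zero t
  have hg : IsMonomializable 𝒪 L T w
      (f' * mon w ((insert i S).erase j) (e (α k₀) + e β)) :=
    hord s hs hw (hST hj) f' hf' _ (mon_mem_coordRing (Finset.erase_subset_erase j hST)
      fun t htj => add_nonneg (ht.nonneg _ (h.nonneg k₀ hk₀) t (Finset.mem_of_mem_erase htj))
        (ht.nonneg _ hβ t (Finset.mem_of_mem_erase htj))) (mon_ne_zero hw0 _) hvs
  have hu : w j ^ e β j ∈ coordRing 𝒪 L w T :=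
    zpow_mem_subring (apply_mem_coordRing (hST hj)) (ht.nonneg _ hβ j hj)
  refine .of_change (fun t htT => ht.eq_of_notMem t fun h => htT (hST h))
    (fun t htT => ht.apply_mem hST htT) ?_
  convert hg.unit_mul hu (by rw [map_zpow₀, hwj, one_zpow]) using 1
  rw [ht.mon_eq, mon_erase hj, mon_add hw0]
  ring

theorem isMonomializable_of_eq_sum_pow (hx : IsCoordSystem 𝒪 L x D) (hi : i ∈ T) (hiS : i ∉ S)
    (hST : S ⊆ T) (hb : IsBlock 𝒪 S x) (hxi : 𝒪.valuation (x i) < 1) {I : Finset ℕ}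
    (hI : I.Nonempty) (hord : ∀ s < I.card, IsMonomializableOfOrder 𝒪 L T s) {a c : ℕ → M}
    (hc : ∀ k ∈ I, c k ∈ coordRing 𝒪 (⊤ : IntermediateField K M) x T)
    (hvc : ∀ k ∈ I, 𝒪.valuation (c k) = 1)
    (ha : ∀ k ∈ I, IsMonomial 𝒪 (⊤ : IntermediateField K M) T S x (a k))
    (hf : f ∈ coordRing 𝒪 L x T) (hfsum : f = ∑ k ∈ I, c k * (a k * x i ^ k))
    (hg : IsMonomial 𝒪 L T S x g) : IsMonomializable 𝒪 L T x (f * g) := by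
  choose! α hα ε hε hvε ha using ha
  obtain ⟨β, hβ, η, hη, hvη, rfl⟩ := hg
  have h : IsMonomialSum K 𝒪 T (insert i S) x I (fun k => c k * ε k)
      (fun k => Function.update (α k) i k) f :=
    isMonomialSum_insert hiS (fun k hk => mul_mem (hc k hk) (hε k hk))
      (fun k hk => by rw [map_mul, hvc k hk, hvε k hk, one_mul]) hα <|
      hfsum.trans <| Finset.sum_congr rfl fun k hk => by rw [ha k hk]; ring
  have hfβ := h.isMonomializable_insert hx hiS (Finset.insert_subset hi hST) hb hxi hI hord hf
    (update_nonneg_of_mem_insert hβ le_rfl)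
  rw [mon_insert_update hiS, zpow_zero, mul_one] at hfβ
  rw [mul_left_comm]
  exact hfβ.unit_mul hη hvη

theorem IsCoordSystem.exists_forall_mul_eq (hx : IsCoordSystem 𝒪 L x D) {ι : Type*} (I : Finset ι)
    {a : ι → M} (ha : ∀ k ∈ I, a k ∈ coordRing 𝒪 (⊤ : IntermediateField K M) x T ∧ a k ≠ 0) :
    ∃ p ∈ coordRing 𝒪 L x T, p ≠ 0 ∧
      ∀ k ∈ I, ∃ b ∈ coordRing 𝒪 (⊤ : IntermediateField K M) x T, a k * b = p := by
  classical
  induction I using Finset.induction with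
  | empty => exact ⟨1, Subring.one_mem _, one_ne_zero, by simp⟩
  | insert l I _ ih =>
    obtain ⟨⟨hal, hal0⟩, ha⟩ := (Finset.forall_mem_insert _ _ _).1 ha
    obtain ⟨p, hp, hp0, hI⟩ := ih ha
    obtain ⟨b, hb, N, hN, hab⟩ := (hx.of_le le_top).exists_mul_eq_aeval hal hal0
    have hq : aeval (fun t : T => x t) N ∈ coordRing 𝒪 L x T := aeval_mem_coordRing N
    refine ⟨aeval (fun t : T => x t) N * p, mul_mem hq hp,
      mul_ne_zero ((map_ne_zero_iff _ hx.injective).2 hN) hp0,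
      (Finset.forall_mem_insert _ _ _).2 ⟨⟨b * p, mul_mem hb (coordRing_le_top hp), ?_⟩,
        fun k hk => ?_⟩⟩
    · rw [← mul_assoc, hab]
    · obtain ⟨b', hb', rfl⟩ := hI k hk
      exact ⟨b' * aeval (fun t : T => x t) N, mul_mem hb' (coordRing_le_top hq), by ring⟩

variable [IsAlgClosed M]

theorem IsCoordSystem.exists_tschirnhausen_sum (hx : IsCoordSystem 𝒪 L x D) (hi : i ∈ T)
    (hf : f ∈ coordRing 𝒪 L x T) (n : ℕ) (hlt : ∀ k ≤ n, 𝒪.valuation ((D i)^[k] f) < 1)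
    (hvf : 𝒪.valuation ((D i)^[n + 1] f) = 1) :
    ∃ (I : Finset ℕ) (a c : ℕ → M), I.Nonempty ∧ I.card ≤ n + 1 ∧
      (∀ k ∈ I, a k ∈ coordRing 𝒪 (⊤ : IntermediateField K M) x (T.erase i) ∧ a k ≠ 0 ∧
        c k ∈ coordRing 𝒪 (⊤ : IntermediateField K M) x T ∧ 𝒪.valuation (c k) = 1) ∧
      f = ∑ k ∈ I, c k * (a k * ((D i)^[n] f) ^ k) := by
  have hxtop : IsCoordSystem 𝒪 (⊤ : IntermediateField K M) x D := hx.of_le le_top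
  have hftop := coordRing_le_top hf
  have hz := hxtop.iterate_mem hftop i n
  have hDz : 𝒪.valuation (D i ((D i)^[n] f)) = 1 := by rwa [← Function.iterate_succ_apply' (D i)]
  set z := (D i)^[n] f with hfz
  have hx' := hxtop.update (hxtop.coordRing_le hz) (𝒪.valuation.ne_zero_iff.1 (hDz ▸ one_ne_zero))
  have hR := hxtop.coordRing_update hi hz hDz
  have hR₀ : coordRing 𝒪 (⊤ : IntermediateField K M) (Function.update x i z) (T.erase i) =
      coordRing 𝒪 (⊤ : IntermediateField K M) x (T.erase i) :=
    coordRing_congr fun t ht => Function.update_of_ne (Finset.ne_of_mem_erase ht) _ _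
  refine exists_finset_tschirnhausen (fun a ha => hxtop.valuation_le_one ha)
    (fun a ha => hxtop.apply_mem ha i) hz (hlt n le_rfl) hx.algebraMap_mem
    (fun a ha h => hxtop.inv_mem ha h) hDz (hxtop.coordRing_subset (T.erase_subset i))
    (fun a ha => hxtop.apply_eq_zero ha (T.notMem_erase i)) (fun h hh => ?_) hftop hlt hfz.symm
  rw [← hR, ← hR₀]
  simpa only [Function.update_self] using hx'.exists_eq_add_mul hi
    (by simpa only [Function.update_self] using hlt n le_rfl) (hR.symm ▸ hh)

theorem IsCoordSystem.exists_isMonomial_and_forall (hx : IsCoordSystem 𝒪 L x D)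
    (hM : ∀ f ∈ coordRing 𝒪 L x T, f ≠ 0 → IsMonomializable 𝒪 L T x f)
    {ι : Type*} (I : Finset ι) {a : ι → M}
    (ha : ∀ k ∈ I, a k ∈ coordRing 𝒪 (⊤ : IntermediateField K M) x T ∧ a k ≠ 0)
    (hg : g ∈ coordRing 𝒪 L x T) (hg0 : g ≠ 0) :
    ∃ y D', IsCoordSystem 𝒪 L y D' ∧ (∀ i ∉ T, y i = x i) ∧ (∀ i ∈ T, x i ∈ coordRing 𝒪 L y T) ∧
      ∃ S ⊆ T, IsBlock 𝒪 S y ∧ IsMonomial 𝒪 L T S y g ∧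
        ∀ k ∈ I, IsMonomial 𝒪 (⊤ : IntermediateField K M) T S y (a k) := by
  obtain ⟨p, hp, hp0, hab⟩ := hx.exists_forall_mul_eq I ha
  obtain ⟨y, D', hy, hyx, hxy, S, hST, hb, α, hα, ε, hε, hvε, h⟩ :=
    hM (p * g) (mul_mem hp hg) (mul_ne_zero hp0 hg0)
  have hle := hy.coordRing_le_coordRing hxy
  refine ⟨y, D', hy, hyx, hxy, S, hST, hb,
    hy.exists_eq_mul_mon hST hb.lt_one hα (hle hg) (hle hp) hε hvε (by rw [mul_comm, h]),
    fun k hk => ?_⟩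
  obtain ⟨b, hb', rfl⟩ := hab k hk
  have hletop := hy.coordRing_top_le hle
  exact (hy.of_le le_top).exists_eq_mul_mon hST hb.lt_one hα (hletop (ha k hk).1)
    (mul_mem (hletop hb') (coordRing_le_top (hle hg))) (coordRing_le_top hε) hvε
    (by rw [← h, mul_assoc])

theorem IsCoordSystem.exists_apply_eq_and_isMonomial (hx : IsCoordSystem 𝒪 L x D) (hi : i ∈ T)
    {z : M} (hz : z ∈ coordRing 𝒪 L x T) (hDz : 𝒪.valuation (D i z) = 1)
    (hM : ∀ (x : σ → M) (D : σ → Derivation K M M), IsCoordSystem 𝒪 L x D →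
      ∀ f ∈ coordRing 𝒪 L x (T.erase i), f ≠ 0 → IsMonomializable 𝒪 L (T.erase i) x f)
    {ι : Type*} (I : Finset ι) {a : ι → M}
    (ha : ∀ k ∈ I, a k ∈ coordRing 𝒪 (⊤ : IntermediateField K M) x (T.erase i) ∧ a k ≠ 0)
    (hg : g ∈ coordRing 𝒪 L x (T.erase i)) (hg0 : g ≠ 0) :
    ∃ y D', IsCoordSystem 𝒪 L y D' ∧ y i = z ∧ (∀ t ∉ T, y t = x t) ∧
      coordRing 𝒪 L x T ≤ coordRing 𝒪 L y T ∧
      ∃ S ⊆ T.erase i, IsBlock 𝒪 S y ∧ IsMonomial 𝒪 L (T.erase i) S y g ∧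
        ∀ k ∈ I, IsMonomial 𝒪 (⊤ : IntermediateField K M) (T.erase i) S y (a k) := by
  have hx₁ := hx.update (hx.coordRing_le hz) (𝒪.valuation.ne_zero_iff.1 (hDz ▸ one_ne_zero))
  have hR₀ (L' : IntermediateField K M) :
      coordRing 𝒪 L' (Function.update x i z) (T.erase i) = coordRing 𝒪 L' x (T.erase i) :=
    coordRing_congr fun t ht => Function.update_of_ne (Finset.ne_of_mem_erase ht) _ _
  obtain ⟨y, D', hy, hyx, hxy, S, hST, hb, hgS, haS⟩ := hx₁.exists_isMonomial_and_forall
    (hM _ _ hx₁) I (by rwa [hR₀]) (by rwa [hR₀]) hg0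
  have hyi : y i = z := (hyx i (T.notMem_erase i)).trans (Function.update_self ..)
  refine ⟨y, D', hy, hyi, fun t ht => ?_, ?_, S, hST, hb, hgS, haS⟩
  · rw [hyx t fun h => ht (Finset.mem_of_mem_erase h),
      Function.update_of_ne (ne_of_mem_of_not_mem hi ht).symm]
  · rw [← hx.coordRing_update hi hz hDz]
    refine hy.coordRing_le_coordRing fun t ht => ?_
    obtain rfl | hti := eq_or_ne t i
    · rw [Function.update_self, ← hyi]
      exact apply_mem_coordRing hi
    · exact hy.coordRing_subset (T.erase_subset i) (hxy t (Finset.mem_erase.2 ⟨hti, ht⟩))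

-- After a Tschirnhausen transformation `f` is a sum of at most `n + 1` terms, which become
-- monomials once the remaining coordinates are changed; the sum then has order at most `n`.
theorem isMonomializableOfOrder
    (hM : ∀ i ∈ T, ∀ (x : σ → M) (D : σ → Derivation K M M), IsCoordSystem 𝒪 L x D →
      ∀ f ∈ coordRing 𝒪 L x (T.erase i), f ≠ 0 → IsMonomializable 𝒪 L (T.erase i) x f) (d : ℕ) :
    IsMonomializableOfOrder 𝒪 L T d := by
  induction d using Nat.strong_induction_on with
  | _ d ih =>
  intro x D hx i hi f hf g hg hg0 hd
  by_cases! hs : ∃ s < d, 𝒪.valuation ((D i)^[s] f) = 1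
  · obtain ⟨s, hs, hvs⟩ := hs
    exact ih s hs hx hi f hf g hg hg0 hvs
  obtain _ | n := d
  · exact ((hM i hi x D hx g hg hg0).of_erase).unit_mul hf hd
  have hlt : ∀ k ≤ n, 𝒪.valuation ((D i)^[k] f) < 1 := fun k hk =>
    (hx.valuation_le_one (hx.iterate_mem hf i k)).lt_of_ne (hs k (by omega))
  obtain ⟨I, a, c, hI, hcard, hac, hfsum⟩ := hx.exists_tschirnhausen_sum hi hf n hlt hd
  have hDz : 𝒪.valuation (D i ((D i)^[n] f)) = 1 := by rwa [← Function.iterate_succ_apply' (D i)]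
  obtain ⟨y, D', hy, hyi, hyx, hle, S, hST, hb, hgS, haS⟩ := hx.exists_apply_eq_and_isMonomial hi
    (hx.iterate_mem hf i n) hDz (hM i hi) I (fun k hk => ⟨(hac k hk).1, (hac k hk).2.1⟩) hg hg0
  have hsub := T.erase_subset i
  exact .of_change hyx (fun t ht => hle (apply_mem_coordRing ht)) <|
    isMonomializable_of_eq_sum_pow hy hi (fun h => T.notMem_erase i (hST h)) (hST.trans hsub) hb
      (hyi ▸ hlt n le_rfl) hI (fun s hs => ih s (by omega))
      (fun k hk => hy.coordRing_top_le hle (hac k hk).2.2.1) (fun k hk => (hac k hk).2.2.2)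
      (fun k hk => (haS k hk).of_subset (hy.of_le le_top) hsub) (hle hf) (hyi ▸ hfsum)
      (hgS.of_subset hy hsub)

end Order

section Monomialization

variable {K M : Type u} [Field K] [Field M] [Algebra K M] {σ : Type} [DecidableEq σ]
  {𝒪 : ValuationSubring M} {L : IntermediateField K M} {x : σ → M} {D : σ → Derivation K M M}
  {S T : Finset σ} {i : σ} {f : M}

theorem iterate_derivation_pow {Δ : Derivation K M M} {z : M} (hz : Δ z = 1) (k s : ℕ) :
    Δ^[s] (z ^ k) = k.descFactorial s * z ^ (k - s) := by
  induction s with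
  | zero => simp
  | succ s ih =>
    rw [Function.iterate_succ_apply', ih, Nat.descFactorial_succ, Nat.cast_mul]
    simp only [Derivation.leibniz, Derivation.leibniz_pow, hz, Derivation.map_natCast, smul_eq_mul,
      nsmul_eq_mul, mul_one, mul_zero, add_zero]
    rw [Nat.sub_sub]
    ring

theorem exists_eval₂_eq_aeval (p : MvPolynomial T K) :
    ∃ q : Polynomial (coordRing 𝒪 L x (T.erase i)),
      q.eval₂ (coordRing 𝒪 L x (T.erase i)).subtype (x i) = aeval (fun t : T => x t) p := by
  induction p using MvPolynomial.induction_on with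
  | C c =>
    refine ⟨.C ⟨algebraMap K M c, algebraMap_mem_coordRing c⟩, ?_⟩
    rw [Polynomial.eval₂_C, MvPolynomial.algHom_C, Subring.subtype_apply]
  | add p q hp hq =>
    obtain ⟨p', hp⟩ := hp
    obtain ⟨q', hq⟩ := hq
    exact ⟨p' + q', by rw [map_add, ← hp, ← hq, Polynomial.eval₂_add]⟩
  | mul_X p t hp =>
    obtain ⟨p', hp⟩ := hp
    rw [map_mul, ← hp, MvPolynomial.aeval_X]
    obtain hti | hti := eq_or_ne (t : σ) i
    · exact ⟨p' * .X, by rw [Polynomial.eval₂_mul_X, hti]⟩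
    · exact ⟨p' * .C ⟨x t, apply_mem_coordRing (Finset.mem_erase.2 ⟨hti, t.2⟩)⟩, by
        rw [Polynomial.eval₂_mul, Polynomial.eval₂_C, Subring.subtype_apply]⟩

theorem exists_aeval_eq_sum_pow {p : MvPolynomial T K} (hp : aeval (fun t : T => x t) p ≠ 0) :
    ∃ (I : Finset ℕ) (b : ℕ → M), I.Nonempty ∧
      (∀ k ∈ I, b k ∈ coordRing 𝒪 L x (T.erase i) ∧ b k ≠ 0) ∧
      aeval (fun t : T => x t) p = ∑ k ∈ I, b k * x i ^ k := by
  obtain ⟨q, hq⟩ := exists_eval₂_eq_aeval (𝒪 := 𝒪) (L := L) (i := i) p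
  have hq0 : q ≠ 0 := fun h => hp (by rw [← hq, h, Polynomial.eval₂_zero])
  exact ⟨q.support, fun k => q.coeff k, Polynomial.support_nonempty.2 hq0,
    fun k hk => ⟨(q.coeff k).2, fun h => Polynomial.mem_support_iff.1 hk (Subtype.ext h)⟩,
    hq.symm.trans Polynomial.eval₂_eq_sum⟩

variable [CharZero K]

theorem isMonomializable_empty (hx : IsCoordSystem 𝒪 L x D) (hf : f ∈ coordRing 𝒪 L x ∅)
    (hf0 : f ≠ 0) : IsMonomializable 𝒪 L ∅ x f := by
  obtain ⟨b, hb, p, hp, hfb⟩ := hx.exists_mul_eq_aeval hf hf0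
  obtain ⟨c, rfl⟩ := MvPolynomial.C_surjective _ p
  have hc : c ≠ 0 := fun h => hp (by rw [h, map_zero])
  have hfbc : f * (b * algebraMap K M c⁻¹) = 1 := by
    rw [← mul_assoc, hfb, MvPolynomial.algHom_C, ← map_mul, mul_inv_cancel₀ hc, map_one]
  have hbc := hx.valuation_le_one (mul_mem hb (algebraMap_mem_coordRing c⁻¹))
  have hvf : 𝒪.valuation f = 1 := (hx.valuation_le_one hf).antisymm <| by
    rw [← 𝒪.valuation.map_one, ← hfbc, map_mul]
    exact mul_le_of_le_one_right' hbc
  exact IsMonomial.isMonomializable (S := ∅) hx subset_rfl ⟨by simp, by simp⟩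
    ⟨0, by simp, f, hf, hvf, by rw [mon_zero, mul_one]⟩

-- The largest exponent whose coefficient is a unit is the order.
theorem exists_valuation_iterate_sum_mul_pow_eq_one {Δ : Derivation K M M} {z : M} (hz : Δ z = 1)
    (hvz : 𝒪.valuation z ≤ 1) (hK : ∀ c : K, algebraMap K M c ∈ 𝒪) {I : Finset ℕ} {b : ℕ → M}
    (hΔb : ∀ k ∈ I, Δ (b k) = 0) (hvb : ∀ k ∈ I, 𝒪.valuation (b k) ≤ 1) {k₀ : ℕ} (hk₀ : k₀ ∈ I)
    (hvk₀ : 𝒪.valuation (b k₀) = 1) :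
    ∃ s, 𝒪.valuation (Δ^[s] (∑ k ∈ I, b k * z ^ k)) = 1 := by
  classical
  have hne : ({k ∈ I | 𝒪.valuation (b k) = 1} : Finset ℕ).Nonempty :=
    ⟨k₀, Finset.mem_filter.2 ⟨hk₀, hvk₀⟩⟩
  obtain ⟨hsI, hvs⟩ := Finset.mem_filter.1 (Finset.max'_mem _ hne)
  have hmax := Finset.le_max' ({k ∈ I | 𝒪.valuation (b k) = 1} : Finset ℕ)
  set s := ({k ∈ I | 𝒪.valuation (b k) = 1} : Finset ℕ).max' hne
  have hterm {k : ℕ} (hk : k ∈ I) :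
      Δ^[s] (b k * z ^ k) = b k * (k.descFactorial s * z ^ (k - s)) := by
    rw [iterate_derivation_mul (hΔb k hk), iterate_derivation_pow hz]
  refine ⟨s, ?_⟩
  rw [iterate_derivation_sum, ← Finset.add_sum_erase _ _ hsI]
  refine valuation_eq_one_of_sub_lt_one (a := Δ^[s] (b s * z ^ s)) ?_ ?_
  · rw [hterm hsI, Nat.sub_self, pow_zero, mul_one, Nat.descFactorial_self, map_mul, hvs, one_mul,
      valuation_natCast_eq_one hK s.factorial_ne_zero]
  rw [sub_add_cancel_left, Valuation.map_neg]
  refine Valuation.map_sum_lt _ one_ne_zero fun k hk => ?_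
  obtain ⟨hks, hk⟩ := Finset.mem_erase.1 hk
  rw [hterm hk]
  obtain hlt | hgt := lt_or_gt_of_ne hks
  · rw [Nat.descFactorial_of_lt hlt, Nat.cast_zero, zero_mul, mul_zero, map_zero]
    exact zero_lt_one
  · have hbk : 𝒪.valuation (b k) < 1 := (hvb k hk).lt_of_ne fun h =>
      (hmax k (Finset.mem_filter.2 ⟨hk, h⟩)).not_gt hgt
    rw [map_mul, map_mul, map_pow]
    exact mul_lt_one_of_lt_of_le hbk
      (mul_le_one' (mod_cast valuation_intCast_le_one (k.descFactorial s : ℤ))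
        (pow_le_one' hvz _))

theorem IsCoordSystem.exists_eq_mon_mul_of_eq_sum_pow (hx : IsCoordSystem 𝒪 L x D) (hi : i ∈ T)
    (hST : S ⊆ T.erase i) {I : Finset ℕ} {α : ℕ → σ → ℤ} {ε : ℕ → M} {k₀ : ℕ} (hk₀ : k₀ ∈ I)
    (hα : ∀ t ∈ S, 0 ≤ α k₀ t) (hmin : ∀ k ∈ I, ∀ t ∈ S, α k₀ t ≤ α k t)
    (hε : ∀ k ∈ I, ε k ∈ coordRing 𝒪 (⊤ : IntermediateField K M) x (T.erase i))
    (hvε : 𝒪.valuation (ε k₀) = 1) (hf : f ∈ coordRing 𝒪 L x T)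
    (hfsum : f = ∑ k ∈ I, ε k * mon x S (α k) * x i ^ k) :
    ∃ f' ∈ coordRing 𝒪 L x T, f = mon x S (α k₀) * f' ∧ ∃ s, 𝒪.valuation ((D i)^[s] f') = 1 := by
  have hxtop : IsCoordSystem 𝒪 (⊤ : IntermediateField K M) x D := hx.of_le le_top
  have hST' := hST.trans (T.erase_subset i)
  have hc : ∀ k ∈ I, ε k * mon x S (α k - α k₀) ∈
      coordRing 𝒪 (⊤ : IntermediateField K M) x (T.erase i) := fun k hk =>
    mul_mem (hε k hk) (mon_mem_coordRing hST fun t ht => sub_nonneg.2 (hmin k hk t ht))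
  have hfsum' : f = ∑ k ∈ I, ε k * x i ^ k * mon x S (α k) :=
    hfsum.trans (Finset.sum_congr rfl fun k _ => mul_right_comm _ _ _)
  refine ⟨_, hx.sum_mul_mon_sub_mem hST' (fun k hk => mul_mem
    (hxtop.coordRing_subset (T.erase_subset i) (hε k hk)) (pow_mem (apply_mem_coordRing hi) k)) hα
    hmin (hfsum' ▸ hf), hfsum'.trans (sum_mul_mon_eq (fun t _ => hx.ne_zero t) I _ α (α k₀)), ?_⟩
  simp only [mul_right_comm _ (x i ^ _)]
  exact exists_valuation_iterate_sum_mul_pow_eq_one (by rw [hx.apply_eq, if_pos rfl])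
    (hx.valuation_le_one (T := T) (apply_mem_coordRing hi)) hx.algebraMap_mem
    (fun k hk => hxtop.apply_eq_zero (hc k hk) (T.notMem_erase i))
    (fun k hk => hxtop.valuation_le_one (hc k hk)) hk₀
    (by rw [sub_self, mon_zero, mul_one, hvε])

variable [IsAlgClosed M]

theorem IsCoordSystem.exists_eq_mon_mul_aeval (hx : IsCoordSystem 𝒪 L x D) (hi : i ∈ T)
    (hM : ∀ (x : σ → M) (D : σ → Derivation K M M), IsCoordSystem 𝒪 L x D →
      ∀ f ∈ coordRing 𝒪 L x (T.erase i), f ≠ 0 → IsMonomializable 𝒪 L (T.erase i) x f)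
    {p : MvPolynomial T K} (hp : aeval (fun t : T => x t) p ≠ 0) :
    ∃ y D', IsCoordSystem 𝒪 L y D' ∧ (∀ t ∉ T, y t = x t) ∧
      coordRing 𝒪 L x T ≤ coordRing 𝒪 L y T ∧
      ∃ g ∈ coordRing 𝒪 L y (T.erase i), g ≠ 0 ∧ ∃ f ∈ coordRing 𝒪 L y T,
        aeval (fun t : T => x t) p = g * f ∧ ∃ s, 𝒪.valuation ((D' i)^[s] f) = 1 := by
  obtain ⟨I, b, hI, hb, hsum⟩ := exists_aeval_eq_sum_pow (𝒪 := 𝒪) (L := L) (i := i) hp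
  obtain ⟨y, D₁, hy, hyi, hyx, hle, S, hST, hbS, -, hbmon⟩ :=
    hx.exists_apply_eq_and_isMonomial (g := 1) hi (apply_mem_coordRing hi)
      (by rw [hx.apply_eq, if_pos rfl, map_one]) hM I
      (fun k hk => ⟨coordRing_le_top (hb k hk).1, (hb k hk).2⟩) (Subring.one_mem _) one_ne_zero
  choose! α hα ε hε hvε hbε using hbmon
  obtain ⟨w, D', e, hw, ht, -, k₀, hk₀, hmin⟩ := hy.exists_isToric_forall_le hbS I hI α
  have hST' := hST.trans (T.erase_subset i)
  have hle' : coordRing 𝒪 L x T ≤ coordRing 𝒪 L w T := hle.trans (ht.coordRing_le hw hST')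
  have hwi : w i = x i := (ht.eq_of_notMem i fun h => T.notMem_erase i (hST h)).trans hyi
  have hnonneg := ht.nonneg _ (hα k₀ hk₀)
  obtain ⟨f, hf, hpf, hs⟩ := hw.exists_eq_mon_mul_of_eq_sum_pow hi hST hk₀ hnonneg hmin
    (fun k hk => ht.coordRing_le (hw.of_le le_top) hST (hε k hk)) (hvε k₀ hk₀)
    (hle' (aeval_mem_coordRing p))
    (hsum.trans <| Finset.sum_congr rfl fun k hk => by rw [hbε k hk, ht.mon_eq, hwi])
  exact ⟨w, D', hw, fun t h => (ht.eq_of_notMem t fun h' => h (hST' h')).trans (hyx t h), hle',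
    _, mon_mem_coordRing hST hnonneg, mon_ne_zero (fun t _ => hw.ne_zero t) _, f, hf, hpf, hs⟩

theorem IsCoordSystem.isMonomializable (hx : IsCoordSystem 𝒪 L x D) (hf : f ∈ coordRing 𝒪 L x T)
    (hf0 : f ≠ 0) : IsMonomializable 𝒪 L T x f := by
  induction T using Finset.strongInduction generalizing x D f with
  | H T ih =>
  obtain rfl | ⟨i, hi⟩ := T.eq_empty_or_nonempty
  · exact isMonomializable_empty hx hf hf0
  have hM : ∀ i ∈ T, ∀ (x : σ → M) (D : σ → Derivation K M M), IsCoordSystem 𝒪 L x D →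
      ∀ f ∈ coordRing 𝒪 L x (T.erase i), f ≠ 0 → IsMonomializable 𝒪 L (T.erase i) x f :=
    fun i hi x D hx f hf hf0 => ih _ (Finset.erase_ssubset hi) hx hf hf0
  obtain ⟨b, hb, p, hp, hfb⟩ := hx.exists_mul_eq_aeval hf hf0
  obtain ⟨y, D', hy, hyx, hle, g, hg, hg0, f', hf', hpf, s, hs⟩ :=
    hx.exists_eq_mon_mul_aeval hi (hM i hi) ((map_ne_zero_iff _ hx.injective).2 hp)
  refine .of_mul hf hb (.of_change hyx (fun t ht => hle (apply_mem_coordRing ht)) ?_)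
  rw [hfb, hpf, mul_comm]
  exact isMonomializableOfOrder hM s hy hi f' hf' g hg hg0 hs

end Monomialization

section CompositeValuation

variable {B N F : Type*} [CommRing B] [Field N] [Algebra B N] [Field F] {ρ : B →+* F}

theorem mem_or_exists_algebraMap_eq_inv (A : ValuationSubring F) [IsLocalHom ρ] (b : B) :
    ρ b ∈ A ∨ ∃ c, ρ c ∈ A ∧ algebraMap B N c = (algebraMap B N b)⁻¹ := by
  refine or_iff_not_imp_left.2 fun hb => ?_
  have hb0 : ρ b ≠ 0 := fun h => hb (h ▸ A.zero_mem)
  obtain ⟨u, rfl⟩ := isUnit_of_map_unit ρ b (isUnit_iff_ne_zero.2 hb0)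
  refine ⟨↑u⁻¹, ?_, map_units_inv (algebraMap B N) u⟩
  rw [map_units_inv ρ u]
  exact (A.mem_or_inv_mem _).resolve_left hb

variable [IsDomain B] [ValuationRing B] [IsFractionRing B N] (N ρ)

/-- The composition of the valuation ring `B` with a valuation ring `A` of `F` along a local
homomorphism `ρ : B →+* F`: the elements of `B` that `ρ` maps into `A`, as a valuation subring of
the fraction field `N` of `B`. -/
def compositeValuationSubring [IsLocalHom ρ] (A : ValuationSubring F) :
    ValuationSubring N where
  __ := (A.toSubring.comap ρ).map (algebraMap B N)
  mem_or_inv_mem' n := by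
    rcases ValuationRing.isInteger_or_isInteger B n with ⟨b, rfl⟩ | ⟨b, hb⟩
    · exact (mem_or_exists_algebraMap_eq_inv A b).imp_left fun h => ⟨b, h, rfl⟩
    · refine (mem_or_exists_algebraMap_eq_inv (N := N) A b).symm.imp ?_ fun h => ⟨b, h, hb⟩
      rintro ⟨c, hc, hcb⟩
      exact ⟨c, hc, by rw [hcb, hb, inv_inv]⟩

theorem exists_compositeValuationSubring_residue [IsLocalHom ρ]
    (A : ValuationSubring F) :
    ∃ π : compositeValuationSubring N ρ A →+* A, ∀ b (hb : ρ b ∈ A),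
      ∃ h, π ⟨algebraMap B N b, h⟩ = ⟨ρ b, hb⟩ := by
  let S := A.toSubring.comap ρ
  let e : S ≃+* compositeValuationSubring N ρ A :=
    S.equivMapOfInjective (algebraMap B N) (IsFractionRing.injective B N)
  let r : S →+* A := ρ.restrict S A fun _ h => h
  exact ⟨r.comp e.symm.toRingHom, fun b hb =>
    ⟨⟨b, hb, rfl⟩, congrArg r (e.symm_apply_apply ⟨b, hb⟩)⟩⟩

variable {N ρ} in
theorem exists_specialization_of_composite [IsLocalHom ρ] {L V : Type*} [Field L]
    [CommRing V] [IsDomain V] [ValuationRing V] [Algebra V F] [IsFractionRing V F] (ψ : L →+* N) :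
    ∃ (W : ValuationSubring L) (π : W →+* V), ∀ l b v, ψ l = algebraMap B N b →
      ρ b = algebraMap V F v → ∃ h : l ∈ W, π ⟨l, h⟩ = v := by
  let A := (ValuationRing.valuation V F).valuationSubring
  let eV : V ≃+* A := ValuationRing.equivInteger V F
  obtain ⟨π, hπ⟩ := exists_compositeValuationSubring_residue N ρ A
  let W := (compositeValuationSubring N ρ A).comap ψ
  let ψW : W →+* compositeValuationSubring N ρ A := ψ.restrict W _ fun _ h => h
  refine ⟨W, eV.symm.toRingHom.comp (π.comp ψW), fun l b v hl hv => ?_⟩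
  have hbv : eV v = ⟨ρ b, hv ▸ (eV v).2⟩ := Subtype.ext hv.symm
  obtain ⟨h, hπb⟩ := hπ b (hv ▸ (eV v).2)
  refine ⟨show ψ l ∈ _ from hl ▸ h, eV.symm_apply_eq.2 ?_⟩
  rw [hbv, ← hπb]
  exact congrArg π (Subtype.ext hl)

end CompositeValuation

section Specialization

theorem exists_valuationSubring_extension {L M : Type*} [Field L] [Field M] (g : L →+* M)
    (W : ValuationSubring L) : ∃ 𝒪 : ValuationSubring M, ∀ l, g l ∈ 𝒪 ↔ l ∈ W := by
  obtain ⟨𝒪, h𝒪, hloc⟩ := IsLocalRing.exists_factor_valuationRing (g.comp W.subtype)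
  refine ⟨𝒪, fun l => ⟨fun hl => ?_, fun hl => h𝒪 ⟨l, hl⟩⟩⟩
  by_contra hlW
  have hl0 : l ≠ 0 := fun h => hlW (h ▸ W.zero_mem)
  have hinv : l⁻¹ ∈ W := (W.mem_or_inv_mem l).resolve_left hlW
  have hunit : IsUnit ((g.comp W.subtype).codRestrict 𝒪.toSubring h𝒪 ⟨l⁻¹, hinv⟩) := by
    refine .of_mul_eq_one (⟨g l, hl⟩ : 𝒪.toSubring) (Subtype.ext ?_)
    change g l⁻¹ * g l = 1
    rw [← map_mul, inv_mul_cancel₀ hl0, map_one]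
  obtain ⟨w, hw⟩ := (isUnit_of_map_unit _ _ hunit).exists_right_inv
  have hwl : (w : L) = l⁻¹⁻¹ := eq_inv_of_mul_eq_one_right (congrArg Subtype.val hw)
  exact hlW (inv_inv l ▸ hwl ▸ w.2)

-- The coordinate `X none` is sent to `a + t`: a generic deformation of the point `(a, x)`.
theorem exists_powerSeries_lift {K F : Type*} [Field K] [Field F] [Algebra K F] {τ : Type*}
    {x : τ → F} (hx : AlgebraicIndependent K x) (a : F) :
    ∃ g : MvPolynomial (Option τ) K →+* PowerSeries F, Function.Injective g ∧
      ∀ p, PowerSeries.constantCoeff (g p) = aeval (fun o : Option τ => o.elim a x) p := by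
  let e := MvPolynomial.optionEquivLeft K τ
  let m : Polynomial (MvPolynomial τ K) →+* Polynomial F :=
    Polynomial.mapRingHom (aeval x : MvPolynomial τ K →ₐ[K] F).toRingHom
  let s : Polynomial F →+* Polynomial F := (Polynomial.taylorAlgHom a).toRingHom
  let c : Polynomial F →+* PowerSeries F := Polynomial.coeToPowerSeries.ringHom
  refine ⟨(c.comp s).comp (m.comp e.toRingEquiv.toRingHom), ?_, fun p => ?_⟩
  · have hc : Function.Injective c := Polynomial.coe_injective F
    have hs : Function.Injective s := Polynomial.taylor_injective a
    have hm : Function.Injective m := Polynomial.map_injective _ hx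
    exact (hc.comp hs).comp (hm.comp e.injective)
  · refine RingHom.congr_fun (f := (PowerSeries.constantCoeff (R := F)).comp
      ((c.comp s).comp (m.comp e.toRingEquiv.toRingHom))) (g := (aeval _).toRingHom)
      (MvPolynomial.ringHom_ext (fun r => ?_) fun o => ?_) p
    · simp [c, s, m, e]
    · cases o <;> simp [c, s, m, e]

theorem isAlgebraic_of_mem_etaleClosure {P R V : Type u} [CommRing P] [CommRing R] [IsDomain R]
    [CommRing V] [IsDomain V] [Algebra R V] [FaithfulSMul R V] {ε : P →+* R}
    (hε : Function.Surjective ε) {b : V}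
    (hb : b ∈ etaleClosure ((algebraMap R V).comp ε) ⊤) : IsAlgebraic R b := by
  obtain ⟨E, _, j, φ, hφ, e, rfl⟩ := (mem_etaleClosure_iff fun _ => Subring.mem_top _).1 hb
  obtain ⟨E₀, _, j₀, q, hj₀, -, -, hlift⟩ := exists_etale_pushout hε hφ.etale
  obtain ⟨φ₀, hφ₀, rfl⟩ := hlift V (algebraMap R V) φ hφ.comp_eq
  let F := FractionRing V
  have hRF : Function.Injective (algebraMap R F) := FaithfulSMul.algebraMap_injective R F
  have hφF : IsEtaleModel (algebraMap R F) ⊤ j₀ ((algebraMap V F).comp φ₀) :=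
    ⟨hj₀, by rw [RingHom.comp_assoc, hφ₀]; rfl, fun _ => Subring.mem_top _⟩
  have halg : IsAlgebraic R (algebraMap V F (φ₀ (q e))) := hφF.isAlgebraic hRF (q e)
  exact (isAlgebraic_algebraMap_iff (IsFractionRing.injective V F)).1 halg

theorem algebraicIndependent_of_isAlgebraic_adjoin {K V : Type*} [Field K] [CommRing V] [IsDomain V]
    [Algebra K V] {τ τ' : Type*} [Finite τ'] {x : τ → V} {y : τ' → V}
    (hx : AlgebraicIndependent K x) (h : ∀ t, IsAlgebraic (Algebra.adjoin K (Set.range y)) (x t))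
    (hcard : ENat.card τ' ≤ ENat.card τ) : AlgebraicIndependent K y := by
  let N := AlgebraicIndependent.matroid K V
  have hxy : Set.range x ⊆ N.closure (Set.range y) := by
    rw [AlgebraicIndependent.matroid_closure_eq]
    rintro _ ⟨t, rfl⟩
    exact h t
  have hrank : ENat.card τ' ≤ N.eRk (Set.range y) := calc
    ENat.card τ' ≤ ENat.card τ := hcard
    _ ≤ (Set.range x).encard := hx.injective.encard_range
    _ ≤ N.eRk (N.closure (Set.range y)) :=
      Matroid.Indep.encard_le_eRk_of_subset (M := N) hx.coe_range hxy
    _ = N.eRk (Set.range y) := N.eRk_closure_eq _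
  have hle : (Set.range y).encard ≤ ENat.card τ' := by
    simpa using Set.encard_image_le y Set.univ
  have hinj : Function.Injective y := by
    refine Set.injOn_univ.1 (Set.finite_univ.injOn_of_encard_image_eq ?_)
    simpa using hle.antisymm (hrank.trans (N.eRk_le_encard _))
  have hindep : N.Indep (Set.range y) :=
    (N.isRkFinite_of_finite (Set.finite_range y)).indep_of_encard_le_eRk (hle.trans hrank)
  exact (algebraicIndependent_subtype_range hinj).1 hindep

theorem algebraicIndependent_of_mem_etaleClosure {K V : Type u} [Field K] [CommRing V] [IsDomain V]
    [Algebra K V] {τ τ' : Type} [Finite τ'] {x : τ → V} {y : τ' → V}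
    (hx : AlgebraicIndependent K x)
    (h : ∀ t, x t ∈ etaleClosure (aeval y : MvPolynomial τ' K →ₐ[K] V).toRingHom ⊤)
    (hcard : ENat.card τ' ≤ ENat.card τ) : AlgebraicIndependent K y := by
  refine algebraicIndependent_of_isAlgebraic_adjoin hx (fun t => ?_) hcard
  rw [Algebra.adjoin_range_eq_range_aeval]
  exact isAlgebraic_of_mem_etaleClosure
    (ε := (aeval y : MvPolynomial τ' K →ₐ[K] V).rangeRestrict.toRingHom)
    (AlgHom.rangeRestrict_surjective _) (h t)

theorem apply_mem_etaleClosure_comp {P P₀ M V : Type u} [CommRing P] [CommRing P₀] [CommRing M]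
    [CommRing V] {ι : P₀ →+* P} {ε : P →+* P₀} (hε : ε.comp ι = RingHom.id P₀) {z : P}
    (hz : ∀ p, ε p = 0 → z ∣ p) {i : P →+* M} {A : Subring M} (hi : ∀ p, i p ∈ A) (π : A →+* V)
    (hπz : π ⟨i z, hi z⟩ = 0) {b : M} (hb : b ∈ etaleClosure i A) (hbA : b ∈ A) :
    π ⟨b, hbA⟩ ∈ etaleClosure ((π.comp (i.codRestrict A hi)).comp ι) ⊤ := by
  obtain ⟨E, _, j, φ, hφ, e, rfl⟩ := (mem_etaleClosure_iff hi).1 hb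
  obtain rfl := hφ.comp_eq
  obtain ⟨E₀, _, j₀, q, hj₀, -, -, -, hlift⟩ := exists_etale_specialization hε hz hφ.etale
  obtain ⟨g, hgj, hgq⟩ := hlift V (π.comp (φ.codRestrict A hφ.mem)) hπz
  exact (mem_etaleClosure_iff fun _ => Subring.mem_top _).2
    ⟨E₀, _, j₀, g, ⟨hj₀, hgj, fun _ => Subring.mem_top _⟩, q e, RingHom.congr_fun hgq e⟩

theorem IsCoordSystem.specialization_mem_etaleClosure {K M V : Type u} [Field K] [Field M]
    [Algebra K M] {σ : Type} [DecidableEq σ] {𝒪 : ValuationSubring M} {L : IntermediateField K M}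
    {y : σ → M} {D : σ → Derivation K M M} {T : Finset σ} [CommRing V] [Algebra K V]
    (hy : IsCoordSystem 𝒪 L y D) {π : valRing 𝒪 L →+* V}
    (hπ : ∀ c h, π ⟨algebraMap K M c, h⟩ = algebraMap K V c) {i : σ} (hi : i ∈ T)
    (hi0 : π ⟨y i, hy.mem i⟩ = 0) {b : M} (hb : b ∈ coordRing 𝒪 L y T) (hb' : b ∈ valRing 𝒪 L) :
    π ⟨b, hb'⟩ ∈ etaleClosure (aeval (fun t : ↥(T.erase i) => π ⟨y t, hy.mem t⟩) :
      MvPolynomial ↥(T.erase i) K →ₐ[K] V).toRingHom ⊤ := by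
  have hinj : Function.Injective (Subtype.map id fun _ => Finset.mem_of_mem_erase :
      ↥(T.erase i) → T) := Subtype.map_injective _ Function.injective_id
  let r : MvPolynomial ↥(T.erase i) K →+* MvPolynomial T K :=
    (MvPolynomial.rename (Subtype.map id fun _ => Finset.mem_of_mem_erase)).toRingHom
  have hcomp : (π.comp ((aeval fun t : T => y t).toRingHom.codRestrict _ hy.aeval_mem)).comp r =
      (aeval fun t : ↥(T.erase i) => π ⟨y t, hy.mem t⟩).toRingHom := by
    refine MvPolynomial.ringHom_ext (fun c => ?_) fun t => ?_
    · have hc : algebraMap K M c ∈ valRing 𝒪 L := ⟨hy.algebraMap_mem c, L.algebraMap_mem c⟩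
      calc
        _ = π ⟨algebraMap K M c, hc⟩ := congrArg π (Subtype.ext (by simp [r]))
        _ = algebraMap K V c := hπ c hc
        _ = _ := (MvPolynomial.aeval_C _ c).symm
    · calc
        _ = π ⟨y t, hy.mem t⟩ := congrArg π (Subtype.ext (by simp [r, Subtype.map]))
        _ = _ := (MvPolynomial.aeval_X (fun t : ↥(T.erase i) => π ⟨y t, hy.mem t⟩) t).symm
  rw [← hcomp]
  exact apply_mem_etaleClosure_comp (z := MvPolynomial.X ⟨i, hi⟩)
    (ε := (MvPolynomial.killCompl (R := K) hinj).toRingHom)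
    (congrArg AlgHom.toRingHom (MvPolynomial.killCompl_comp_rename hinj))
    (fun p hp => X_dvd_of_killCompl_eq_zero hinj
      (fun t ht => Subtype.ext (notMem_range_map_id_erase.1 ht)) hp) hy.aeval_mem π
    ((congrArg π (Subtype.ext (by simp))).trans hi0) hb hb'

theorem exists_derivation_algebraicClosure {K : Type u} [Field K] [CharZero K] {σ : Type}
    [DecidableEq σ] (i : σ) :
    ∃ D : Derivation K (AlgebraicClosure (FractionRing (MvPolynomial σ K)))
        (AlgebraicClosure (FractionRing (MvPolynomial σ K))),
      ∀ j, D (algebraMap (MvPolynomial σ K) _ (.X j)) = if i = j then 1 else 0 := by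
  let A := MvPolynomial σ K
  let L₀ := FractionRing A
  let M := AlgebraicClosure L₀
  have : Algebra.FormallyEtale A L₀ := .of_isLocalization (nonZeroDivisors A)
  have : Algebra.FormallyEtale L₀ M := .of_isSeparable _ _
  have : Algebra.FormallyEtale A M := .comp A L₀ M
  obtain ⟨D, hD⟩ := exists_derivation_extension (E := M)
    (MvPolynomial.mkDerivation K fun j => if i = j then (1 : M) else 0)
  exact ⟨D, fun j => (hD _).trans (MvPolynomial.mkDerivation_X _ _ _)⟩

theorem exists_valuationSubring_fractionRing {K V : Type*} [Field K] [CommRing V] [IsDomain V]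
    [ValuationRing V] [Algebra K V] {τ : Type*} {x : τ → V} (hx : AlgebraicIndependent K x)
    (a : V) :
    ∃ (W : ValuationSubring (FractionRing (MvPolynomial (Option τ) K))) (π : W →+* V),
      ∀ p : MvPolynomial (Option τ) K, ∃ h : algebraMap _ _ p ∈ W,
        π ⟨algebraMap _ _ p, h⟩ = aeval (fun o : Option τ => o.elim a x) p := by
  let F := FractionRing V
  let A := MvPolynomial (Option τ) K
  let B := PowerSeries F
  let N := FractionRing B
  have hxF : AlgebraicIndependent K fun t => algebraMap V F (x t) :=
    hx.map' (f := IsScalarTower.toAlgHom K V F) (IsFractionRing.injective V F)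
  obtain ⟨g, hg, hgc⟩ := exists_powerSeries_lift hxF (algebraMap V F a)
  have hgN : Function.Injective ((algebraMap B N).comp g) := (IsFractionRing.injective B N).comp hg
  have hloc : IsLocalHom (PowerSeries.constantCoeff (R := F)) :=
    ⟨fun _ h => PowerSeries.isUnit_iff_constantCoeff.2 h⟩
  obtain ⟨W, π, hW⟩ := exists_specialization_of_composite (V := V) (B := B) (F := F)
    (ρ := PowerSeries.constantCoeff)
    (IsFractionRing.lift hgN : FractionRing A →+* N)
  refine ⟨W, π, fun p => hW _ (g p) _ (IsFractionRing.lift_algebraMap hgN p) ?_⟩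
  rw [hgc, ← MvPolynomial.aeval_algebraMap_apply]
  congr 2
  funext o
  cases o <;> rfl

theorem exists_valRing_extension {K M : Type u} {L₀ V : Type*} [Field K] [Field L₀]
    [Field M] [Algebra K L₀] [Algebra K M] [Algebra L₀ M] [IsScalarTower K L₀ M] [CommRing V]
    {W : ValuationSubring L₀} (π₀ : W →+* V) :
    ∃ (𝒪 : ValuationSubring M) (L : IntermediateField K M) (π : valRing 𝒪 L →+* V),
      ∀ w : W, ∃ h : algebraMap L₀ M w ∈ valRing 𝒪 L, π ⟨algebraMap L₀ M w, h⟩ = π₀ w := by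
  obtain ⟨𝒪, h𝒪⟩ := exists_valuationSubring_extension (algebraMap L₀ M) W
  let L : IntermediateField K M := (IsScalarTower.toAlgHom K L₀ M).fieldRange
  let θ : W →+* valRing 𝒪 L := ((algebraMap L₀ M).comp W.subtype).codRestrict (valRing 𝒪 L)
    fun w => mem_valRing.2 ⟨(h𝒪 _).2 w.2, AlgHom.mem_fieldRange.2 ⟨w, rfl⟩⟩
  have hθ : Function.Bijective θ := by
    refine ⟨fun w w' h => Subtype.ext ((algebraMap L₀ M).injective (congrArg Subtype.val h)), ?_⟩
    rintro ⟨_, hm, l, rfl⟩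
    exact ⟨⟨l, (h𝒪 l).1 hm⟩, rfl⟩
  let e : W ≃+* valRing 𝒪 L := .ofBijective θ hθ
  exact ⟨𝒪, L, π₀.comp e.symm.toRingHom, fun w =>
    ⟨(θ w).2, congrArg π₀ (e.symm_apply_apply w)⟩⟩

theorem IsCoordSystem.exists_specialization_eq_zero {K M V : Type u} [Field K] [Field M]
    [Algebra K M] {σ : Type} [DecidableEq σ] {𝒪 : ValuationSubring M} {L : IntermediateField K M}
    {y : σ → M} {D : σ → Derivation K M M} {S T : Finset σ} [CommRing V] [IsDomain V]
    (hy : IsCoordSystem 𝒪 L y D) (π : valRing 𝒪 L →+* V) {f : M} (hf : IsMonomial 𝒪 L T S y f)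
    (hfV : f ∈ valRing 𝒪 L) (hf0 : π ⟨f, hfV⟩ = 0) : ∃ i ∈ S, π ⟨y i, hy.mem i⟩ = 0 := by
  obtain ⟨α, hα, ε, hε, hε1, hfac⟩ := hf
  have hε0 : ε ≠ 0 := by
    rintro rfl
    simp at hε1
  let ε' : valRing 𝒪 L := ⟨ε, hy.coordRing_le hε⟩
  have hunit : IsUnit ε' := .of_mul_eq_one
    ⟨ε⁻¹, hy.coordRing_le (hy.inv_mem hε hε1)⟩ (Subtype.ext (mul_inv_cancel₀ hε0))
  have hfac' : (⟨f, hfV⟩ : valRing 𝒪 L) = ε' * ∏ i ∈ S, ⟨y i, hy.mem i⟩ ^ (α i).toNat := by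
    refine Subtype.ext (hfac.trans ?_)
    rw [Subring.coe_mul, SubmonoidClass.coe_finsetProd, mon]
    congr 1
    refine Finset.prod_congr rfl fun i hi => ?_
    rw [Subring.coe_pow, ← zpow_natCast, Int.toNat_of_nonneg (hα i hi)]
  rw [hfac', map_mul, mul_eq_zero, or_iff_right (hunit.map π).ne_zero, map_prod,
    Finset.prod_eq_zero_iff] at hf0
  obtain ⟨i, hi, hyi⟩ := hf0
  exact ⟨i, hi, eq_zero_of_pow_eq_zero (map_pow π _ _ ▸ hyi)⟩

-- A point with values in a valuation ring, all but one of whose coordinates are algebraically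
-- independent, lifts to algebraically independent coordinates of a valued field.
theorem exists_isCoordSystem_specialization {K V : Type u} [Field K] [CharZero K] [CommRing V]
    [IsDomain V] [ValuationRing V] [Algebra K V] {τ : Type} [DecidableEq τ] {x : τ → V}
    (hx : AlgebraicIndependent K x) (a : V) :
    ∃ (M : Type u) (_ : Field M) (_ : Algebra K M) (_ : IsAlgClosed M) (𝒪 : ValuationSubring M)
      (L : IntermediateField K M) (X : Option τ → M) (D : Option τ → Derivation K M M)
      (π : valRing 𝒪 L →+* V), IsCoordSystem 𝒪 L X D ∧ ∀ (p : MvPolynomial (Option τ) K) h,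
        π ⟨aeval X p, h⟩ = aeval (fun o : Option τ => o.elim a x) p := by
  let A := MvPolynomial (Option τ) K
  let L₀ := FractionRing A
  let M := AlgebraicClosure L₀
  obtain ⟨W, π₀, hπ₀⟩ := exists_valuationSubring_fractionRing hx a
  obtain ⟨𝒪, L, π, hπ⟩ := exists_valRing_extension (K := K) (M := M) π₀
  let X : Option τ → M := fun o => algebraMap A M (.X o)
  have hX : ∀ p : A, aeval X p = algebraMap L₀ M (algebraMap A L₀ p) :=
    AlgHom.congr_fun (MvPolynomial.algHom_ext (f := aeval X)
      (g := IsScalarTower.toAlgHom K A M) fun o => MvPolynomial.aeval_X X o)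
  have hspec : ∀ p : A, ∃ h : aeval X p ∈ valRing 𝒪 L,
      π ⟨aeval X p, h⟩ = aeval (fun o : Option τ => o.elim a x) p := fun p => by
    obtain ⟨hW, hp⟩ := hπ₀ p
    obtain ⟨hM, hpM⟩ := hπ ⟨algebraMap A L₀ p, hW⟩
    rw [hX]
    exact ⟨hM, hpM.trans hp⟩
  choose D hD using exists_derivation_algebraicClosure (K := K) (σ := Option τ)
  refine ⟨M, inferInstance, inferInstance, inferInstance, 𝒪, L, X, D, π,
    ⟨fun c => ?_, fun o => ?_, hD⟩, fun p _ => (hspec p).2⟩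
  · simpa using (hspec (.C c)).1.1
  · simpa using (hspec (.X o)).1

end Specialization

section SmoothSubalgebra

theorem awayLift_injective {E B : Type*} [CommRing E] [CommRing B] {φ : E →+* B} {e : E}
    (he : IsUnit (φ e)) (hker : ∀ y ∈ RingHom.ker φ, e * y = 0) :
    Function.Injective (IsLocalization.Away.lift (S := Localization.Away e) e he) := by
  have hunit := IsLocalization.Away.algebraMap_isUnit (S := Localization.Away e) e
  refine (injective_iff_map_eq_zero _).2 fun b hb => ?_
  obtain ⟨n, h, hn⟩ := IsLocalization.Away.surj e b
  have hφh : φ h = 0 := by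
    rw [← IsLocalization.Away.lift_eq (S := Localization.Away e) e he, ← hn, map_mul, hb, zero_mul]
  have hh : algebraMap E (Localization.Away e) h = 0 := by
    rw [← hunit.mul_right_eq_zero, ← map_mul, hker h hφh, map_zero]
  exact (hunit.pow n).mul_left_eq_zero.1 (by rw [← map_pow, ← hh, ← hn, map_pow])

variable {K V : Type u} [Field K] [CharZero K] [CommRing V] [IsDomain V] [ValuationRing V]
  [Algebra K V]

-- After monomialization, a relation satisfied by the specialized coordinates forces one of the new
-- coordinates to specialize to zero, so that it can be dropped.
theorem exists_etaleClosure_of_not_algebraicIndependent {τ : Type} [Finite τ] {x : τ → V}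
    (hx : AlgebraicIndependent K x) {a : V}
    (ha : ¬AlgebraicIndependent K fun o : Option τ => o.elim a x) :
    ∃ (τ' : Type) (_ : Finite τ') (y : τ' → V), ENat.card τ' ≤ ENat.card τ ∧ ∀ o : Option τ,
      o.elim a x ∈ etaleClosure (aeval y : MvPolynomial τ' K →ₐ[K] V).toRingHom ⊤ := by
  classical
  have := Fintype.ofFinite τ
  obtain ⟨p, hp, hp0⟩ : ∃ p : MvPolynomial (Option τ) K,
      aeval (fun o : Option τ => o.elim a x) p = 0 ∧ p ≠ 0 := by
    by_contra! h
    exact ha ((injective_iff_map_eq_zero _).2 h)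
  obtain ⟨M, _, _, _, 𝒪, L, X, D, π, hX, hπ⟩ := exists_isCoordSystem_specialization hx a
  have hf : aeval X p ∈ coordRing 𝒪 L X Finset.univ := by
    have := aeval_mem_coordRing (𝒪 := 𝒪) (L := L) (x := X) (T := Finset.univ)
      (MvPolynomial.rename (fun o => ⟨o, Finset.mem_univ o⟩) p)
    rwa [MvPolynomial.aeval_rename] at this
  have hf0 : aeval X p ≠ 0 := fun h => hp0 (hX.algebraicIndependent (by simpa using h))
  obtain ⟨y, D', hy, -, hXy, S, -, -, hmon⟩ := hX.isMonomializable hf hf0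
  obtain ⟨i, -, hi⟩ := hy.exists_specialization_eq_zero π hmon (hX.coordRing_le hf)
    ((hπ p _).trans hp)
  have hπC : ∀ c h, π ⟨algebraMap K M c, h⟩ = algebraMap K V c := fun c h => by
    simpa using hπ (.C c) (by simpa using h)
  have hπX : ∀ o, π ⟨X o, hX.mem o⟩ = o.elim a x := fun o => by
    simpa using hπ (.X o) (by simpa using hX.mem o)
  refine ⟨↥(Finset.univ.erase i), inferInstance, fun t => π ⟨y t, hy.mem t⟩, by simp, fun o => ?_⟩
  rw [← hπX o]
  exact hy.specialization_mem_etaleClosure hπC (Finset.mem_univ i) hi (hXy o (Finset.mem_univ o)) _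

theorem exists_algebraicIndependent_insert {τ : Type} [Finite τ] {x : τ → V}
    (hx : AlgebraicIndependent K x) (a : V) :
    ∃ (τ' : Type) (_ : Finite τ') (y : τ' → V), AlgebraicIndependent K y ∧
      (∀ t, x t ∈ etaleClosure (aeval y : MvPolynomial τ' K →ₐ[K] V).toRingHom ⊤) ∧
      a ∈ etaleClosure (aeval y : MvPolynomial τ' K →ₐ[K] V).toRingHom ⊤ := by
  by_cases ha : AlgebraicIndependent K fun o : Option τ => o.elim a x
  · have hmem : ∀ o : Option τ, o.elim a x ∈ etaleClosure (aeval fun o : Option τ => o.elim a x :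
        MvPolynomial (Option τ) K →ₐ[K] V).toRingHom ⊤ := fun o => by
      simpa using apply_mem_etaleClosure (aeval fun o : Option τ => o.elim a x :
        MvPolynomial (Option τ) K →ₐ[K] V).toRingHom ⊤ (.X o)
    exact ⟨Option τ, inferInstance, _, ha, fun t => hmem (some t), hmem none⟩
  · obtain ⟨τ', _, y, hcard, hy⟩ := exists_etaleClosure_of_not_algebraicIndependent hx ha
    exact ⟨τ', inferInstance, y, algebraicIndependent_of_mem_etaleClosure hx
      (fun t => hy (some t)) hcard, fun t => hy (some t), hy none⟩

theorem exists_algebraicIndependent_forall_mem (s : Finset V) :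
    ∃ (τ : Type) (_ : Finite τ) (y : τ → V), AlgebraicIndependent K y ∧
      ∀ a ∈ s, a ∈ etaleClosure (aeval y : MvPolynomial τ K →ₐ[K] V).toRingHom ⊤ := by
  classical
  induction s using Finset.induction_on with
  | empty =>
    exact ⟨PEmpty, inferInstance, PEmpty.elim, algebraicIndependent_empty_type_iff.2
      (FaithfulSMul.algebraMap_injective K V), by simp⟩
  | insert a s _ ih =>
    obtain ⟨τ, _, x, hx, hs⟩ := ih
    obtain ⟨τ', _, y, hy, hxy, hay⟩ := exists_algebraicIndependent_insert hx a
    refine ⟨τ', inferInstance, y, hy, Finset.forall_mem_insert _ _ _ |>.2 ⟨hay, fun b hb => ?_⟩⟩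
    exact etaleClosure_aeval_le (fun _ => Subring.mem_top _) hxy (hs b hb)

theorem exists_smooth_subalgebra (s : Finset V) :
    ∃ A : Subalgebra K V, Algebra.Smooth K A ∧ ∀ a ∈ s, a ∈ A := by
  obtain ⟨τ, _, y, hy, hs⟩ := exists_algebraicIndependent_forall_mem (K := K) s
  obtain ⟨E, _, j, φ, hφ, hsE⟩ := exists_etaleModel_of_finset (fun _ => Subring.mem_top _) s hs
  obtain ⟨e, he, hker⟩ := exists_isUnit_mul_ker_eq_zero hφ.etale (φ := φ) (hφ.comp_eq ▸ hy)
  let P := MvPolynomial τ K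
  let : Algebra P E := j.toAlgebra
  let : Algebra K E := (j.comp (algebraMap K P)).toAlgebra
  have : IsScalarTower K P E := IsScalarTower.of_algebraMap_eq' rfl
  have : Algebra.Etale P E := hφ.etale
  have : Algebra.Smooth K P := { }
  have : Algebra.Smooth K E := .comp K P E
  let E' := Localization.Away e
  have : Algebra.Smooth E E' := .of_isLocalization_Away e
  have : Algebra.Smooth K E' := .comp K E E'
  let φK : E →ₐ[K] V := { φ with
    commutes' := fun c => (RingHom.congr_fun hφ.comp_eq _).trans ((aeval y).commutes c) }
  let ψ : E' →ₐ[K] V := IsLocalization.Away.liftAlgHom e (f := φK) he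
  have hψ : Function.Injective ψ := awayLift_injective he hker
  refine ⟨ψ.range, .of_equiv (AlgEquiv.ofInjective ψ hψ), fun a ha => ?_⟩
  obtain ⟨b, rfl⟩ := hsE a ha
  exact ⟨algebraMap E E' b, IsLocalization.Away.lift_eq e he b⟩

end SmoothSubalgebra

end LocalUniformization

/-- **Zariski's Uniformization Theorem.** A valuation ring `V` containing a field `K` of
characteristic zero is a filtered union of its smooth `K`-subalgebras. -/
theorem zariski_uniformization (K V : Type u) [Field K] [CharZero K]
    [CommRing V] [IsDomain V] [ValuationRing V] [Algebra K V] :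
    Subalgebra.IsFilteredUnion (fun A : Subalgebra K V => Algebra.Smooth K A) := by
  classical
  have hfg : ∀ A : Subalgebra K V, Algebra.Smooth K A → A.FG := fun A _ =>
    A.fg_iff_finiteType.2 inferInstance
  refine ⟨?_, fun A hA B hB => ?_, fun v => ?_⟩
  · obtain ⟨A, hA, -⟩ := LocalUniformization.exists_smooth_subalgebra (K := K) (∅ : Finset V)
    exact ⟨A, hA⟩
  · obtain ⟨s, rfl⟩ := hfg A hA
    obtain ⟨t, rfl⟩ := hfg B hB
    obtain ⟨C, hC, hst⟩ := LocalUniformization.exists_smooth_subalgebra (K := K) (s ∪ t)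
    exact ⟨C, hC, Algebra.adjoin_le fun a ha => hst a (Finset.mem_union_left _ ha),
      Algebra.adjoin_le fun a ha => hst a (Finset.mem_union_right _ ha)⟩
  · obtain ⟨A, hA, hv⟩ := LocalUniformization.exists_smooth_subalgebra (K := K) {v}
    exact ⟨A, hA, hv v (Finset.mem_singleton_self v)⟩
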